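/- Let 𝔤 be a finite-dimensional complex simple Lie algebra of type E7 and let (e,h,f) be an sl2-triple in 𝔤 such that e is a distinguished nilpotent element with dim 𝔤^e = 9 (the subregular orbit of E7). Then the centre 𝔷(𝔤^e) of 𝔤^e has dimension 6, the eigenvalues of the restriction of ad h to 𝔷(𝔤^e) are 2, 10, 14, 18, 22, 26, and e satisfies property (P). -/

import Mathlib

open scoped ComplexOrder

/-- The centralizer `𝔤^e = {x ∈ 𝔤 : ⁅x, e⁆ = 0}` of an element `e`, as a Lie subalgebra. -/
def centralizer (L : Type*) [LieRing L] [LieAlgebra ℂ L] (e : L) : LieSubalgebra ℂ L where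
  carrier := {x : L | ⁅x, e⁆ = 0}
  add_mem' := fun {a b} ha hb => by
    simp only [Set.mem_setOf_eq] at *
    rw [add_lie, ha, hb, add_zero]
  zero_mem' := by simp
  smul_mem' := fun c a ha => by
    simp only [Set.mem_setOf_eq] at *
    rw [smul_lie, ha, smul_zero]
  lie_mem' := fun {a b} ha hb => by
    simp only [Set.mem_setOf_eq] at *
    simp [lie_lie, ha, hb]

/-- Membership in the centre `𝔷(𝔤^e)` of the centralizer of `e`:
`v` centralizes `e` and commutes with every element of `𝔤^e`. -/
def InCenterOfCentralizer (L : Type*) [LieRing L] [LieAlgebra ℂ L] (e v : L) : Prop :=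
  ⁅v, e⁆ = 0 ∧ ∀ y : L, ⁅y, e⁆ = 0 → ⁅v, y⁆ = 0

/-- The centre `𝔷(𝔤^e)` of the centralizer of `e`, as a subspace of `L`. -/
def zCenter (L : Type*) [LieRing L] [LieAlgebra ℂ L] (e : L) : Submodule ℂ L where
  carrier := {v : L | ⁅v, e⁆ = 0 ∧ ∀ y : L, ⁅y, e⁆ = 0 → ⁅v, y⁆ = 0}
  add_mem' := fun {a b} ha hb => ⟨by rw [add_lie, ha.1, hb.1, add_zero],
    fun y hy => by rw [add_lie, ha.2 y hy, hb.2 y hy, add_zero]⟩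
  zero_mem' := ⟨zero_lie e, fun y _ => zero_lie y⟩
  smul_mem' := fun c a ha => ⟨by rw [smul_lie, ha.1, smul_zero],
    fun y hy => by rw [smul_lie, ha.2 y hy, smul_zero]⟩

/-- Property (P) for an `sl₂`-triple `(e, h, f)`: for every nonzero `v ∈ 𝔷(𝔤^e)`, the
eigenspace `𝔷_max` of the restriction of `ad h` to `𝔷(𝔤^e)` for its largest eigenvalue is
contained in `[[f, 𝔤^e], v] = {⁅⁅f, x⁆, v⁆ : x ∈ 𝔤^e}`. -/
def PropertyP (L : Type*) [LieRing L] [LieAlgebra ℂ L] (e h f : L) : Prop :=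
  ∀ m : ℂ,
    (∃ z : L, z ≠ 0 ∧ InCenterOfCentralizer L e z ∧ ⁅h, z⁆ = m • z) →
    (∀ m' : ℂ, (∃ z : L, z ≠ 0 ∧ InCenterOfCentralizer L e z ∧ ⁅h, z⁆ = m' • z) → m' ≤ m) →
    ∀ v : L, InCenterOfCentralizer L e v → v ≠ 0 →
      ∀ z : L, InCenterOfCentralizer L e z → ⁅h, z⁆ = m • z →
        ∃ x : L, ⁅x, e⁆ = 0 ∧ ⁅⁅f, x⁆, v⁆ = z

/-- The stabilizer `{x ∈ 𝔮 : ξ(⁅x, y⁆) = 0 for all y ∈ 𝔮}` of a linear functional `ξ`. -/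
def coadStab (Q : Type*) [LieRing Q] [LieAlgebra ℂ Q] (ξ : Module.Dual ℂ Q) : Submodule ℂ Q where
  carrier := {x : Q | ∀ y : Q, ξ ⁅x, y⁆ = 0}
  add_mem' := fun {a b} ha hb y => by rw [add_lie, map_add, ha y, hb y, add_zero]
  zero_mem' := fun y => by rw [zero_lie, map_zero]
  smul_mem' := fun c a ha y => by rw [smul_lie, map_smul, ha y, smul_zero]

/-- The index of a complex Lie algebra:
`ind 𝔮 = min_{ξ ∈ 𝔮*} dim {x ∈ 𝔮 : ξ(⁅x, y⁆) = 0 for all y ∈ 𝔮}`. -/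
noncomputable def lieIndex (Q : Type*) [LieRing Q] [LieAlgebra ℂ Q] : ℕ :=
  ⨅ ξ : Module.Dual ℂ Q, Module.finrank ℂ ↥(coadStab Q ξ)

/-- A nilpotent element `e` is distinguished if the only `x ∈ 𝔤^e` such that `ad x` is a
semisimple endomorphism of `𝔤` is `x = 0`. -/
def IsDistinguished (L : Type*) [LieRing L] [LieAlgebra ℂ L] (e : L) : Prop :=
  ∀ x : L, ⁅x, e⁆ = 0 → (LieAlgebra.ad ℂ L x).IsSemisimple → x = 0

/-!
By Serre's theorem `𝔤` is the Lie algebra that Frenkel and Kac build on the root lattice of `E₇`,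
whose bracket of root vectors is given by a sign cocycle. The semisimple part `s` of `h` can be
conjugated into the torus, because near a regular element every element is conjugate to one
commuting with it, and then made dominant by simple reflections. The theory of `sl₂` bounds the
labels of `s` by `2`. As `𝔤^e` has the dimension of `𝔤(0) ⊕ 𝔤(1)`, the assumption `dim 𝔤^e = rank +
2` leaves exactly one label zero, say at the node `i`, and `e` is a combination of root vectors for
`αⱼ` and `αᵢ + αⱼ`. An element of the torus commutes with `e` unless `i` has three neighbours, so
`i` is the branch node, and the group generated by the torus and the `SL₂` of `αᵢ` takes `e` to one
explicit element. Its centralizer has a basis of weights `2, 6, 10, 10, 14, 16, 18, 22, 26`, from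
which the centre is read off; in particular no weight vanishes, so that `s = h`.

For property (P), let `k` be the lowest weight occurring in `v`. There is `u` of weight `26 - k`
with `⁅e, u⁆` in `𝔤^e` such that `⁅u, v⁆` is a nonzero vector of weight `26`, and `⁅f, ⁅e, u⁆⁆` is a
nonzero multiple of `u` up to an element of `𝔤^e`, which commutes with `v`.
-/

/-! ### Eigenbases and gradings -/

section Eigenbasis

variable {K V κ : Type*} [Field K] [AddCommGroup V] [Module K V] {b : Module.Basis κ K V}
  {T : V →ₗ[K] V} {w : κ → K}

lemma repr_map_of_eigenbasis (hT : ∀ i, T (b i) = w i • b i) (x : V) (i : κ) :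
    b.repr (T x) i = w i * b.repr x i := by
  have : (b.coord i).comp T = w i • b.coord i := by
    refine b.ext fun j => ?_
    rw [LinearMap.comp_apply, hT, map_smul]
    rcases eq_or_ne j i with rfl | h <;> simp [*]
  exact LinearMap.congr_fun this x

lemma eigenvalue_eq_of_repr_ne_zero (hT : ∀ i, T (b i) = w i • b i) {x : V} {μ : K}
    (hx : T x = μ • x) {i : κ} (hi : b.repr x i ≠ 0) : w i = μ := by
  have := repr_map_of_eigenbasis hT x i
  rw [hx, map_smul, Finsupp.smul_apply, smul_eq_mul] at this
  exact (mul_right_cancel₀ hi this).symm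

lemma isSemisimple_of_eigenbasis [Finite κ] (hT : ∀ i, T (b i) = w i • b i) :
    Module.End.IsSemisimple T := by
  classical
  have := Fintype.ofFinite κ
  refine Module.End.isSemisimple_of_squarefree_aeval_eq_zero
    (p := ∏ μ ∈ Finset.univ.image w, (Polynomial.X - Polynomial.C μ))
    (Polynomial.separable_prod_X_sub_C_iff'.mpr fun x _ y _ h => h).squarefree ?_
  refine b.ext fun i => ?_
  rw [← Finset.prod_erase_mul _ _ (Finset.mem_image_of_mem w (Finset.mem_univ i)), map_mul,
    Module.End.mul_apply]
  simp [hT]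

variable (b w) in
open Classical in
/-- The projection to the span of the basis vectors of weight `μ`. -/
noncomputable def weightPart (μ : K) : V →ₗ[K] V :=
  b.constr K fun i => if w i = μ then b i else 0

lemma repr_weightPart_of_eq {i : κ} {μ : K} (h : w i = μ) (x : V) :
    b.repr (weightPart b w μ x) i = b.repr x i := by
  have : (b.coord i).comp (weightPart b w μ) = b.coord i := by
    refine b.ext fun j => ?_
    rcases eq_or_ne j i with rfl | hj
    · simp [weightPart, h]
    · by_cases hj' : w j = μ <;> simp [weightPart, hj, hj']
  exact LinearMap.congr_fun this x

lemma weightPart_of_eq (hT : ∀ i, T (b i) = w i • b i) {x : V} {μ : K} (hx : T x = μ • x) :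
    weightPart b w μ x = x := by
  rw [← b.linearCombination_repr x, Finsupp.linearCombination_apply, Finsupp.sum, map_sum]
  refine Finset.sum_congr rfl fun i hi => ?_
  have := eigenvalue_eq_of_repr_ne_zero hT hx (Finsupp.mem_support_iff.mp hi)
  simp [weightPart, this]

lemma weightPart_of_ne (hT : ∀ i, T (b i) = w i • b i) {x : V} {μ ν : K} (hx : T x = μ • x)
    (h : μ ≠ ν) : weightPart b w ν x = 0 := by
  rw [← b.linearCombination_repr x, Finsupp.linearCombination_apply, Finsupp.sum, map_sum]
  refine Finset.sum_eq_zero fun i hi => ?_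
  have := eigenvalue_eq_of_repr_ne_zero hT hx (Finsupp.mem_support_iff.mp hi)
  simp [weightPart, this, h]

lemma map_weightPart (hT : ∀ i, T (b i) = w i • b i) (μ : K) (x : V) :
    T (weightPart b w μ x) = μ • weightPart b w μ x := by
  have : T.comp (weightPart b w μ) = μ • weightPart b w μ := by
    refine b.ext fun i => ?_
    by_cases h : w i = μ <;> simp [weightPart, h, hT]
  exact LinearMap.congr_fun this x

lemma finrank_span_image_basis (S : Finset κ) :
    Module.finrank K (Submodule.span K (b '' S)) = S.card := by
  classical
  rw [← Finset.coe_image, finrank_span_finset_eq_card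
    ((LinearIndepOn.id_image (b.linearIndependent.linearIndepOn (s := (S : Set κ)))).mono
      (by simp)),
    Finset.card_image_of_injective _ b.injective]

end Eigenbasis

section Grading

open LieAlgebra

variable {K V κ : Type*} [Field K] [LieRing V] [LieAlgebra K V] {b : Module.Basis κ K V}
  {w : κ → K} {s e : V} {μ ν : K} {x y : V}

lemma lie_lie_eq_add_smul (hx : ⁅s, x⁆ = μ • x) (hy : ⁅s, y⁆ = ν • y) :
    ⁅s, ⁅x, y⁆⁆ = (μ + ν) • ⁅x, y⁆ := by
  rw [leibniz_lie, hx, hy, smul_lie, lie_smul, ← add_smul]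

lemma lie_weightPart (hs : ∀ i, ⁅s, b i⁆ = w i • b i) (he : ⁅s, e⁆ = ν • e) (μ : K) (x : V) :
    ⁅e, weightPart b w μ x⁆ = weightPart b w (ν + μ) ⁅e, x⁆ := by
  have hs' : ∀ i, ad K V s (b i) = w i • b i := hs
  have : (ad K V e).comp (weightPart b w μ) = (weightPart b w (ν + μ)).comp (ad K V e) := by
    refine b.ext fun i => ?_
    have hi : ad K V s ⁅e, b i⁆ = (ν + w i) • ⁅e, b i⁆ := lie_lie_eq_add_smul he (hs i)
    rw [LinearMap.comp_apply, LinearMap.comp_apply, ad_apply, ad_apply]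
    by_cases h : w i = μ
    · subst h
      rw [weightPart_of_eq hs' (hs' i), weightPart_of_eq hs' hi]
    · rw [weightPart_of_ne hs' (hs' i) h, weightPart_of_ne hs' hi (by simpa using h), lie_zero]
  exact LinearMap.congr_fun this x

lemma killingForm_eq_zero_of_add_ne_zero (hx : ⁅s, x⁆ = μ • x) (hy : ⁅s, y⁆ = ν • y)
    (h : μ + ν ≠ 0) : killingForm K V x y = 0 := by
  have h' := LieModule.traceForm_apply_lie_apply K V V x s y
  rw [hy, ← lie_skew, hx] at h'
  simp only [map_neg, LinearMap.neg_apply, map_smul, LinearMap.smul_apply, smul_eq_mul] at h'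
  refine (mul_eq_zero.mp (?_ : (μ + ν) * _ = 0)).resolve_left h
  linear_combination -h'

variable {a : κ → ℤ}

variable (b a) in
/-- The sum of the weight spaces of weight at least `k`. -/
def weightsFrom (k : ℤ) : Submodule K V := Submodule.span K (b '' {i | k ≤ a i})

lemma mem_weightsFrom {k : ℤ} : x ∈ weightsFrom b a k ↔ ∀ i, b.repr x i ≠ 0 → k ≤ a i :=
  b.mem_span_image.trans ⟨fun h _ hi => h (Finsupp.mem_support_iff.mpr hi),
    fun h i hi => h i (Finsupp.mem_support_iff.mp hi)⟩

lemma finrank_weightsFrom [Fintype κ] (k : ℤ) :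
    Module.finrank K (weightsFrom b a k) = (Finset.univ.filter fun i => k ≤ a i).card := by
  rw [← finrank_span_image_basis (b := b), weightsFrom, Finset.coe_filter_univ]

lemma ker_ad_le_weightsFrom [CharZero K] (hs : ∀ i, ⁅s, b i⁆ = (a i : K) • b i)
    (he : ⁅s, e⁆ = ν • e)
    (h : ∀ (x : V) (μ : K), x ≠ 0 → ⁅e, x⁆ = 0 → ⁅s, x⁆ = μ • x → ∃ n : ℕ, μ = n) :
    LinearMap.ker (ad K V e) ≤ weightsFrom b a 0 := by
  intro x hx
  refine mem_weightsFrom.mpr fun i hi => ?_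
  let y := weightPart b (fun i => (a i : K)) (a i) x
  have hrepr : b.repr y i = b.repr x i := repr_weightPart_of_eq rfl x
  have hy : y ≠ 0 := fun hy => hi (by rw [← hrepr, hy, map_zero, Finsupp.zero_apply])
  have hey : ⁅e, y⁆ = 0 := by
    rw [lie_weightPart hs he, show ⁅e, x⁆ = 0 from hx, map_zero]
  obtain ⟨n, hn⟩ := h y _ hy hey (map_weightPart (T := ad K V s) hs _ x)
  have : a i = n := by exact_mod_cast hn
  omega

variable [FiniteDimensional K V]

lemma range_ad_eq_orthogonal [IsKilling K V] (e : V) :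
    LinearMap.range (ad K V e) = (killingForm K V).orthogonal (LinearMap.ker (ad K V e)) := by
  have hle : LinearMap.range (ad K V e) ≤
      (killingForm K V).orthogonal (LinearMap.ker (ad K V e)) := by
    rintro - ⟨y, rfl⟩ z (hz : ⁅e, z⁆ = 0)
    change LieModule.traceForm K V V z ⁅e, y⁆ = 0
    rw [← LieModule.traceForm_apply_lie_apply, ← lie_skew, hz, neg_zero, map_zero,
      LinearMap.zero_apply]
  refine Submodule.eq_of_le_of_finrank_eq hle ?_
  rw [LinearMap.BilinForm.finrank_orthogonal (IsKilling.killingForm_nondegenerate K V)]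
  have := (ad K V e).finrank_range_add_finrank_ker
  omega

variable [CharZero K]

lemma mem_range_ad_of_pos [IsKilling K V] [Finite κ] (hs : ∀ i, ⁅s, b i⁆ = (a i : K) • b i)
    (hker : LinearMap.ker (ad K V e) ≤ weightsFrom b a 0) {i : κ} (hi : 0 < a i) :
    b i ∈ LinearMap.range (ad K V e) := by
  have := Fintype.ofFinite κ
  rw [range_ad_eq_orthogonal]
  intro z hz
  change killingForm K V z (b i) = 0
  rw [← b.sum_repr z, map_sum, LinearMap.sum_apply]
  refine Finset.sum_eq_zero fun j _ => ?_
  by_cases hj : b.repr z j = 0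
  · simp [hj]
  have hij : (a j + a i : K) ≠ 0 := by
    have := mem_weightsFrom.mp (hker hz) j hj
    exact_mod_cast (by omega : a j + a i ≠ 0)
  rw [map_smul, LinearMap.smul_apply, killingForm_eq_zero_of_add_ne_zero (hs j) (hs i) hij,
    smul_zero]

lemma map_ad_weightsFrom [IsKilling K V] [Finite κ]
    (hs : ∀ i, ⁅s, b i⁆ = (a i : K) • b i) (he : ⁅s, e⁆ = (2 : K) • e)
    (hker : LinearMap.ker (ad K V e) ≤ weightsFrom b a 0) :
    (weightsFrom b a 0).map (ad K V e) = weightsFrom b a 2 := by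
  refine le_antisymm ((Submodule.map_span_le _ _ _).mpr ?_) (Submodule.span_le.mpr ?_)
  · rintro - ⟨i, hi : 0 ≤ a i, rfl⟩
    refine mem_weightsFrom.mpr fun j hj => ?_
    have : (a j : K) = 2 + a i :=
      eigenvalue_eq_of_repr_ne_zero (T := ad K V s) hs (lie_lie_eq_add_smul he (hs i)) hj
    have : a j = 2 + a i := by exact_mod_cast this
    omega
  · rintro - ⟨i, hi : 2 ≤ a i, rfl⟩
    obtain ⟨x, hx⟩ := mem_range_ad_of_pos hs hker (i := i) (by omega)
    refine ⟨weightPart b (fun i => (a i : K)) (a i - 2) x, mem_weightsFrom.mpr fun j hj => ?_, ?_⟩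
    · have : (a j : K) = a i - 2 :=
        eigenvalue_eq_of_repr_ne_zero (T := ad K V s) hs (map_weightPart (T := ad K V s) hs _ x) hj
      have : a j = a i - 2 := by exact_mod_cast this
      omega
    · rw [ad_apply, lie_weightPart hs he, ← ad_apply K, hx, add_sub_cancel,
        weightPart_of_eq (T := ad K V s) hs (hs i)]

/-- The operator `ad e` has kernel in the nonnegative part of the grading and maps that part onto
the part of weight at least `2`. -/
lemma finrank_ker_ad_eq_card [IsKilling K V] [Fintype κ]
    (hs : ∀ i, ⁅s, b i⁆ = (a i : K) • b i) (he : ⁅s, e⁆ = (2 : K) • e)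
    (hker : LinearMap.ker (ad K V e) ≤ weightsFrom b a 0) :
    Module.finrank K (LinearMap.ker (ad K V e)) =
      (Finset.univ.filter fun i => a i = 0 ∨ a i = 1).card := by
  classical
  have hrank := LinearMap.finrank_range_add_finrank_ker ((ad K V e).domRestrict (weightsFrom b a 0))
  rw [LinearMap.range_domRestrict, map_ad_weightsFrom hs he hker, LinearMap.ker_domRestrict,
    (Submodule.comapSubtypeEquivOfLe hker).finrank_eq, finrank_weightsFrom,
    finrank_weightsFrom] at hrank
  have hcard : (Finset.univ.filter fun i => 0 ≤ a i).card =
      (Finset.univ.filter fun i => 2 ≤ a i).card +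
        (Finset.univ.filter fun i => a i = 0 ∨ a i = 1).card := by
    rw [← Finset.card_union_of_disjoint (Finset.disjoint_filter.mpr fun i _ => by omega),
      ← Finset.filter_or]
    exact congrArg _ (Finset.filter_congr fun i _ => by omega)
  omega

end Grading

/-! ### Conjugation into a toral subalgebra -/

section Openness

open NormedSpace Topology LieAlgebra

variable {V : Type*} [NormedAddCommGroup V] [NormedSpace ℂ V] [CompleteSpace V]

lemma eventually_exists_exp_apply (A : V →L[ℂ] V →L[ℂ] V) (K : Submodule ℂ V) [CompleteSpace K]
    {x₀ : V} (hx₀ : x₀ ∈ K) (h : K ⊔ (A.flip x₀).range = ⊤) :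
    ∀ᶠ y in 𝓝 x₀, ∃ g, ∃ k ∈ K, exp (A g) k = y := by
  have h₁ : HasStrictFDerivAt (fun p : V × K => exp (A p.1))
      ((1 : (V →L[ℂ] V) →L[ℂ] (V →L[ℂ] V)).comp (A.comp (ContinuousLinearMap.fst ℂ V K)))
      (0, ⟨x₀, hx₀⟩) := by
    refine HasStrictFDerivAt.comp (g := exp) (f := fun p : V × K => A p.1) _ ?_
      (A.comp (ContinuousLinearMap.fst ℂ V K)).hasStrictFDerivAt
    simpa using hasStrictFDerivAt_exp_zero (𝕂 := ℂ) (𝔸 := V →L[ℂ] V)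
  have h₂ := h₁.clm_apply (K.subtypeL.comp (ContinuousLinearMap.snd ℂ V K)).hasStrictFDerivAt
  have h₃ := h₂.map_nhds_eq_of_surj (LinearMap.range_eq_top.mpr fun y => by
    obtain ⟨k, hk, -, ⟨g, rfl⟩, rfl⟩ := Submodule.mem_sup.mp (h ▸ Submodule.mem_top (x := y))
    exact ⟨(g, ⟨k, hk⟩), by simp⟩)
  have h₄ : (fun p : V × K => exp (A p.1) ((K.subtypeL.comp (ContinuousLinearMap.snd ℂ V K)) p))
      (0, ⟨x₀, hx₀⟩) = x₀ := by simp
  rw [← h₄, ← h₃]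
  exact Filter.eventually_map.mpr (Filter.Eventually.of_forall fun p => ⟨p.1, p.2, p.2.2, rfl⟩)

lemma exp_neg_mul_exp (M : V →L[ℂ] V) : exp (-M) * exp M = 1 := by
  let _ : NormedAlgebra ℚ (V →L[ℂ] V) := NormedAlgebra.restrictScalars ℚ ℂ _
  rw [← exp_add_of_commute ((Commute.refl M).neg_left), neg_add_cancel, exp_zero]

lemma exp_mul_exp_neg (M : V →L[ℂ] V) : exp M * exp (-M) = 1 := by
  simpa using exp_neg_mul_exp (-M)

lemma exp_apply_bilinear (B : V →L[ℂ] V →L[ℂ] V) (M : V →L[ℂ] V)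
    (hM : ∀ x y, M (B x y) = B (M x) y + B x (M y)) (x y : V) :
    exp M (B x y) = B (exp M x) (exp M y) := by
  have hd (N : V →L[ℂ] V) (v : V) (t : ℂ) :
      HasDerivAt (fun u : ℂ => exp (u • N) v) (N (exp (t • N) v)) t :=
    (hasDerivAt_exp_smul_const' N t).clm_apply (hasDerivAt_const t v) |>.congr_deriv (by simp)
  let G : ℂ → V := fun t => exp (t • -M) (B (exp (t • M) x) (exp (t • M) y))
  have hG (t : ℂ) : HasDerivAt G 0 t := by
    have h₁ : HasDerivAt (fun u : ℂ => B (exp (u • M) x) (exp (u • M) y))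
        (B (M (exp (t • M) x)) (exp (t • M) y) + B (exp (t • M) x) (M (exp (t • M) y))) t :=
      ((B.hasFDerivAt.comp_hasDerivAt t (hd M x t)).clm_apply (hd M y t))
    refine ((hasDerivAt_exp_smul_const (-M) t).clm_apply h₁).congr_deriv ?_
    rw [← hM, mul_apply_eq_comp, neg_apply, map_neg,
      neg_add_cancel]
  have hconst := is_const_of_deriv_eq_zero (fun t => (hG t).differentiableAt)
    (fun t => (hG t).deriv) 1 0
  have h₀ : G 0 = B x y := by simp [G]
  have h₁ : exp M (G 1) = B (exp M x) (exp M y) := by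
    change exp M (exp ((1 : ℂ) • -M) _) = _
    rw [one_smul, one_smul, ← mul_apply_eq_comp, exp_mul_exp_neg]
    rfl
  rw [← h₁, hconst, h₀]

lemma hasSum_exp_apply (M : V →L[ℂ] V) (v : V) :
    HasSum (fun n : ℕ => ((n.factorial : ℂ)⁻¹) • (M ^ n) v) (exp M v) := by
  have h := exp_series_hasSum_exp' (𝕂 := ℂ) M
  simpa using h.mapL (ContinuousLinearMap.apply ℂ V v)

lemma exp_apply_of_eigenvector (M : V →L[ℂ] V) {v : V} {μ : ℂ} (h : M v = μ • v) :
    exp M v = Complex.exp μ • v := by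
  have hpow (n : ℕ) : (M ^ n) v = μ ^ n • v := by
    induction n with
    | zero => simp
    | succ n ih => rw [pow_succ', mul_apply_eq_comp, ih, map_smul, h, smul_smul, pow_succ]
  refine (hasSum_exp_apply M v).unique ?_
  have h₁ := (exp_series_hasSum_exp' (𝕂 := ℂ) μ).smul_const v
  simp_rw [hpow]
  rw [Complex.exp_eq_exp_ℂ]
  simpa [smul_smul] using h₁

lemma exp_apply_of_cube_eq_zero (M : V →L[ℂ] V) {v : V} (h : M (M (M v)) = 0) :
    exp M v = v + M v + (2 : ℂ)⁻¹ • M (M v) := by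
  have hpow (n : ℕ) (hn : n ∉ Finset.range 3) : ((n.factorial : ℂ)⁻¹) • (M ^ n) v = 0 := by
    obtain ⟨m, rfl⟩ := Nat.exists_eq_add_of_le (not_lt.mp fun h => hn (Finset.mem_range.mpr h))
    have : (M ^ 3) v = 0 := h
    rw [add_comm 3 m, pow_add, mul_apply_eq_comp, this, map_zero, smul_zero]
  refine (hasSum_exp_apply M v).unique ?_
  have := hasSum_sum_of_ne_finset_zero (L := .unconditional ℕ) hpow
  simpa [Finset.sum_range_succ, pow_succ, Nat.factorial] using this

variable {L : Type*} [LieRing L] [LieAlgebra ℂ L]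

variable (L) in
lemma exists_continuous_bracket [FiniteDimensional ℂ L] :
    ∃ (b : L ≃ₗ[ℂ] (Fin (Module.finrank ℂ L) → ℂ))
    (B : (Fin (Module.finrank ℂ L) → ℂ) →L[ℂ] (Fin (Module.finrank ℂ L) → ℂ) →L[ℂ]
      (Fin (Module.finrank ℂ L) → ℂ)), ∀ x y, B x y = b ⁅b.symm x, b.symm y⁆ := by
  let b := (Module.finBasis ℂ L).equivFun
  let V := Fin (Module.finrank ℂ L) → ℂ
  let B₀ : V →ₗ[ℂ] V →ₗ[ℂ] V := LinearMap.mk₂ ℂ (fun x y => b ⁅b.symm x, b.symm y⁆)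
    (by simp) (by simp) (by simp) (by simp)
  exact ⟨b, LinearMap.toContinuousLinearMap (LinearMap.toContinuousLinearMap.toLinearMap ∘ₗ B₀),
    fun _ _ => rfl⟩

lemma exists_exp_lieEquiv {b : L ≃ₗ[ℂ] V} {B : V →L[ℂ] V →L[ℂ] V}
    (hB : ∀ x y, B x y = b ⁅b.symm x, b.symm y⁆) (g : V) :
    ∃ σ : L ≃ₗ⁅ℂ⁆ L, ∀ x, σ x = b.symm (exp (B g) (b x)) := by
  have hder (g x y : V) : B g (B x y) = B (B g x) y + B x (B g y) := by
    simp only [hB, b.symm_apply_apply]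
    rw [leibniz_lie, map_add]
  exact ⟨{ toFun x := b.symm (exp (B g) (b x))
           map_add' x y := by simp
           map_smul' c x := by simp
           map_lie' := fun {x y} => by
             have := exp_apply_bilinear B (B g) (hder g) (b x) (b y)
             rw [hB, hB, b.symm_apply_apply, b.symm_apply_apply] at this
             rw [this, b.symm_apply_apply]
           invFun x := b.symm (exp (-B g) (b x))
           left_inv x := by
             beta_reduce
             rw [b.apply_symm_apply, ← mul_apply_eq_comp, exp_neg_mul_exp,
               one_apply_eq_self, b.symm_apply_apply]
           right_inv x := by
             beta_reduce
             rw [b.apply_symm_apply, ← mul_apply_eq_comp, exp_mul_exp_neg,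
               one_apply_eq_self, b.symm_apply_apply] }, fun _ => rfl⟩

lemma exists_lieEquiv_exp [FiniteDimensional ℂ L] (g : L) : ∃ σ : L ≃ₗ⁅ℂ⁆ L,
    (∀ (y : L) (μ : ℂ), ⁅g, y⁆ = μ • y → σ y = Complex.exp μ • y) ∧
    ∀ y : L, ⁅g, ⁅g, ⁅g, y⁆⁆⁆ = 0 → σ y = y + ⁅g, y⁆ + (2 : ℂ)⁻¹ • ⁅g, ⁅g, y⁆⁆ := by
  obtain ⟨b, B, hB⟩ := exists_continuous_bracket L
  obtain ⟨σ, hσ⟩ := exists_exp_lieEquiv hB (b g)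
  have hB' (y : L) : B (b g) (b y) = b ⁅g, y⁆ := by simp [hB]
  refine ⟨σ, fun y μ h => ?_, fun y h => ?_⟩
  · rw [hσ, exp_apply_of_eigenvector _ (μ := μ) (by rw [hB', h, map_smul]), map_smul,
      b.symm_apply_apply]
  · rw [hσ, exp_apply_of_cube_eq_zero _ (by rw [hB', hB', hB', h, map_zero]), hB', hB']
    simp

lemma eventually_exists_lieEquiv [FiniteDimensional ℂ L] (K : Submodule ℂ L) {x₀ : L} (hx₀ : x₀ ∈ K)
    (h : K ⊔ (ad ℂ L x₀).range = ⊤) (d : L) :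
    ∀ᶠ t in 𝓝 (0 : ℂ), ∃ σ : L ≃ₗ⁅ℂ⁆ L, ∃ k ∈ K, σ k = x₀ + t • d := by
  obtain ⟨b, B, hB⟩ := exists_continuous_bracket L
  have hopen := eventually_exists_exp_apply B (K.map b.toLinearMap) (x₀ := b x₀)
    ⟨x₀, hx₀, rfl⟩ (by
      refine eq_top_iff.mpr fun y _ => ?_
      obtain ⟨k, hk, -, ⟨g, rfl⟩, hy⟩ :=
        Submodule.mem_sup.mp (h ▸ Submodule.mem_top (x := b.symm y))
      refine Submodule.mem_sup.mpr ⟨b k, ⟨k, hk, rfl⟩, _, ⟨-b g, rfl⟩, ?_⟩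
      rw [← b.apply_symm_apply y, ← hy]
      simp [hB, ← map_neg])
  have hlim : Filter.Tendsto (fun t : ℂ => b x₀ + t • b d) (𝓝 0) (𝓝 (b x₀)) := by
    have : Continuous (fun t : ℂ => b x₀ + t • b d) := by fun_prop
    simpa using this.tendsto 0
  filter_upwards [hlim.eventually hopen] with t ht
  obtain ⟨g, _, ⟨k, hk, rfl⟩, hgk⟩ := ht
  obtain ⟨σ, hσ⟩ := exists_exp_lieEquiv hB g
  refine ⟨σ, k, hk, ?_⟩
  rw [hσ, b.symm_apply_eq, map_add, map_smul]
  exact hgk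

end Openness

section Regular

open LieAlgebra LieSubalgebra Module Topology

attribute [local instance] LieRing.ofAssociativeRing

variable {L : Type*} [LieRing L] [LieAlgebra ℂ L]

lemma lieEquiv_mem_engel (σ : L ≃ₗ⁅ℂ⁆ L) {x z : L} (h : z ∈ engel ℂ x) :
    σ z ∈ engel ℂ (σ x) := by
  rw [mem_engel_iff] at h ⊢
  obtain ⟨n, hn⟩ := h
  have key (n : ℕ) (z : L) : (ad ℂ L (σ x) ^ n) (σ z) = σ ((ad ℂ L x ^ n) z) := by
    induction n with
    | zero => rfl
    | succ n ih =>
      rw [pow_succ', pow_succ', Module.End.mul_apply, Module.End.mul_apply, ih, ad_apply,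
        ad_apply, σ.map_lie]
  exact ⟨n, by rw [key, hn, map_zero]⟩

lemma lieEquiv_mem_engel_iff (σ : L ≃ₗ⁅ℂ⁆ L) {x z : L} :
    σ z ∈ engel ℂ (σ x) ↔ z ∈ engel ℂ x :=
  ⟨fun h => by simpa using lieEquiv_mem_engel σ.symm h, lieEquiv_mem_engel σ⟩

lemma engel_eq_ker_of_isSemisimple {s : L} (hs : (ad ℂ L s).IsSemisimple) :
    (engel ℂ s).toSubmodule = (ad ℂ L s).ker := by
  rw [← Module.End.eigenspace_zero, ← hs.isFinitelySemisimple.maxGenEigenspace_eq_eigenspace]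
  ext x
  simp [mem_engel_iff]

variable [FiniteDimensional ℂ L]

lemma isRegular_of_lieEquiv {σ : L ≃ₗ⁅ℂ⁆ L} {x : L} (h : IsRegular ℂ (σ x)) : IsRegular ℂ x := by
  rw [isRegular_iff_finrank_engel_eq_rank] at h ⊢
  rw [← h]
  have : (engel ℂ (σ x)).toSubmodule =
      (engel ℂ x).toSubmodule.map σ.toLinearEquiv.toLinearMap := by
    ext z
    refine ⟨fun hz => ⟨σ.symm z, ?_, σ.apply_symm_apply z⟩, ?_⟩
    · rw [← σ.apply_symm_apply z] at hz
      exact (lieEquiv_mem_engel_iff σ).mp hz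
    · rintro ⟨z, hz, rfl⟩
      exact lieEquiv_mem_engel σ hz
  exact ((LinearEquiv.ofEq _ _ this).trans
    (σ.toLinearEquiv.submoduleMap (engel ℂ x).toSubmodule).symm).finrank_eq.symm

lemma engel_le_engel_of_isRegular {x y : L} (hx : IsRegular ℂ x) (hy : y ∈ engel ℂ x) :
    engel ℂ x ≤ engel ℂ y := by
  have hcard : (finrank ℂ L : Cardinal) ≤ Cardinal.mk ℂ :=
    Cardinal.natCast_le_aleph0.trans (Cardinal.infinite_iff.mp inferInstance)
  refine engel_isBot_of_isMin hcard (engel ℂ x) ⟨engel ℂ x, x, self_mem_engel _ _, rfl⟩ le_rfl ?_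
    ⟨engel ℂ y, y, hy, rfl⟩
  rintro ⟨_, z, hz, rfl⟩ hzx
  have : finrank ℂ (engel ℂ x) ≤ finrank ℂ (engel ℂ z) := by
    rw [(isRegular_iff_finrank_engel_eq_rank ℂ x).mp hx]
    apply rank_le_finrank_engel
  exact (LieSubalgebra.toSubmodule_injective (Submodule.eq_of_le_of_finrank_le hzx this)).ge

lemma engel_eq_engel_of_isRegular {x y : L} (hx : IsRegular ℂ x) (hy : IsRegular ℂ y)
    (h : y ∈ engel ℂ x) : engel ℂ y = engel ℂ x := by
  refine (LieSubalgebra.toSubmodule_injective (Submodule.eq_of_le_of_finrank_le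
    (engel_le_engel_of_isRegular hx h) ?_)).symm
  exact ((isRegular_iff_finrank_engel_eq_rank ℂ y).mp hy).trans
    ((isRegular_iff_finrank_engel_eq_rank ℂ x).mp hx).symm |>.le

lemma engel_sup_range_ad (x : L) : (engel ℂ x).toSubmodule ⊔ (ad ℂ L x).range = ⊤ := by
  refine top_le_iff.mp ((LinearMap.isCompl_iSup_ker_pow_iInf_range_pow
    (ad ℂ L x)).sup_eq_top.ge.trans (sup_le_sup ?_ ?_))
  · exact iSup_le fun n z hz => (mem_engel_iff ..).mpr ⟨n, hz⟩
  · exact (iInf_le _ 1).trans_eq (by rw [pow_one])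

lemma finite_not_isRegular (x d : L) {t₀ : ℂ} (h : IsRegular ℂ (x + t₀ • d)) :
    {t : ℂ | ¬ IsRegular ℂ (x + t • d)}.Finite := by
  classical
  let b := finBasis ℂ L
  let P := ((ad ℂ L).toLinearMap.polyCharpoly b).coeff (rank ℂ L)
  let p : Polynomial ℂ := MvPolynomial.aeval
    (fun i => Polynomial.C (b.repr x i) + Polynomial.X * Polynomial.C (b.repr d i)) P
  have hp (t : ℂ) : p.eval t = MvPolynomial.eval (b.repr (x + t • d)) P := by
    rw [← Polynomial.coe_evalRingHom, ← MvPolynomial.coe_aeval_eq_eval]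
    change (Polynomial.evalRingHom t) (MvPolynomial.aeval _ P) = _
    rw [MvPolynomial.aeval_def, MvPolynomial.hom_eval₂]
    congr 1
    · ext; simp
    · ext i
      simp only [map_add, map_smul, Finsupp.add_apply, Finsupp.smul_apply, smul_eq_mul, map_mul,
        Polynomial.coe_evalRingHom, Polynomial.eval_C, Polynomial.eval_X]
  have hreg (t : ℂ) : IsRegular ℂ (x + t • d) ↔ p.eval t ≠ 0 := by
    rw [hp]
    exact isRegular_iff_coeff_polyCharpoly_rank_ne_zero ℂ b _
  have hp₀ : p ≠ 0 := fun h₀ => (hreg t₀).mp h (by rw [h₀, Polynomial.eval_zero])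
  refine (p.rootSet_finite ℂ).subset fun t ht => ?_
  rw [Set.mem_ofPred_eq, hreg, not_not] at ht
  rw [Polynomial.mem_rootSet]
  exact ⟨hp₀, by simpa using ht⟩

lemma isPreconnected_isRegular (x d : L) : IsPreconnected {t : ℂ | IsRegular ℂ (x + t • d)} := by
  rcases Set.eq_empty_or_nonempty {t : ℂ | IsRegular ℂ (x + t • d)} with h | ⟨t₀, h⟩
  · exact h ▸ isPreconnected_empty
  · simpa [Set.compl_ofPred] using (Set.Countable.isPathConnected_compl_of_one_lt_rank
      (by rw [Complex.rank_real_complex]; exact Cardinal.one_lt_two)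
      (finite_not_isRegular x d h).countable).isConnected.isPreconnected

lemma eventually_exists_lieEquiv_engel {x : L} (hx : IsRegular ℂ x) (d : L) :
    ∀ᶠ t in 𝓝 (0 : ℂ), IsRegular ℂ (x + t • d) →
      ∃ σ : L ≃ₗ⁅ℂ⁆ L, ∀ z, z ∈ engel ℂ x ↔ σ z ∈ engel ℂ (x + t • d) := by
  filter_upwards [eventually_exists_lieEquiv (engel ℂ x).toSubmodule (self_mem_engel ℂ x)
    (engel_sup_range_ad x) d] with t ⟨σ, k, hk, hσ⟩ ht
  have hk' : IsRegular ℂ k := isRegular_of_lieEquiv (σ := σ) (hσ ▸ ht)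
  exact ⟨σ, fun z => by
    rw [← hσ, lieEquiv_mem_engel_iff, engel_eq_engel_of_isRegular hx hk' hk]⟩

lemma exists_lieEquiv_engel {x y : L} (hx : IsRegular ℂ x) (hy : IsRegular ℂ y) :
    ∃ σ : L ≃ₗ⁅ℂ⁆ L, ∀ z, z ∈ engel ℂ x ↔ σ z ∈ engel ℂ y := by
  let P : ℂ → ℂ → Prop := fun s t => ∃ σ : L ≃ₗ⁅ℂ⁆ L, ∀ z,
    z ∈ engel ℂ (x + s • (y - x)) ↔ σ z ∈ engel ℂ (x + t • (y - x))
  suffices h : P 0 1 by simpa [P] using h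
  refine (isPreconnected_isRegular x (y - x)).induction₂ P ?_ ?_ ?_
    (by simpa using hx) (by simpa using hy)
  · intro s hs
    have hlim : Filter.Tendsto (fun t : ℂ => t - s) (𝓝 s) (𝓝 0) :=
      (continuous_sub_right s).tendsto' s 0 (sub_self s)
    filter_upwards [nhdsWithin_le_nhds (hlim.eventually (eventually_exists_lieEquiv_engel hs _)),
      self_mem_nhdsWithin] with t ht (htS : IsRegular ℂ _)
    rw [add_assoc, ← add_smul, add_sub_cancel] at ht
    exact ht htS
  · rintro r s t - - - ⟨σ, hσ⟩ ⟨τ, hτ⟩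
    exact ⟨σ.trans τ, fun z => (hσ z).trans (hτ (σ z))⟩
  · rintro s t - - ⟨σ, hσ⟩
    exact ⟨σ.symm, fun z => by rw [hσ, σ.apply_symm_apply]⟩

lemma exists_mem_isRegular (K : Submodule ℂ L) {x₀ : L} (hx₀ : x₀ ∈ K)
    (h : K ⊔ (ad ℂ L x₀).range = ⊤) : ∃ k ∈ K, IsRegular ℂ k := by
  obtain ⟨r, hr⟩ := exists_isRegular ℂ L
  have hfin := finite_not_isRegular x₀ (r - x₀) (t₀ := 1) (by simpa using hr)
  have hreg : ∀ᶠ t in 𝓝[≠] (0 : ℂ), IsRegular ℂ (x₀ + t • (r - x₀)) :=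
    nhdsNE_le_cofinite 0 (Filter.mem_cofinite.mpr hfin)
  obtain ⟨t, ⟨σ, k, hk, hσ⟩, ht⟩ := (((eventually_exists_lieEquiv K hx₀ h
    (r - x₀)).filter_mono nhdsWithin_le_nhds).and hreg).exists
  exact ⟨k, hk, isRegular_of_lieEquiv (σ := σ) (hσ ▸ ht)⟩

lemma engel_le_of_sup_range {H : Submodule ℂ L} {y : L} (hle : H ≤ (ad ℂ L y).ker)
    (h : H ⊔ (ad ℂ L y).range = ⊤) : (engel ℂ y).toSubmodule ≤ H := by
  have hrank := (ad ℂ L y).finrank_range_add_finrank_ker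
  have hsup := Submodule.finrank_sup_add_finrank_inf_eq H (ad ℂ L y).range
  have hleRank := Submodule.finrank_mono hle
  rw [h, finrank_top] at hsup
  have hH : H = (ad ℂ L y).ker := Submodule.eq_of_le_of_finrank_le hle (by omega)
  have hinf : H ⊓ (ad ℂ L y).range = ⊥ := Submodule.finrank_eq_zero.mp (by omega)
  intro x hx
  obtain ⟨n, hn⟩ := (mem_engel_iff ..).mp hx
  induction n generalizing x with
  | zero => exact (show x = 0 from hn) ▸ H.zero_mem
  | succ n ih =>
    have hyx : ad ℂ L y x ∈ H ⊓ (ad ℂ L y).range :=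
      ⟨ih ((mem_engel_iff ..).mpr ⟨n, hn⟩) hn, x, rfl⟩
    rw [hH]
    exact (Submodule.eq_bot_iff _).mp hinf _ hyx

lemma exists_lieEquiv_mem {s : L} (hs : (ad ℂ L s).IsSemisimple) {H : Submodule ℂ L}
    (hH : ∀ x ∈ H, ∀ y ∈ H, ⁅x, y⁆ = 0) {y₀ : L} (hy₀ : y₀ ∈ H)
    (h : H ⊔ (ad ℂ L y₀).range = ⊤) : ∃ σ : L ≃ₗ⁅ℂ⁆ L, σ s ∈ H := by
  obtain ⟨c, hc, hcr⟩ := exists_mem_isRegular (ad ℂ L s).ker (x₀ := s) (by simp)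
    (engel_eq_ker_of_isSemisimple hs ▸ engel_sup_range_ad s)
  obtain ⟨k, hk, hkr⟩ := exists_mem_isRegular H hy₀ h
  have hle : H ≤ (engel ℂ k).toSubmodule :=
    fun x hx => (mem_engel_iff ..).mpr ⟨1, by rw [pow_one, ad_apply, hH k hk x hx]⟩
  have hrank : finrank ℂ (engel ℂ k).toSubmodule ≤ finrank ℂ H :=
    ((isRegular_iff_finrank_engel_eq_rank ℂ k).mp hkr).trans_le
      ((rank_le_finrank_engel ℂ y₀).trans
        (Submodule.finrank_mono (engel_le_of_sup_range (hH y₀ hy₀) h)))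
  obtain ⟨σ, hσ⟩ := exists_lieEquiv_engel hcr hkr
  refine ⟨σ, Submodule.eq_of_le_of_finrank_le hle hrank ▸ (hσ s).mp ?_⟩
  have hc' : ⁅s, c⁆ = 0 := hc
  exact (mem_engel_iff ..).mpr ⟨1, by rw [pow_one, ad_apply, ← lie_skew, hc', neg_zero]⟩

end Regular

section SemisimplePart

variable {L : Type*} [LieRing L] [LieAlgebra ℂ L]

open LieAlgebra Module.End

lemma exists_semisimple_part [FiniteDimensional ℂ L] [IsKilling ℂ L] (h : L) :
    ∃ s : L, (ad ℂ L s).IsSemisimple ∧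
    ∀ (x : L) (μ : ℂ), x ∈ (ad ℂ L h).maxGenEigenspace μ → ⁅s, x⁆ = μ • x := by
  obtain ⟨N, -, S, hS₀, hN, hS, hSN⟩ := (ad ℂ L h).exists_isNilpotent_isSemisimple
  replace hS₀ : Commute (ad ℂ L h) S := Algebra.commute_of_mem_adjoin_self hS₀
  rw [eq_sub_of_add_eq hSN.symm] at hN
  have aux {μ : ℂ} {y : L} (hy : y ∈ (ad ℂ L h).maxGenEigenspace μ) : S y = μ • y := by
    rw [maxGenEigenspace_eq] at hy
    rw [apply_eq_of_mem_of_comm_of_isFinitelySemisimple_of_isNil hy hS₀ hS.isFinitelySemisimple hN]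
  have h_der (y z : L) (α β : ℂ) (hy : y ∈ (ad ℂ L h).maxGenEigenspace α)
      (hz : z ∈ (ad ℂ L h).maxGenEigenspace β) : S ⁅y, z⁆ = ⁅S y, z⁆ + ⁅y, S z⁆ := by
    have hyz : ⁅y, z⁆ ∈ (ad ℂ L h).maxGenEigenspace (α + β) :=
      LieModule.lie_mem_maxGenEigenspace_toEnd hy hz
    rw [aux hy, aux hz, aux hyz, smul_lie, lie_smul, ← add_smul]
  replace h_der (y z : L) : S ⁅y, z⁆ = ⁅S y, z⁆ + ⁅y, S z⁆ := by
    have hy : y ∈ ⨆ α : ℂ, (ad ℂ L h).maxGenEigenspace α := by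
      rw [iSup_maxGenEigenspace_eq_top]; trivial
    have hz : z ∈ ⨆ α : ℂ, (ad ℂ L h).maxGenEigenspace α := by
      rw [iSup_maxGenEigenspace_eq_top]; trivial
    induction hy using Submodule.iSup_induction' with
    | mem α y hy =>
      induction hz using Submodule.iSup_induction' with
      | mem β z hz => exact h_der y z α β hy hz
      | zero => simp
      | add _ _ _ _ h h' => simp only [lie_add, map_add, h, h']; abel
    | zero => simp
    | add _ _ _ _ h h' => simp only [add_lie, map_add, h, h']; abel
  replace h_der : ∀ y z : L, S ⁅y, z⁆ = ⁅y, S z⁆ - ⁅z, S y⁆ := by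
    simp_rw [← lie_skew (S _) _, add_comm, ← sub_eq_add_neg] at h_der; assumption
  obtain ⟨s, hs⟩ := LieDerivation.IsKilling.exists_eq_ad (⟨S, h_der⟩ : LieDerivation ℂ L L)
  have hs' : ad ℂ L s = S := by
    rw [← LieDerivation.coe_ad_apply_eq_ad_apply s, hs]
  exact ⟨s, hs' ▸ hS, fun x μ hx => by rw [← ad_apply (R := ℂ), hs', aux hx]⟩

lemma lie_eq_smul_of_lie_eq_smul {h s : L}
    (hs : ∀ (x : L) (μ : ℂ), x ∈ (ad ℂ L h).maxGenEigenspace μ → ⁅s, x⁆ = μ • x) {x : L} {μ : ℂ}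
    (hx : ⁅h, x⁆ = μ • x) : ⁅s, x⁆ = μ • x :=
  hs x μ (eigenspace_le_maxGenEigenspace (mem_eigenspace_iff.mpr hx))

lemma exists_eigenvector_of_semisimple_part [FiniteDimensional ℂ L] {h s : L}
    (hs : ∀ (x : L) (μ : ℂ), x ∈ (ad ℂ L h).maxGenEigenspace μ → ⁅s, x⁆ = μ • x)
    (W : Submodule ℂ L) (hW : ∀ x ∈ W, ⁅h, x⁆ ∈ W) {μ : ℂ} {x : L} (hxW : x ∈ W) (hx : x ≠ 0)
    (hμ : ⁅s, x⁆ = μ • x) : ∃ y ∈ W, y ≠ 0 ∧ ⁅h, y⁆ = μ • y := by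
  have hsh : ⁅s, h⁆ = 0 := by
    rw [lie_eq_smul_of_lie_eq_smul hs (x := h) (μ := 0) (by simp), zero_smul]
  let U : Submodule ℂ L := W ⊓ eigenspace (ad ℂ L s) μ
  have hU : ∀ y ∈ U, ad ℂ L h y ∈ U := by
    refine fun y hy => ⟨hW y hy.1, mem_eigenspace_iff.mpr ?_⟩
    have := mem_eigenspace_iff.mp hy.2
    rw [ad_apply] at this
    rw [ad_apply, ad_apply, leibniz_lie, hsh, zero_lie, zero_add, this, lie_smul]
  have hxU : x ∈ U := ⟨hxW, mem_eigenspace_iff.mpr hμ⟩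
  have : Nontrivial U := ⟨⟨x, hxU⟩, 0, fun h' => hx (congrArg Subtype.val h')⟩
  obtain ⟨ν, hν⟩ := exists_eigenvalue ((ad ℂ L h).restrict hU)
  obtain ⟨⟨y, hyU⟩, hy⟩ := hν.exists_hasEigenvector
  have h₁ : ⁅h, y⁆ = ν • y := congrArg Subtype.val hy.apply_eq_smul
  have hy0 : y ≠ 0 := fun h' => hy.2 (Subtype.ext h')
  have h₂ : μ • y = ν • y := by
    rw [← lie_eq_smul_of_lie_eq_smul hs h₁]
    exact (mem_eigenspace_iff.mp hyU.2).symm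
  exact ⟨y, hyU.1, hy0, by rw [h₁, h₂]⟩

lemma natCast_of_highest [FiniteDimensional ℂ L] {h e f s : L} (t : IsSl2Triple h e f)
    (hs : ∀ (x : L) (μ : ℂ), x ∈ (ad ℂ L h).maxGenEigenspace μ → ⁅s, x⁆ = μ • x) {x : L} {μ : ℂ}
    (hx : x ≠ 0) (hex : ⁅e, x⁆ = 0) (hμ : ⁅s, x⁆ = μ • x) : ∃ n : ℕ, μ = n := by
  obtain ⟨y, hy, hy0, h₁⟩ := exists_eigenvector_of_semisimple_part hs
    (LinearMap.ker (ad ℂ L e)) (fun y hy => by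
      have hy' : ⁅e, y⁆ = 0 := hy
      change ⁅e, ⁅h, y⁆⁆ = 0
      rw [leibniz_lie, hy', lie_zero, add_zero, ← lie_skew e h, t.lie_h_e_nsmul, neg_lie, nsmul_lie]
      simp [hy']) (x := x) hex hx hμ
  exact (⟨hy0, h₁, hy⟩ : t.HasPrimitiveVectorWith y μ).exists_nat

lemma intCast_of_eigenvector [FiniteDimensional ℂ L] {h e f s : L} (t : IsSl2Triple h e f)
    (he : IsNilpotent (ad ℂ L e))
    (hs : ∀ (x : L) (μ : ℂ), x ∈ (ad ℂ L h).maxGenEigenspace μ → ⁅s, x⁆ = μ • x) {x : L} {μ : ℂ}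
    (hx : x ≠ 0) (hμ : ⁅s, x⁆ = μ • x) : ∃ n : ℤ, μ = n := by
  have hse : ⁅s, e⁆ = (2 : ℂ) • e := lie_eq_smul_of_lie_eq_smul hs (by
    rw [t.lie_h_e_nsmul, two_smul, two_smul])
  obtain ⟨N, hN⟩ := he
  have key : ∀ (k : ℕ) (x : L) (μ : ℂ), ((ad ℂ L e) ^ k) x = 0 → x ≠ 0 → ⁅s, x⁆ = μ • x →
      ∃ n : ℤ, μ = n := by
    intro k
    induction k with
    | zero => exact fun x μ h₁ h₂ _ => absurd h₁ h₂
    | succ k ih =>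
      intro x μ h₁ h₂ h₃
      by_cases hex : ⁅e, x⁆ = 0
      · obtain ⟨n, hn⟩ := natCast_of_highest t hs h₂ hex h₃
        exact ⟨n, by simp [hn]⟩
      · obtain ⟨n, hn⟩ := ih ⁅e, x⁆ (2 + μ) (by rw [← h₁, pow_succ]; rfl) hex (by
          rw [leibniz_lie, hse, h₃, smul_lie, lie_smul, add_smul])
        exact ⟨n - 2, by push_cast; rw [← hn]; ring⟩
  exact key N x μ (by rw [hN]; rfl) hx hμ

end SemisimplePart

/-! ### The centralizer of a nilpotent element -/

section Transport

variable {L M : Type*} [LieRing L] [LieAlgebra ℂ L] [LieRing M] [LieAlgebra ℂ M]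
  (σ : L ≃ₗ⁅ℂ⁆ M)

lemma lie_lieEquiv_eq_zero_iff {x y : L} : ⁅σ x, σ y⁆ = 0 ↔ ⁅x, y⁆ = 0 := by
  rw [← σ.map_lie, EmbeddingLike.map_eq_zero_iff]

lemma centralizer_map (e : L) : (centralizer M (σ e)).toSubmodule =
    (centralizer L e).toSubmodule.map σ.toLinearEquiv.toLinearMap := by
  refine Submodule.ext fun y => ⟨fun hy => ?_, ?_⟩
  · obtain ⟨x, rfl⟩ := σ.surjective y
    exact ⟨x, (lie_lieEquiv_eq_zero_iff σ).mp hy, rfl⟩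
  · rintro ⟨x, hx, rfl⟩
    exact (lie_lieEquiv_eq_zero_iff σ).mpr hx

lemma inCenterOfCentralizer_lieEquiv_iff {e v : L} :
    InCenterOfCentralizer M (σ e) (σ v) ↔ InCenterOfCentralizer L e v := by
  refine and_congr (lie_lieEquiv_eq_zero_iff σ) (σ.surjective.forall.trans ?_)
  exact forall_congr' fun x =>
    imp_congr (lie_lieEquiv_eq_zero_iff σ) (lie_lieEquiv_eq_zero_iff σ)

lemma zCenter_map (e : L) :
    zCenter M (σ e) = (zCenter L e).map σ.toLinearEquiv.toLinearMap := by
  refine Submodule.ext fun y => ⟨fun hy => ?_, ?_⟩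
  · obtain ⟨x, rfl⟩ := σ.surjective y
    exact ⟨x, (inCenterOfCentralizer_lieEquiv_iff σ).mp hy, rfl⟩
  · rintro ⟨x, hx, rfl⟩
    exact (inCenterOfCentralizer_lieEquiv_iff σ).mpr hx

lemma zCenter_map_eq_span {ι : Type*} {e : L} {Y : ι → L}
    (h : zCenter L e = Submodule.span ℂ (Set.range Y)) :
    zCenter M (σ e) = Submodule.span ℂ (Set.range (σ ∘ Y)) := by
  rw [zCenter_map, h, Submodule.map_span, Set.range_comp]
  rfl

lemma finrank_centralizer_map (e : L) :
    Module.finrank ℂ (centralizer M (σ e)) = Module.finrank ℂ (centralizer L e) := by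
  change Module.finrank ℂ (centralizer M (σ e)).toSubmodule = _
  rw [centralizer_map]
  exact LinearEquiv.finrank_map_eq σ.toLinearEquiv _

lemma ker_ad_eq_centralizer (e : L) :
    LinearMap.ker (LieAlgebra.ad ℂ L e) = (centralizer L e).toSubmodule := by
  ext x
  change ⁅e, x⁆ = 0 ↔ ⁅x, e⁆ = 0
  rw [← lie_skew, neg_eq_zero]

open LieAlgebra

lemma isSemisimple_ad_lieEquiv {x : L} (h : (ad ℂ L x).IsSemisimple) :
    (ad ℂ M (σ x)).IsSemisimple :=
  (LinearEquiv.isSemisimple_iff _ _ σ.toLinearEquiv (LinearMap.ext fun y => σ.map_lie x y)).mp h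

lemma isDistinguished_lieEquiv {e : L} (h : IsDistinguished L e) : IsDistinguished M (σ e) := by
  intro x hx hss
  have hx' : ⁅σ.symm x, e⁆ = 0 := by
    apply σ.injective
    change σ _ = σ 0
    rw [σ.map_lie, σ.apply_symm_apply, hx, map_zero]
  rw [← σ.apply_symm_apply x, h _ hx' (isSemisimple_ad_lieEquiv σ.symm hss), map_zero]

lemma exists_lieEquiv_add_lie [FiniteDimensional ℂ L] {g s y : L} (hs : ⁅g, s⁆ = 0)
    (hy : ⁅g, ⁅g, y⁆⁆ = 0) :
    ∃ σ : L ≃ₗ⁅ℂ⁆ L, σ s = s ∧ σ y = y + ⁅g, y⁆ := by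
  obtain ⟨σ, hσ, hσ'⟩ := exists_lieEquiv_exp g
  refine ⟨σ, ?_, ?_⟩
  · simpa using hσ s 0 (by simpa)
  · simpa [hy] using hσ' y (by rw [hy, lie_zero])

end Transport

section CentralizerBasis

variable {L : Type*} [LieRing L] [LieAlgebra ℂ L] {e h f s : L}

lemma eigenvalue_eq_of_linearIndependent {K V κ : Type*} [Field K] [AddCommGroup V] [Module K V]
    [Fintype κ] {T : V →ₗ[K] V} {X : κ → V} {w : κ → K} (hX : LinearIndependent K X)
    (hT : ∀ i, T (X i) = w i • X i) {a : κ → K} {μ : K}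
    (h : T (∑ i, a i • X i) = μ • ∑ i, a i • X i) {i : κ} (hi : a i ≠ 0) : w i = μ := by
  have hsum : ∑ i, (a i * (w i - μ)) • X i = 0 := by
    rw [← sub_eq_zero.mpr h, map_sum, Finset.smul_sum, ← Finset.sum_sub_distrib]
    refine Finset.sum_congr rfl fun i _ => ?_
    rw [map_smul, hT]
    module
  exact sub_eq_zero.mp
    ((mul_eq_zero.mp (Fintype.linearIndependent_iff.mp hX _ hsum i)).resolve_left hi)

/-- A basis `X` of the centralizer of `e` on which `ad h` acts diagonally with integral
eigenvalues `w`. -/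
structure IsCentralizerBasis (e h : L) {κ : Type*} (w : κ → ℤ) (X : κ → L) : Prop where
  linearIndependent : LinearIndependent ℂ X
  span_eq : Submodule.span ℂ (Set.range X) = (centralizer L e).toSubmodule
  lie_eq (i : κ) : ⁅h, X i⁆ = (w i : ℂ) • X i

namespace IsCentralizerBasis

variable {κ : Type*} {w : κ → ℤ} {X : κ → L}

lemma lie_eq_zero (hX : IsCentralizerBasis e h w X) (i : κ) : ⁅X i, e⁆ = 0 :=
  hX.span_eq.le (Submodule.subset_span ⟨i, rfl⟩)

lemma exists_eq_sum [Fintype κ] (hX : IsCentralizerBasis e h w X) {x : L} (hx : ⁅x, e⁆ = 0) :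
    ∃ a : κ → ℂ, x = ∑ i, a i • X i := by
  obtain ⟨a, ha⟩ := Submodule.mem_span_range_iff_exists_fun ℂ |>.mp (hX.span_eq.ge hx)
  exact ⟨a, ha.symm⟩

lemma eq_zero_of_ne [Finite κ] (hX : IsCentralizerBasis e h w X) {x : L} (hx : ⁅x, e⁆ = 0) {m : ℤ}
    (hm : ⁅h, x⁆ = (m : ℂ) • x) (hw : ∀ i, w i ≠ m) : x = 0 := by
  have := Fintype.ofFinite κ
  obtain ⟨a, rfl⟩ := hX.exists_eq_sum hx
  refine Finset.sum_eq_zero fun i _ => smul_eq_zero_of_left (by_contra fun hi => hw i ?_) _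
  exact_mod_cast eigenvalue_eq_of_linearIndependent (T := LieAlgebra.ad ℂ L h)
    hX.linearIndependent hX.lie_eq hm hi

lemma exists_eq_smul [Finite κ] (hX : IsCentralizerBasis e h w X) {x : L} (hx : ⁅x, e⁆ = 0)
    {i : κ} (hi : ⁅h, x⁆ = (w i : ℂ) • x) (hw : ∀ j, j ≠ i → w j ≠ w i) :
    ∃ b : ℂ, x = b • X i := by
  have := Fintype.ofFinite κ
  obtain ⟨a, rfl⟩ := hX.exists_eq_sum hx
  refine ⟨a i, Finset.sum_eq_single_of_mem i (Finset.mem_univ i) fun j _ hj => ?_⟩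
  refine smul_eq_zero_of_left (by_contra fun h₀ => hw j hj ?_) _
  exact_mod_cast eigenvalue_eq_of_linearIndependent (T := LieAlgebra.ad ℂ L h)
    hX.linearIndependent hX.lie_eq hi h₀

/-- The difference of two such elements lies in the centralizer and has weight zero. -/
lemma eq_of_lie_eq [Finite κ] (hX : IsCentralizerBasis e h w X) (hw : ∀ i, w i ≠ 0)
    (hhs : ⁅h, s⁆ = 0) (he : ⁅s, e⁆ = ⁅h, e⁆) : s = h :=
  sub_eq_zero.mp <| hX.eq_zero_of_ne (m := 0) (by rw [sub_lie, he, sub_self])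
    (by rw [lie_sub, hhs, lie_self, sub_zero, Int.cast_zero, zero_smul]) hw

lemma map (hX : IsCentralizerBasis e h w X) {M : Type*} [LieRing M] [LieAlgebra ℂ M]
    (σ : L ≃ₗ⁅ℂ⁆ M) : IsCentralizerBasis (σ e) (σ h) w (σ ∘ X) where
  linearIndependent := hX.linearIndependent.map' σ.toLinearEquiv.toLinearMap σ.toLinearEquiv.ker
  span_eq := by
    rw [centralizer_map, ← hX.span_eq, Submodule.map_span, Set.range_comp]
    rfl
  lie_eq i := by rw [Function.comp_apply, ← σ.map_lie, hX.lie_eq, map_smul]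

lemma zCenter_eq_span [Fintype κ] (hX : IsCentralizerBasis e h w X) {ι : Type*} {c : ι → κ}
    (hc : ∀ i j, ⁅X (c i), X j⁆ = 0)
    (hcompl : ∀ a : κ → ℂ, (∀ j, ∑ i, a i • ⁅X i, X j⁆ = 0) → ∀ i ∉ Set.range c, a i = 0) :
    zCenter L e = Submodule.span ℂ (Set.range (X ∘ c)) := by
  refine le_antisymm (fun v hv => ?_) (Submodule.span_le.mpr ?_)
  · obtain ⟨a, rfl⟩ := hX.exists_eq_sum hv.1
    have ha (j : κ) : ∑ i, a i • ⁅X i, X j⁆ = 0 := by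
      simpa [sum_lie] using hv.2 (X j) (hX.lie_eq_zero j)
    refine Submodule.sum_mem _ fun i _ => ?_
    by_cases hi : i ∈ Set.range c
    · obtain ⟨j, rfl⟩ := hi
      exact Submodule.smul_mem _ _ (Submodule.subset_span ⟨j, rfl⟩)
    · rw [hcompl a ha i hi, zero_smul]
      exact Submodule.zero_mem _
  · rintro _ ⟨i, rfl⟩
    refine ⟨hX.lie_eq_zero (c i), fun y hy => ?_⟩
    obtain ⟨a, rfl⟩ := hX.exists_eq_sum hy
    rw [lie_sum]
    exact Finset.sum_eq_zero fun j _ => by rw [lie_smul, Function.comp_apply, hc, smul_zero]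

section Center

variable {ι : Type*} {c : ι → κ}
  (hX : IsCentralizerBasis e h w X) (hc : zCenter L e = Submodule.span ℂ (Set.range (X ∘ c)))
include hc

lemma inCenterOfCentralizer (i : ι) : InCenterOfCentralizer L e (X (c i)) :=
  hc.ge (Submodule.subset_span ⟨i, rfl⟩)

lemma exists_eq_sum_of_inCenterOfCentralizer [Fintype ι] {v : L}
    (hv : InCenterOfCentralizer L e v) :
    ∃ a : ι → ℂ, v = ∑ i, a i • X (c i) := by
  obtain ⟨a, ha⟩ := Submodule.mem_span_range_iff_exists_fun ℂ |>.mp (hc.le hv)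
  exact ⟨a, ha.symm⟩

include hX

lemma finrank_zCenter [Fintype ι] (hinj : Function.Injective c) :
    Module.finrank ℂ (zCenter L e) = Fintype.card ι := by
  rw [hc, finrank_span_eq_card (hX.linearIndependent.comp c hinj)]

lemma exists_eigenvector_iff [Finite ι] (hinj : Function.Injective c) (m : ℂ) :
    (∃ z : L, z ≠ 0 ∧ InCenterOfCentralizer L e z ∧ ⁅h, z⁆ = m • z) ↔
      ∃ i, (w (c i) : ℂ) = m := by
  have := Fintype.ofFinite ι
  constructor
  · rintro ⟨z, hz₀, hz, hm⟩
    obtain ⟨a, rfl⟩ := exists_eq_sum_of_inCenterOfCentralizer hc hz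
    obtain ⟨i, -, hi⟩ := Finset.exists_ne_zero_of_sum_ne_zero hz₀
    exact ⟨i, eigenvalue_eq_of_linearIndependent (T := LieAlgebra.ad ℂ L h)
      (hX.linearIndependent.comp c hinj) (fun i => hX.lie_eq (c i)) hm (left_ne_zero_of_smul hi)⟩
  · rintro ⟨i, rfl⟩
    exact ⟨X (c i), hX.linearIndependent.ne_zero _, inCenterOfCentralizer hc i, hX.lie_eq _⟩

end Center

end IsCentralizerBasis

section PropertyP

variable (t : IsSl2Triple h e f) {u v : L}
include t

/-- `⁅f, y⁆` and `μ • u` have the same image under `ad e`, so they differ by an element of the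
centralizer. -/
lemma lie_lie_eq_smul_lie {y : L} {μ : ℂ} (hye : ⁅y, e⁆ = 0) (hy : ⁅h, y⁆ = μ • y)
    (hu : ⁅e, u⁆ = y) (hv : InCenterOfCentralizer L e v) : ⁅⁅f, y⁆, v⁆ = μ • ⁅u, v⁆ := by
  have hey : ⁅e, y⁆ = 0 := by rw [← lie_skew, hye, neg_zero]
  have hcent : ⁅⁅f, y⁆ - μ • u, e⁆ = 0 := by
    rw [← lie_skew, lie_sub, leibniz_lie, hey, lie_zero, t.lie_e_f, hy, lie_smul, hu, add_zero,
      sub_self, neg_zero]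
  have := hv.2 _ hcent
  rwa [← lie_skew, neg_eq_zero, sub_lie, smul_lie, sub_eq_zero] at this

omit t in
lemma lie_lie_eq_zero_of_inCenterOfCentralizer (hu : ⁅⁅e, u⁆, e⁆ = 0)
    (hv : InCenterOfCentralizer L e v) : ⁅⁅u, v⁆, e⁆ = 0 := by
  rw [lie_lie, hv.1, lie_zero, zero_sub, ← lie_skew u e, lie_neg, hv.2 _ hu, neg_zero, neg_zero]

variable {κ ι : Type*} [Finite κ] [LinearOrder ι] {w : κ → ℤ} {X : κ → L}
  {c : ι → κ} {top : ι}

omit t in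
/-- The lowest component of `v` pairs with `u` into the top weight space of the centralizer, and
all other components are pushed to weights beyond it. -/
lemma IsCentralizerBasis.exists_lie_eq_smul [Fintype ι] (hX : IsCentralizerBasis e h w X)
    (hc : zCenter L e = Submodule.span ℂ (Set.range (X ∘ c))) (hmono : StrictMono (w ∘ c))
    (htop : ∀ k ≠ c top, w k < w (c top)) {a : ι → ℂ} {k : ι} (hk : a k ≠ 0)
    (hmin : ∀ j < k, a j = 0) (heu : ⁅⁅e, u⁆, e⁆ = 0)
    (hu : ⁅h, u⁆ = ((w (c top) - w (c k) : ℤ) : ℂ) • u) (hne : ⁅u, X (c k)⁆ ≠ 0) :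
    ∃ b : ℂ, b ≠ 0 ∧ ⁅u, ∑ j, a j • X (c j)⁆ = b • X (c top) := by
  have hz (j : ι) : InCenterOfCentralizer L e (X (c j)) :=
    IsCentralizerBasis.inCenterOfCentralizer hc j
  have hweight (j : ι) : ⁅h, ⁅u, X (c j)⁆⁆ =
      ((w (c top) - w (c k) + w (c j) : ℤ) : ℂ) • ⁅u, X (c j)⁆ := by
    rw [lie_lie_eq_add_smul hu (hX.lie_eq _), Int.cast_add]
  have hbeyond (j : ι) (hj : k < j) : ⁅u, X (c j)⁆ = 0 := by
    refine hX.eq_zero_of_ne (lie_lie_eq_zero_of_inCenterOfCentralizer heu (hz j)) (hweight j) ?_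
    intro i hi
    have hle : w i ≤ w (c top) := by
      rcases eq_or_ne i (c top) with rfl | h
      exacts [le_rfl, (htop i h).le]
    have hlt : w (c k) < w (c j) := hmono hj
    omega
  obtain ⟨b, hb⟩ := hX.exists_eq_smul (lie_lie_eq_zero_of_inCenterOfCentralizer heu (hz k))
    (by rw [hweight, sub_add_cancel]) fun j hj => (htop j hj).ne
  refine ⟨a k * b, mul_ne_zero hk fun h₀ => hne (by rw [hb, h₀, zero_smul]), ?_⟩
  rw [lie_sum, Finset.sum_eq_single_of_mem k (Finset.mem_univ k), lie_smul, hb, smul_smul]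
  intro j _ hj
  rcases lt_or_gt_of_ne hj with h | h
  · rw [hmin j h, zero_smul, lie_zero]
  · rw [lie_smul, hbeyond j h, smul_zero]

theorem IsCentralizerBasis.propertyP [Finite ι] (hX : IsCentralizerBasis e h w X)
    (hc : zCenter L e = Submodule.span ℂ (Set.range (X ∘ c))) (hmono : StrictMono (w ∘ c))
    (htop : ∀ k ≠ c top, w k < w (c top))
    (hpair : ∀ k, ∃ u : L, ⁅⁅e, u⁆, e⁆ = 0 ∧ ⁅h, u⁆ = ((w (c top) - w (c k) : ℤ) : ℂ) • u ∧
      ⁅u, X (c k)⁆ ≠ 0) : PropertyP L e h f := by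
  intro m hm hmax v hv hv₀ z hz hzm
  have := Fintype.ofFinite ι
  have hinj : Function.Injective c := hmono.injective.of_comp
  have hle (k : κ) : w k ≤ w (c top) := by
    rcases eq_or_ne k (c top) with rfl | h
    exacts [le_rfl, (htop k h).le]
  obtain rfl : m = w (c top) := by
    obtain ⟨i, rfl⟩ := (hX.exists_eigenvector_iff hc hinj m).mp hm
    have := hmax _ ((hX.exists_eigenvector_iff hc hinj _).mpr ⟨top, rfl⟩)
    exact congrArg _ (le_antisymm (hle _) (by
      simpa using (Complex.le_def.mp this).1))
  obtain ⟨b', rfl⟩ := hX.exists_eq_smul hz.1 hzm fun j hj => (htop j hj).ne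
  obtain ⟨a, rfl⟩ := IsCentralizerBasis.exists_eq_sum_of_inCenterOfCentralizer hc hv
  obtain ⟨i, -, hi⟩ := Finset.exists_ne_zero_of_sum_ne_zero hv₀
  obtain ⟨k, hk, hmin⟩ := (Set.toFinite {j | a j ≠ 0}).exists_minimal ⟨i, left_ne_zero_of_smul hi⟩
  obtain ⟨u, heu, hu, hne⟩ := hpair k
  obtain ⟨b, hb, huv⟩ := hX.exists_lie_eq_smul hc hmono htop hk
    (fun j hj => by_contra fun h => hj.not_ge (hmin h hj.le)) heu hu hne
  have hμ : (2 + (w (c top) - w (c k) : ℤ) : ℂ) ≠ 0 := by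
    have := hle (c k)
    exact_mod_cast (by omega : 2 + (w (c top) - w (c k)) ≠ 0)
  have hy := lie_lie_eq_smul_lie t heu
    (lie_lie_eq_add_smul (by rw [t.lie_h_e_nsmul, two_smul, two_smul]) hu) rfl hv
  refine ⟨(b' / ((2 + (w (c top) - w (c k) : ℤ)) * b)) • ⁅e, u⁆, by rw [smul_lie, heu, smul_zero],
    ?_⟩
  rw [lie_smul, smul_lie, hy, huv, smul_smul, smul_smul]
  congr 1
  field_simp

end PropertyP

end CentralizerBasis

/-! ### The simply laced Lie algebras of Frenkel and Kac -/

/-- An integral bilinear form, not necessarily symmetric, whose quadratic form is positive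
definite. It encodes both an even lattice (the symmetrization) and a cocycle (its parity). -/
structure PosForm (Q : Type*) [AddCommGroup Q] where
  form : Q →+ Q →+ ℤ
  form_self_pos : ∀ x, x ≠ 0 → 0 < form x x

namespace PosForm

variable {Q : Type*} [AddCommGroup Q] (A : PosForm Q)

/-- The symmetrization of the form. -/
def pairing : Q →+ Q →+ ℤ := A.form + A.form.flip

/-- The roots, normalized by `form x x = 1`, which is `pairing x x = 2`. -/
def IsRoot (x : Q) : Prop := A.form x x = 1

/-- The sign cocycle `(-1) ^ form x y` of Frenkel and Kac. -/
def sign (x y : Q) : ℤˣ := (A.form x y).negOnePow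

variable {A} {x y z : Q}

lemma pairing_apply (x y : Q) : A.pairing x y = A.form x y + A.form y x := rfl

lemma pairing_comm (x y : Q) : A.pairing x y = A.pairing y x := add_comm _ _

lemma form_add_self (x y : Q) :
    A.form (x + y) (x + y) = A.form x x + A.form y y + A.pairing x y := by
  simp only [pairing_apply, map_add, AddMonoidHom.add_apply]
  ring

lemma IsRoot.pairing_self (hx : A.IsRoot x) : A.pairing x x = 2 := by
  rw [pairing_apply, hx]
  rfl

lemma IsRoot.neg (hx : A.IsRoot x) : A.IsRoot (-x) := by
  simpa [IsRoot] using hx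

lemma IsRoot.ne_zero (hx : A.IsRoot x) : x ≠ 0 := by
  rintro rfl
  simp [IsRoot] at hx

lemma IsRoot.add_iff (hx : A.IsRoot x) (hy : A.IsRoot y) :
    A.IsRoot (x + y) ↔ A.pairing x y = -1 := by
  rw [IsRoot, form_add_self, hx, hy]
  omega

lemma IsRoot.neg_one_le_pairing (hx : A.IsRoot x) (hy : A.IsRoot y) (h : x + y ≠ 0) :
    -1 ≤ A.pairing x y := by
  have := A.form_self_pos _ h
  rw [form_add_self, hx, hy] at this
  omega

lemma IsRoot.pairing_le_one (hx : A.IsRoot x) (hy : A.IsRoot y) (h : x ≠ y) :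
    A.pairing x y ≤ 1 := by
  have := hx.neg_one_le_pairing hy.neg (by rwa [← sub_eq_add_neg, sub_ne_zero])
  rw [map_neg] at this
  omega

lemma IsRoot.not_isRoot_add (hx : A.IsRoot x) (hy : A.IsRoot y) (h : 0 ≤ A.pairing x y) :
    ¬A.IsRoot (x + y) := by
  rw [hx.add_iff hy]
  omega

lemma sign_add_left (x y z : Q) : A.sign (x + y) z = A.sign x z * A.sign y z := by
  rw [sign, map_add, AddMonoidHom.add_apply, Int.negOnePow_add, sign, sign]

lemma sign_add_right (x y z : Q) : A.sign x (y + z) = A.sign x y * A.sign x z := by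
  rw [sign, map_add, Int.negOnePow_add, sign, sign]

@[simp]
lemma sign_neg_left (x y : Q) : A.sign (-x) y = A.sign x y := by
  rw [sign, map_neg, AddMonoidHom.neg_apply, Int.negOnePow_neg, sign]

@[simp]
lemma sign_neg_right (x y : Q) : A.sign x (-y) = A.sign x y := by
  rw [sign, map_neg, Int.negOnePow_neg, sign]

lemma sign_mul_sign (x y : Q) : A.sign x y * A.sign y x = (A.pairing x y).negOnePow := by
  rw [pairing_apply, Int.negOnePow_add, sign, sign]

lemma IsRoot.sign_self (hx : A.IsRoot x) : A.sign x x = -1 := by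
  rw [sign, hx, Int.negOnePow_one]

lemma sign_comm_of_pairing_eq_neg_one (h : A.pairing x y = -1) : A.sign y x = -A.sign x y := by
  have h' := A.sign_mul_sign x y
  rw [h, Int.negOnePow_neg, Int.negOnePow_one] at h'
  rcases Int.units_eq_one_or (A.sign x y) with h₁ | h₁ <;> rw [h₁] at h' ⊢ <;> simpa using h'

lemma sign_comm_of_pairing_eq_zero (h : A.pairing x y = 0) : A.sign y x = A.sign x y := by
  have h' := A.sign_mul_sign x y
  rw [h, Int.negOnePow_zero] at h'
  rcases Int.units_eq_one_or (A.sign x y) with h₁ | h₁ <;> rw [h₁] at h' ⊢ <;>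
    simpa [neg_eq_iff_eq_neg] using h'

end PosForm

/-- The Lie algebra of Frenkel and Kac attached to a positive form: a toral part dual to the
lattice, and one vector for each root. -/
def FrenkelKac (R : Type*) [CommRing R] {Q : Type*} [AddCommGroup Q] (A : PosForm Q) : Type _ :=
  (Q →+ R) × ({x // A.IsRoot x} →₀ R)

namespace FrenkelKac

open PosForm

variable {R : Type*} [CommRing R] {Q : Type*} [AddCommGroup Q] {A : PosForm Q}

noncomputable instance : AddCommGroup (FrenkelKac R A) :=
  inferInstanceAs (AddCommGroup ((Q →+ R) × ({x // A.IsRoot x} →₀ R)))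

noncomputable instance : Module R (FrenkelKac R A) :=
  inferInstanceAs (Module R ((Q →+ R) × ({x // A.IsRoot x} →₀ R)))

variable (A) in
/-- The toral elements. -/
noncomputable def toral : (Q →+ R) →ₗ[R] FrenkelKac R A := LinearMap.inl R _ _

variable (R A) in
/-- The combinations of root vectors. -/
noncomputable def ofRoots : ({x // A.IsRoot x} →₀ R) →ₗ[R] FrenkelKac R A := LinearMap.inr R _ _

variable (R A) in
open Classical in
/-- The root vector of a root, extended by zero to the whole lattice so that sums of roots need
no case distinction. -/
noncomputable def vector (x : Q) : FrenkelKac R A :=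
  if h : A.IsRoot x then ofRoots R A (Finsupp.single ⟨x, h⟩ 1) else 0

variable (R A) in
/-- The toral element of the coroot of `x`. -/
noncomputable def coroot (x : Q) : FrenkelKac R A :=
  toral A ((Int.castAddHom R).comp (A.pairing x))

variable (R A) in
open Classical in
/-- The bracket of the vectors of two roots. -/
noncomputable def rootBracket (x y : Q) : FrenkelKac R A :=
  A.sign x y • if x + y = 0 then coroot R A x else vector R A (x + y)

/-- The projection onto the toral part. -/
noncomputable def toralPart : FrenkelKac R A →ₗ[R] Q →+ R := LinearMap.fst R _ _

/-- The projection onto the coordinates at the roots. -/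
noncomputable def rootPart : FrenkelKac R A →ₗ[R] {x // A.IsRoot x} →₀ R := LinearMap.snd R _ _

variable (R A) in
/-- The action of the toral part on the root vectors. -/
noncomputable def rootAction : ({x // A.IsRoot x} →₀ R) →ₗ[R] (Q →+ R) →ₗ[R] FrenkelKac R A :=
  Finsupp.linearCombination R fun x =>
    { toFun t := t x • vector R A x
      map_add' _ _ := add_smul _ _ _
      map_smul' _ _ := mul_smul _ _ _ }

variable (R A) in
/-- The bilinear extension of the bracket of root vectors. -/
noncomputable def rootLie :
    ({x // A.IsRoot x} →₀ R) →ₗ[R] ({x // A.IsRoot x} →₀ R) →ₗ[R] FrenkelKac R A :=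
  Finsupp.linearCombination R fun x => Finsupp.linearCombination R fun y => rootBracket R A x y

variable (R A) in
/-- The bracket as a bilinear map. -/
noncomputable def lieMap : FrenkelKac R A →ₗ[R] FrenkelKac R A →ₗ[R] FrenkelKac R A :=
  ((rootAction R A).compl₁₂ rootPart toralPart).flip -
    (rootAction R A).compl₁₂ rootPart toralPart + (rootLie R A).compl₁₂ rootPart rootPart

lemma lieMap_apply (u v : FrenkelKac R A) :
    lieMap R A u v = rootAction R A (rootPart v) (toralPart u) -
      rootAction R A (rootPart u) (toralPart v) + rootLie R A (rootPart u) (rootPart v) := rfl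

lemma vector_of_not_isRoot {x : Q} (h : ¬A.IsRoot x) : vector R A x = 0 := dif_neg h

lemma rootPart_vector {x : Q} (h : A.IsRoot x) :
    rootPart (vector R A x) = Finsupp.single ⟨x, h⟩ 1 := by
  rw [vector, dif_pos h]
  rfl

lemma vector_ne_zero [Nontrivial R] {x : Q} (h : A.IsRoot x) : vector R A x ≠ 0 := fun h₀ => by
  have := rootPart_vector (R := R) h
  rw [h₀, map_zero] at this
  exact one_ne_zero (Finsupp.single_eq_zero.mp this.symm)

lemma toralPart_vector (x : Q) : toralPart (vector R A x) = 0 := by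
  rw [vector]
  split_ifs
  exacts [rfl, map_zero _]

@[simp]
lemma toralPart_toral (t : Q →+ R) : toralPart (toral A t) = t := rfl

@[simp]
lemma rootPart_toral (t : Q →+ R) : rootPart (toral A t) = 0 := rfl

lemma toral_add_linearCombination (u : FrenkelKac R A) :
    toral A (toralPart u) + Finsupp.linearCombination R (fun x : {x // A.IsRoot x} => vector R A x)
      (rootPart u) = u := by
  have h : Finsupp.linearCombination R (fun x : {x // A.IsRoot x} => vector R A x) =
      ofRoots R A := by
    refine Finsupp.lhom_ext' fun x => LinearMap.ext_ring ?_
    simp [vector, x.2]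
  rw [h]
  exact Prod.fst_add_snd u

lemma induction_on {p : FrenkelKac R A → Prop} (toral : ∀ t, p (toral A t))
    (vector : ∀ x, A.IsRoot x → p (vector R A x)) (add : ∀ u v, p u → p v → p (u + v))
    (smul : ∀ (c : R) u, p u → p (c • u)) (u : FrenkelKac R A) : p u := by
  rw [← toral_add_linearCombination u, Finsupp.linearCombination_apply]
  refine add _ _ (toral _) (Finset.sum_induction _ p add (by simpa using toral 0) fun x _ => ?_)
  exact smul _ _ (vector x x.2)

lemma lieMap_toral_toral (s t : Q →+ R) : lieMap R A (toral A s) (toral A t) = 0 := by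
  simp [lieMap_apply]

lemma lieMap_toral_vector (t : Q →+ R) (x : Q) :
    lieMap R A (toral A t) (vector R A x) = t x • vector R A x := by
  by_cases h : A.IsRoot x
  · simp [lieMap_apply, rootPart_vector h, rootAction]
  · simp [vector_of_not_isRoot h]

lemma lieMap_vector_toral (x : Q) (t : Q →+ R) :
    lieMap R A (vector R A x) (toral A t) = -(t x • vector R A x) := by
  by_cases h : A.IsRoot x
  · simp [lieMap_apply, rootPart_vector h, rootAction]
  · simp [vector_of_not_isRoot h]

lemma lieMap_vector_vector {x y : Q} (hx : A.IsRoot x) (hy : A.IsRoot y) :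
    lieMap R A (vector R A x) (vector R A y) = rootBracket R A x y := by
  simp [lieMap_apply, rootPart_vector, hx, hy, toralPart_vector, rootLie]

lemma lieMap_vector_vector_of_ne {x y : Q} (hx : A.IsRoot x) (hy : A.IsRoot y)
    (h : x + y ≠ 0) :
    lieMap R A (vector R A x) (vector R A y) = A.sign x y • vector R A (x + y) := by
  rw [lieMap_vector_vector hx hy, rootBracket, if_neg h]

lemma lieMap_vector_vector_neg {x : Q} (hx : A.IsRoot x) :
    lieMap R A (vector R A x) (vector R A (-x)) = -coroot R A x := by
  rw [lieMap_vector_vector hx hx.neg, rootBracket, if_pos (add_neg_cancel x), sign_neg_right,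
    hx.sign_self, Units.neg_smul, one_smul]

lemma coroot_add (x y : Q) : coroot R A (x + y) = coroot R A x + coroot R A y := by
  rw [coroot, coroot, coroot, ← map_add, map_add]
  congr 1
  ext
  simp

lemma coroot_neg (x : Q) : coroot R A (-x) = -coroot R A x := by
  rw [coroot, coroot, ← map_neg, map_neg]
  congr 1
  ext
  simp

lemma lieMap_vector_vector_swap {x y : Q} (hx : A.IsRoot x) (hy : A.IsRoot y) :
    lieMap R A (vector R A x) (vector R A y) = -lieMap R A (vector R A y) (vector R A x) := by
  by_cases h : x + y = 0
  · obtain rfl := eq_neg_of_add_eq_zero_right h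
    have := lieMap_vector_vector_neg (R := R) hy
    rw [neg_neg, coroot_neg, neg_neg] at this
    rw [lieMap_vector_vector_neg hx, this]
  · rw [lieMap_vector_vector_of_ne hx hy h,
      lieMap_vector_vector_of_ne hy hx (by rwa [add_comm]), add_comm y]
    by_cases hr : A.IsRoot (x + y)
    · rw [sign_comm_of_pairing_eq_neg_one ((hx.add_iff hy).mp hr), Units.neg_smul, neg_neg]
    · rw [vector_of_not_isRoot hr, smul_zero, smul_zero, neg_zero]

lemma lieMap_swap (u v : FrenkelKac R A) : lieMap R A u v = -lieMap R A v u := by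
  induction u using induction_on with
  | add u w hu hw => rw [map_add, LinearMap.add_apply, map_add, hu, hw, neg_add]
  | smul c u hu => rw [map_smul, LinearMap.smul_apply, map_smul, hu, smul_neg]
  | toral t =>
    induction v using induction_on with
    | add v w hv hw => rw [map_add, map_add, LinearMap.add_apply, hv, hw, neg_add]
    | smul c v hv => rw [map_smul, map_smul, LinearMap.smul_apply, hv, smul_neg]
    | toral s => rw [lieMap_toral_toral, lieMap_toral_toral, neg_zero]
    | vector x _ => rw [lieMap_toral_vector, lieMap_vector_toral, neg_neg]
  | vector x hx =>
    induction v using induction_on with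
    | add v w hv hw => rw [map_add, map_add, LinearMap.add_apply, hv, hw, neg_add]
    | smul c v hv => rw [map_smul, map_smul, LinearMap.smul_apply, hv, smul_neg]
    | toral s => rw [lieMap_toral_vector, lieMap_vector_toral]
    | vector y hy => exact lieMap_vector_vector_swap hx hy

lemma lieMap_self (u : FrenkelKac R A) : lieMap R A u u = 0 := by
  induction u using induction_on with
  | toral t => exact lieMap_toral_toral t t
  | vector x hx =>
    have hp : 0 ≤ A.pairing x x := by rw [hx.pairing_self]; decide
    have h : x + x ≠ 0 := fun h => by
      have := form_add_self (A := A) x x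
      rw [h, hx, map_zero] at this
      omega
    rw [lieMap_vector_vector_of_ne hx hx h, vector_of_not_isRoot (hx.not_isRoot_add hx hp),
      smul_zero]
  | add u v hu hv =>
    rw [map_add, map_add, LinearMap.add_apply, LinearMap.add_apply, hu, hv, lieMap_swap u v,
      zero_add, add_zero, add_neg_cancel]
  | smul c u hu => rw [map_smul, map_smul, LinearMap.smul_apply, hu, smul_zero, smul_zero]

/-- The cyclic sum which vanishes by the Jacobi identity. -/
noncomputable def jacobiator (u v w : FrenkelKac R A) : FrenkelKac R A :=
  lieMap R A u (lieMap R A v w) + lieMap R A v (lieMap R A w u) + lieMap R A w (lieMap R A u v)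

lemma jacobiator_rotate (u v w : FrenkelKac R A) : jacobiator u v w = jacobiator v w u := by
  simp only [jacobiator]
  abel

lemma jacobiator_eq_zero_of_generators {u v : FrenkelKac R A}
    (ht : ∀ t, jacobiator u v (toral A t) = 0)
    (hv : ∀ x, A.IsRoot x → jacobiator u v (vector R A x) = 0) (w : FrenkelKac R A) :
    jacobiator u v w = 0 := by
  induction w using induction_on with
  | toral t => exact ht t
  | vector x hx => exact hv x hx
  | add w w' hw hw' =>
    have : jacobiator u v (w + w') = jacobiator u v w + jacobiator u v w' := by
      simp only [jacobiator, map_add, LinearMap.add_apply]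
      abel
    rw [this, hw, hw', add_zero]
  | smul c w hw =>
    rw [← smul_zero c, ← hw]
    simp only [jacobiator, map_smul, LinearMap.smul_apply, smul_add]

lemma jacobiator_toral_toral (s t : Q →+ R) (w : FrenkelKac R A) :
    jacobiator (toral A s) (toral A t) w = 0 := by
  refine jacobiator_eq_zero_of_generators (fun r => ?_) (fun x _ => ?_) w
  · simp [jacobiator, lieMap_toral_toral]
  · simp only [jacobiator, lieMap_toral_vector, lieMap_vector_toral, lieMap_toral_toral,
      map_zero, map_neg, map_smul]
    module

lemma lieMap_toral_rootBracket (t : Q →+ R) (x y : Q) :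
    lieMap R A (toral A t) (rootBracket R A x y) = t (x + y) • rootBracket R A x y := by
  rw [rootBracket]
  rcases Int.units_eq_one_or (A.sign x y) with h | h <;> split_ifs with h₀ <;>
    simp [h, h₀, coroot, lieMap_toral_toral, lieMap_toral_vector]

lemma jacobiator_vector_vector_toral {x y : Q} (hx : A.IsRoot x) (hy : A.IsRoot y) (t : Q →+ R) :
    jacobiator (vector R A x) (vector R A y) (toral A t) = 0 := by
  rw [jacobiator, lieMap_vector_toral, lieMap_toral_vector, lieMap_vector_vector hx hy,
    lieMap_toral_rootBracket, map_neg, map_smul, map_smul, lieMap_vector_vector hx hy,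
    lieMap_vector_vector_swap hy hx, lieMap_vector_vector hx hy, map_add]
  module

lemma lieMap_vector_coroot (x y : Q) :
    lieMap R A (vector R A y) (coroot R A x) = -((A.pairing x y : R) • vector R A y) :=
  lieMap_vector_toral y _

lemma lieMap_lieMap_vector {x y z : Q} (hx : A.IsRoot x) (hy : A.IsRoot y) (hz : A.IsRoot z)
    (hyz : y + z ≠ 0) (h : x + (y + z) ≠ 0) :
    lieMap R A (vector R A x) (lieMap R A (vector R A y) (vector R A z)) =
      if A.pairing y z = -1 then
        (A.sign x y * A.sign x z * A.sign y z) • vector R A (x + (y + z)) else 0 := by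
  rw [lieMap_vector_vector_of_ne hy hz hyz, Units.smul_def, map_zsmul, ← Units.smul_def]
  split_ifs with hp
  · rw [lieMap_vector_vector_of_ne hx ((hy.add_iff hz).mpr hp) h, smul_smul, sign_add_right,
      mul_comm]
  · rw [vector_of_not_isRoot (mt (hy.add_iff hz).mp hp), map_zero, smul_zero]

lemma jacobiator_self (u v : FrenkelKac R A) : jacobiator u u v = 0 := by
  rw [jacobiator, lieMap_self, lieMap_swap v u, map_neg, map_zero, add_neg_cancel, add_zero]

lemma jacobiator_vector_neg {x y : Q} (hx : A.IsRoot x) (hy : A.IsRoot y) :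
    jacobiator (vector R A x) (vector R A y) (vector R A (-y)) = 0 := by
  rcases eq_or_ne x y with rfl | hxy
  · exact jacobiator_self _ _
  rcases eq_or_ne (x + y) 0 with hxy' | hxy'
  · rw [eq_neg_of_add_eq_zero_left hxy', ← jacobiator_rotate, jacobiator_self]
  have hle := hx.pairing_le_one hy hxy
  have hge := hx.neg_one_le_pairing hy hxy'
  have hcancel : -y + (x + y) = x := by abel
  rw [jacobiator, lieMap_vector_vector_neg hy, map_neg, lieMap_vector_coroot, neg_neg,
    lieMap_lieMap_vector hy hy.neg hx (by rwa [neg_add_eq_sub, sub_ne_zero])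
      (by rw [add_neg_cancel_left]; exact hx.ne_zero),
    lieMap_lieMap_vector hy.neg hx hy hxy' (by rw [hcancel]; exact hx.ne_zero),
    add_neg_cancel_left, hcancel, map_neg, AddMonoidHom.neg_apply, pairing_comm y x]
  have hs := A.sign_mul_sign x y
  simp only [sign_neg_left, sign_neg_right, hy.sign_self]
  obtain h | h | h : A.pairing x y = -1 ∨ A.pairing x y = 0 ∨ A.pairing x y = 1 := by omega
  · rw [h, Int.negOnePow_neg, Int.negOnePow_one] at hs
    rw [h, if_neg (by decide), if_pos rfl, mul_right_comm, mul_comm (A.sign y x), hs]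
    simp
  · simp [h]
  · rw [h, if_pos rfl, if_neg (by decide), mul_assoc, Int.units_mul_self]
    simp

lemma jacobiator_vector_of_sum_zero {x y z : Q} (hx : A.IsRoot x) (hy : A.IsRoot y)
    (hz : A.IsRoot z) (h : x + y + z = 0) :
    jacobiator (vector R A x) (vector R A y) (vector R A z) = 0 := by
  have hxy : x + y = -z := eq_neg_of_add_eq_zero_left h
  have hyz : y + z = -x := eq_neg_of_add_eq_zero_right (by rwa [← add_assoc])
  have hzx : z + x = -y := eq_neg_of_add_eq_zero_left (by rw [← h]; abel)
  have hp : A.pairing x y = -1 := (hx.add_iff hy).mp (hxy ▸ hz.neg)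
  have hz' : z = -(x + y) := by rw [hxy, neg_neg]
  have h₁ : A.sign y z = A.sign x y := by
    rw [hz', sign_neg_right, sign_add_right, hy.sign_self, sign_comm_of_pairing_eq_neg_one hp,
      mul_neg_one, neg_neg]
  have h₂ : A.sign z x = A.sign x y := by
    rw [hz', sign_neg_left, sign_add_left, hx.sign_self, sign_comm_of_pairing_eq_neg_one hp,
      neg_mul_neg, one_mul]
  have key (s : ℤˣ) : lieMap R A (vector R A x) (s • vector R A (-x)) +
      lieMap R A (vector R A y) (s • vector R A (-y)) +
      lieMap R A (vector R A z) (s • vector R A (-z)) = 0 := by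
    simp only [Units.smul_def, map_zsmul]
    rw [lieMap_vector_vector_neg hx, lieMap_vector_vector_neg hy, lieMap_vector_vector_neg hz,
      hz', coroot_neg, coroot_add]
    module
  rw [jacobiator, lieMap_vector_vector_of_ne hy hz (hyz ▸ hx.neg.ne_zero),
    lieMap_vector_vector_of_ne hz hx (hzx ▸ hy.neg.ne_zero),
    lieMap_vector_vector_of_ne hx hy (hxy ▸ hz.neg.ne_zero), h₁, h₂, hxy, hyz, hzx, key]

lemma jacobiator_vector_of_ne {x y z : Q} (hx : A.IsRoot x) (hy : A.IsRoot y)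
    (hz : A.IsRoot z) (hxy : x + y ≠ 0) (hyz : y + z ≠ 0) (hzx : z + x ≠ 0)
    (h : x + (y + z) ≠ 0) : jacobiator (vector R A x) (vector R A y) (vector R A z) = 0 := by
  have h₁ : y + (z + x) = x + (y + z) := by abel
  have h₂ : z + (x + y) = x + (y + z) := by abel
  rw [jacobiator, lieMap_lieMap_vector hx hy hz hyz h,
    lieMap_lieMap_vector hy hz hx hzx (h₁ ▸ h), lieMap_lieMap_vector hz hx hy hxy (h₂ ▸ h), h₁, h₂]
  by_cases hr : A.IsRoot (x + (y + z))
  swap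
  · simp [vector_of_not_isRoot hr]
  have hsum : A.pairing x y + A.pairing y z + A.pairing z x = -2 := by
    rw [IsRoot, form_add_self, form_add_self, hx, hy, hz, map_add, pairing_comm x z] at hr
    omega
  have hxy' := hx.neg_one_le_pairing hy hxy
  have hyz' := hy.neg_one_le_pairing hz hyz
  have hzx' := hz.neg_one_le_pairing hx hzx
  obtain ⟨h₁, h₂, h₃⟩ | ⟨h₁, h₂, h₃⟩ | ⟨h₁, h₂, h₃⟩ :
      (A.pairing x y = 0 ∧ A.pairing y z = -1 ∧ A.pairing z x = -1) ∨
      (A.pairing x y = -1 ∧ A.pairing y z = 0 ∧ A.pairing z x = -1) ∨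
      (A.pairing x y = -1 ∧ A.pairing y z = -1 ∧ A.pairing z x = 0) := by omega
  · rw [h₁, h₂, h₃, sign_comm_of_pairing_eq_zero h₁, sign_comm_of_pairing_eq_neg_one h₃]
    simp [mul_assoc, mul_comm, mul_left_comm]
  · rw [h₁, h₂, h₃, sign_comm_of_pairing_eq_neg_one h₁, sign_comm_of_pairing_eq_zero h₂]
    simp [mul_assoc, mul_comm]
  · rw [h₁, h₂, h₃, sign_comm_of_pairing_eq_zero h₃, sign_comm_of_pairing_eq_neg_one h₂]
    simp [mul_comm, mul_left_comm]

lemma jacobiator_vector {x y z : Q} (hx : A.IsRoot x) (hy : A.IsRoot y) (hz : A.IsRoot z) :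
    jacobiator (vector R A x) (vector R A y) (vector R A z) = 0 := by
  by_cases hyz : y + z = 0
  · rw [eq_neg_of_add_eq_zero_right hyz]
    exact jacobiator_vector_neg hx hy
  by_cases hzx : z + x = 0
  · rw [eq_neg_of_add_eq_zero_right hzx, jacobiator_rotate]
    exact jacobiator_vector_neg hy hz
  by_cases hxy : x + y = 0
  · rw [eq_neg_of_add_eq_zero_right hxy, ← jacobiator_rotate]
    exact jacobiator_vector_neg hz hx
  by_cases h : x + y + z = 0
  · exact jacobiator_vector_of_sum_zero hx hy hz h
  · exact jacobiator_vector_of_ne hx hy hz hxy hyz hzx (by rwa [← add_assoc])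

lemma jacobiator_toral (t : Q →+ R) (v w : FrenkelKac R A) : jacobiator (toral A t) v w = 0 := by
  rw [jacobiator_rotate, jacobiator_rotate]
  refine jacobiator_eq_zero_of_generators (fun s => ?_) (fun x hx => ?_) v
  · rw [jacobiator_rotate, jacobiator_toral_toral]
  · rw [jacobiator_rotate]
    refine jacobiator_eq_zero_of_generators (fun s => ?_) (fun y hy => ?_) w
    · rw [← jacobiator_rotate, jacobiator_toral_toral]
    · rw [jacobiator_rotate, jacobiator_vector_vector_toral hx hy]

lemma jacobiator_vector_left {x : Q} (hx : A.IsRoot x) (v w : FrenkelKac R A) :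
    jacobiator (vector R A x) v w = 0 := by
  rw [jacobiator_rotate, jacobiator_rotate]
  refine jacobiator_eq_zero_of_generators (fun s => ?_) (fun y hy => ?_) v
  · rw [← jacobiator_rotate, jacobiator_toral]
  · rw [jacobiator_rotate]
    exact jacobiator_eq_zero_of_generators (jacobiator_vector_vector_toral hx hy)
      (fun z hz => jacobiator_vector hx hy hz) w

lemma jacobiator_eq_zero (u v w : FrenkelKac R A) : jacobiator u v w = 0 := by
  rw [jacobiator_rotate]
  refine jacobiator_eq_zero_of_generators (fun t => ?_) (fun x hx => ?_) u <;>
    rw [← jacobiator_rotate]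
  exacts [jacobiator_toral t v w, jacobiator_vector_left hx v w]

noncomputable instance : LieRing (FrenkelKac R A) where
  bracket u v := lieMap R A u v
  add_lie u v w := by
    change lieMap R A _ _ = _
    rw [map_add]
    rfl
  lie_add u v w := map_add _ _ _
  lie_self := lieMap_self
  leibniz_lie u v w := by
    have h := jacobiator_eq_zero u v w
    rw [jacobiator, lieMap_swap w u, lieMap_swap w, map_neg] at h
    change lieMap R A u (lieMap R A v w) = lieMap R A (lieMap R A u v) w +
      lieMap R A v (lieMap R A u w)
    rw [← sub_eq_zero, ← h]
    abel

noncomputable instance : LieAlgebra R (FrenkelKac R A) where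
  lie_smul c u v := map_smul (lieMap R A u) c v

lemma lie_toral_toral (s t : Q →+ R) : ⁅toral A s, toral A t⁆ = 0 := lieMap_toral_toral s t

lemma lie_toral_vector (t : Q →+ R) (x : Q) : ⁅toral A t, vector R A x⁆ = t x • vector R A x :=
  lieMap_toral_vector t x

lemma lie_vector_toral (t : Q →+ R) (x : Q) : ⁅vector R A x, toral A t⁆ = -(t x • vector R A x) :=
  lieMap_vector_toral x t

variable {x y : Q}

lemma lie_vector_vector (hx : A.IsRoot x) (hy : A.IsRoot y) (h : x + y ≠ 0) :
    ⁅vector R A x, vector R A y⁆ = A.sign x y • vector R A (x + y) :=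
  lieMap_vector_vector_of_ne hx hy h

lemma lie_vector_neg (hx : A.IsRoot x) : ⁅vector R A x, vector R A (-x)⁆ = -coroot R A x :=
  lieMap_vector_vector_neg hx

lemma lie_vector_vector_eq_zero (hx : A.IsRoot x) (hy : A.IsRoot y) (h : 0 ≤ A.pairing x y) :
    ⁅vector R A x, vector R A y⁆ = 0 := by
  rw [lie_vector_vector hx hy, vector_of_not_isRoot (hx.not_isRoot_add hy h), smul_zero]
  intro h₀
  rw [eq_neg_of_add_eq_zero_right h₀, map_neg, hx.pairing_self] at h
  omega

lemma lie_coroot_vector (x y : Q) :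
    ⁅coroot R A x, vector R A y⁆ = (A.pairing x y : R) • vector R A y :=
  lie_toral_vector _ y

end FrenkelKac

/-- A positive form on a lattice whose unit vectors are the simple roots of a simply laced root
system. -/
structure SimplyLaced (ι : Type*) [DecidableEq ι] extends PosForm (ι → ℤ) where
  isRoot_single (i : ι) : toPosForm.IsRoot (Pi.single i 1)
  pairing_single_nonpos {i j : ι} (h : i ≠ j) :
    toPosForm.pairing (Pi.single i 1) (Pi.single j 1) ≤ 0

namespace SimplyLaced

open PosForm

variable {ι : Type*} [DecidableEq ι] (S : SimplyLaced ι)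

/-- The Cartan matrix. -/
def cartan : Matrix ι ι ℤ :=
  .of fun i j => S.pairing (Pi.single i 1) (Pi.single j 1)

variable {S} {x y : ι → ℤ} {i j : ι}

lemma single_ne_single (h : i ≠ j) : (Pi.single i 1 : ι → ℤ) ≠ Pi.single j 1 := fun h' =>
  h (by simpa [Pi.single_apply] using congrFun h' i)

lemma single_add_single_ne_zero (i j : ι) : (Pi.single i 1 + Pi.single j 1 : ι → ℤ) ≠ 0 :=
  fun h => by
    have := congrFun h i
    have h' : (0 : ℤ) ≤ Pi.single (M := fun _ => ℤ) j 1 i :=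
      (Pi.single_nonneg.mpr zero_le_one : (0 : ι → ℤ) ≤ Pi.single j 1) i
    simp at this
    omega

lemma cartan_eq_zero_or (h : i ≠ j) : S.cartan i j = 0 ∨ S.cartan i j = -1 := by
  have h₁ : S.cartan i j ≤ 0 := S.pairing_single_nonpos h
  have h₂ : -1 ≤ S.cartan i j := (S.isRoot_single i).neg_one_le_pairing (S.isRoot_single j)
    (single_add_single_ne_zero i j)
  omega

lemma map_single {M : Type*} [AddCommGroup M] (t : (ι → ℤ) →+ M) (i : ι) (k : ℤ) :
    t (Pi.single i k) = k • t (Pi.single i 1) := by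
  rw [← map_zsmul, ← Pi.single_smul, smul_eq_mul, mul_one]

lemma form_single_single (k : ℤ) : S.form (Pi.single i k) (Pi.single i k) = k ^ 2 := by
  have h : S.form (Pi.single i 1) (Pi.single i 1) = 1 := S.isRoot_single i
  rw [map_single S.form, AddMonoidHom.zsmul_apply, map_single, h, smul_eq_mul, smul_eq_mul, mul_one,
    sq]

lemma pairing_single (i : ι) (k : ℤ) (x : ι → ℤ) :
    S.pairing (Pi.single i k) x = k * S.pairing (Pi.single i 1) x := by
  rw [map_single, AddMonoidHom.zsmul_apply, smul_eq_mul]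

lemma pairing_single_right (x : ι → ℤ) (i : ι) (k : ℤ) :
    S.pairing x (Pi.single i k) = k * S.pairing x (Pi.single i 1) := by
  rw [pairing_comm, pairing_single, pairing_comm]

variable (S) in
/-- The simple reflections. -/
def reflection (i : ι) : (ι → ℤ) →+ (ι → ℤ) :=
  AddMonoidHom.id _ - (AddMonoidHom.single _ i).comp (S.pairing (Pi.single i 1))

lemma reflection_apply (i : ι) (x : ι → ℤ) :
    S.reflection i x = x - Pi.single i (S.pairing (Pi.single i 1) x) := rfl

lemma pairing_single_reflection (i : ι) (x : ι → ℤ) :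
    S.pairing (Pi.single i 1) (S.reflection i x) = -S.pairing (Pi.single i 1) x := by
  rw [reflection_apply, map_sub, pairing_single_right, (S.isRoot_single i).pairing_self]
  ring

lemma reflection_reflection (i : ι) (x : ι → ℤ) : S.reflection i (S.reflection i x) = x := by
  rw [reflection_apply, pairing_single_reflection, reflection_apply, Pi.single_neg, sub_neg_eq_add,
    sub_add_cancel]

lemma isRoot_reflection (hx : S.IsRoot x) (i : ι) : S.IsRoot (S.reflection i x) := by
  rw [PosForm.IsRoot, reflection_apply, sub_eq_add_neg, ← Pi.single_neg, form_add_self, hx,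
    form_single_single, pairing_single_right, pairing_comm x]
  ring

section Roots

variable [Fintype ι]

lemma pairing_eq_sum (x y : ι → ℤ) :
    S.pairing x y = ∑ i, x i * S.pairing (Pi.single i 1) y := by
  conv_lhs => rw [← Finset.univ_sum_single x]
  rw [map_sum, AddMonoidHom.finsetSum_apply]
  exact Finset.sum_congr rfl fun i _ => pairing_single i (x i) y

lemma pairing_nonpos (hx : 0 ≤ x) (hy : 0 ≤ y) (h : ∀ i, x i * y i = 0) : S.pairing x y ≤ 0 := by
  rw [pairing_eq_sum]
  refine Finset.sum_nonpos fun i _ => ?_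
  rw [pairing_comm, pairing_eq_sum, Finset.mul_sum]
  refine Finset.sum_nonpos fun j _ => ?_
  rcases eq_or_ne i j with rfl | hij
  · rw [← mul_assoc, h, zero_mul]
  · rw [← mul_assoc]
    exact mul_nonpos_of_nonneg_of_nonpos (mul_nonneg (hx i) (hy j))
      (S.pairing_single_nonpos hij.symm)

variable (S) in
lemma det_cartan_ne_zero : S.cartan.det ≠ 0 := by
  intro h
  obtain ⟨v, hv, h⟩ := Matrix.exists_mulVec_eq_zero_iff.mpr h
  have h₀ (i : ι) : S.pairing (Pi.single i 1) v = 0 := by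
    rw [pairing_comm, pairing_eq_sum, ← Pi.zero_apply (M := fun _ => ℤ) i, ← h]
    refine Finset.sum_congr rfl fun j _ => ?_
    rw [mul_comm, pairing_comm]
    rfl
  have h₁ : S.pairing v v = 0 := by simp [pairing_eq_sum v, h₀]
  have := S.form_self_pos v hv
  rw [pairing_apply] at h₁
  omega

lemma nonneg_or_nonpos (hx : S.IsRoot x) : 0 ≤ x ∨ x ≤ 0 := by
  have hdisj (i : ι) : x⁺ i * x⁻ i = 0 := by
    simp only [Pi.posPart_apply, Pi.negPart_apply]
    rcases le_total 0 (x i) with h | h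
    · rw [negPart_eq_zero.mpr h, mul_zero]
    · rw [posPart_eq_zero.mpr h, zero_mul]
  have hle := S.pairing_nonpos (posPart_nonneg x) (negPart_nonneg x) hdisj
  have hsum : S.form x x = S.form x⁺ x⁺ + S.form x⁻ x⁻ - S.pairing x⁺ x⁻ := by
    have := form_add_self (A := S.toPosForm) x⁺ (-x⁻)
    rw [← sub_eq_add_neg, posPart_sub_negPart] at this
    simpa [sub_eq_add_neg] using this
  by_contra! h
  have h₁ := S.form_self_pos x⁻ (negPart_eq_zero.not.mpr h.1)
  have h₂ := S.form_self_pos x⁺ (posPart_eq_zero.not.mpr h.2)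
  rw [hx] at hsum
  omega

lemma exists_pairing_eq_one (hx : S.IsRoot x) (hpos : 0 ≤ x) (hne : ∀ i, x ≠ Pi.single i 1) :
    ∃ i, 0 < x i ∧ S.pairing x (Pi.single i 1) = 1 := by
  have h := hx.pairing_self
  rw [pairing_eq_sum] at h
  obtain ⟨i, -, hi⟩ := Finset.exists_lt_of_sum_lt
    (show ∑ _ : ι, (0 : ℤ) < ∑ i, x i * S.pairing (Pi.single i 1) x by simp [h])
  rw [pairing_comm] at hi
  refine ⟨i, (hpos i).lt_of_ne fun h => ?_, ?_⟩
  · rw [← h, Pi.zero_apply, zero_mul] at hi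
    exact lt_irrefl _ hi
  · have := hx.pairing_le_one (S.isRoot_single i) (hne i)
    have := pos_of_mul_pos_right hi (hpos i)
    omega

/-- Every positive root is reached from the simple roots by adding one simple root at a time. -/
lemma root_induction {p : (ι → ℤ) → Prop} (single : ∀ i, p (Pi.single i 1))
    (add : ∀ x i, S.IsRoot x → 0 ≤ x → S.pairing x (Pi.single i 1) = -1 → p x →
      p (x + Pi.single i 1)) (hx : S.IsRoot x) (hpos : 0 ≤ x) : p x := by
  induction hn : (∑ i, x i).toNat using Nat.strong_induction_on generalizing x with
  | _ n ih =>
    by_cases hsimple : ∃ i, x = Pi.single i 1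
    · obtain ⟨i, rfl⟩ := hsimple
      exact single i
    push Not at hsimple
    obtain ⟨i, hi, h⟩ := exists_pairing_eq_one hx hpos hsimple
    have hpair : S.pairing (x - Pi.single i 1) (Pi.single i 1) = -1 := by
      rw [map_sub, AddMonoidHom.sub_apply, h, (S.isRoot_single i).pairing_self]
      rfl
    have hroot : S.IsRoot (x - Pi.single i 1) := by
      rw [sub_eq_add_neg, hx.add_iff (S.isRoot_single i).neg, map_neg, h]
    have hpos' : 0 ≤ x - Pi.single i 1 := fun j => by
      rcases eq_or_ne j i with rfl | hj
      · simpa using Int.add_one_le_of_lt hi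
      · simpa [hj] using hpos j
    have hsum : ∑ j, (x - Pi.single i 1 : ι → ℤ) j = ∑ j, x j - 1 := by
      simp [Finset.sum_sub_distrib]
    have hnonneg : 0 ≤ ∑ j, (x - Pi.single i 1 : ι → ℤ) j := Finset.sum_nonneg fun j _ => hpos' j
    rw [← sub_add_cancel x (Pi.single i 1)]
    refine add _ i hroot hpos' hpair (ih _ ?_ hroot hpos' rfl)
    omega

lemma reflection_nonneg (hx : S.IsRoot x) (hpos : 0 ≤ x) (hne : x ≠ Pi.single i 1) :
    0 ≤ S.reflection i x := by
  refine (nonneg_or_nonpos (isRoot_reflection hx i)).resolve_right fun h => hne ?_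
  have hsingle : x = Pi.single i (x i) := by
    ext j
    rcases eq_or_ne j i with rfl | hj
    · simp
    · have := h j
      have := hpos j
      simp_all [reflection_apply]
      omega
  have hsq : x i ^ 2 = 1 := by rw [← form_single_single (S := S), ← hsingle]; exact hx
  rw [hsingle, (pow_eq_one_iff_of_nonneg (hpos i) two_ne_zero).mp hsq]

end Roots

end SimplyLaced

section Serre

open CartanMatrix

variable {R B L : Type*} [CommRing R] [DecidableEq B] [LieRing L] [LieAlgebra R L]

/-- Families satisfying the Serre relations of a Cartan matrix. -/
structure IsSerreFamily (R : Type*) {B L : Type*} [CommRing R] [LieRing L] [LieAlgebra R L]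
    (A : Matrix B B ℤ) (H E F : B → L) : Prop where
  lie_H_H (i j : B) : ⁅H i, H j⁆ = 0
  lie_E_F_self (i : B) : ⁅E i, F i⁆ = H i
  lie_E_F_of_ne {i j : B} (h : i ≠ j) : ⁅E i, F j⁆ = 0
  lie_H_E (i j : B) : ⁅H i, E j⁆ = A i j • E j
  lie_H_F (i j : B) : ⁅H i, F j⁆ = -(A i j • F j)
  ad_E_pow (i j : B) : (LieAlgebra.ad R L (E i) ^ (-A i j).toNat) ⁅E i, E j⁆ = 0
  ad_F_pow (i j : B) : (LieAlgebra.ad R L (F i) ^ (-A i j).toNat) ⁅F i, F j⁆ = 0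

lemma map_ad_pow_apply {L' : Type*} [LieRing L'] [LieAlgebra R L'] (g : L →ₗ⁅R⁆ L')
    (x y : L) (n : ℕ) :
    g ((LieAlgebra.ad R L x ^ n) y) = (LieAlgebra.ad R L' (g x) ^ n) (g y) := by
  induction n with
  | zero => rfl
  | succ n ih => rw [pow_succ', pow_succ', Module.End.mul_apply, Module.End.mul_apply, ← ih]; simp

variable {A : Matrix B B ℤ} {H E F : B → L}

/-- The images of the Serre generators. -/
def serreGenerator (H E F : B → L) : Generators B → L
  | .H i => H i
  | .E i => E i
  | .F i => F i

lemma IsSerreFamily.lift_eq_zero (h : IsSerreFamily R A H E F)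
    {x : FreeLieAlgebra R (Generators B)} (hx : x ∈ Relations.toSet R A) :
    FreeLieAlgebra.lift R (serreGenerator H E F) x = 0 := by
  rcases hx with ((((⟨⟨i, j⟩, rfl⟩ | ⟨⟨i, j⟩, rfl⟩) | ⟨⟨i, j⟩, rfl⟩) | ⟨⟨i, j⟩, rfl⟩) |
    ⟨⟨i, j⟩, rfl⟩) | ⟨⟨i, j⟩, rfl⟩
  · simp [Relations.HH, FreeLieAlgebra.lift_of_apply, serreGenerator, h.lie_H_H]
  · by_cases hij : i = j
    · simp [Relations.EF, hij, FreeLieAlgebra.lift_of_apply, serreGenerator, h.lie_E_F_self]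
    · simp [Relations.EF, hij, FreeLieAlgebra.lift_of_apply, serreGenerator, h.lie_E_F_of_ne hij]
  · simp [Relations.HE, FreeLieAlgebra.lift_of_apply, serreGenerator, h.lie_H_E]
  · simp [Relations.HF, FreeLieAlgebra.lift_of_apply, serreGenerator, h.lie_H_F]
  · simpa [Relations.adE, map_ad_pow_apply, FreeLieAlgebra.lift_of_apply, serreGenerator]
      using h.ad_E_pow i j
  · simpa [Relations.adF, map_ad_pow_apply, FreeLieAlgebra.lift_of_apply, serreGenerator]
      using h.ad_F_pow i j

lemma IsSerreFamily.exists_lieHom (h : IsSerreFamily R A H E F) :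
    ∃ g : A.ToLieAlgebra R →ₗ⁅R⁆ L, ∀ i, E i ∈ g.range ∧ F i ∈ g.range := by
  let g := FreeLieAlgebra.lift R (serreGenerator H E F)
  have hI : Relations.toIdeal R A ≤ g.ker :=
    LieSubmodule.lieSpan_le.mpr fun x hx => g.mem_ker.mpr (h.lift_eq_zero hx)
  let q : A.ToLieAlgebra R →ₗ[R] L :=
    (Relations.toIdeal R A).toSubmodule.liftQ (g : _ →ₗ[R] L)
      fun x hx => LinearMap.mem_ker.mpr (g.mem_ker.mp (hI hx))
  let q' : A.ToLieAlgebra R →ₗ⁅R⁆ L :=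
    { q with
      map_lie' := fun {x y} => by
        obtain ⟨x, rfl⟩ := Quot.exists_rep x
        obtain ⟨y, rfl⟩ := Quot.exists_rep y
        exact g.map_lie x y }
  have hmem (a : Generators B) : serreGenerator H E F a ∈ q'.range :=
    ⟨LieSubmodule.Quotient.mk (FreeLieAlgebra.of R a), FreeLieAlgebra.lift_of_apply _ a⟩
  exact ⟨q', fun i => ⟨hmem (.E i), hmem (.F i)⟩⟩

end Serre

namespace FrenkelKac

open PosForm

variable {R : Type*} [CommRing R]

section

variable {Q : Type*} [AddCommGroup Q] {A : PosForm Q} {x y : Q}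

lemma ad_vector_pow_lie_vector (hx : A.IsRoot x) (hy : A.IsRoot y) (h : x + y ≠ 0) :
    (LieAlgebra.ad R (FrenkelKac R A) (vector R A x) ^ (-A.pairing x y).toNat)
      ⁅vector R A x, vector R A y⁆ = 0 := by
  rcases le_or_gt 0 (A.pairing x y) with hp | hp
  · rw [lie_vector_vector_eq_zero hx hy hp, map_zero]
  have hp' : A.pairing x y = -1 := by
    have := hx.neg_one_le_pairing hy h
    omega
  rw [hp', lie_vector_vector hx hy h, show (- -1 : ℤ).toNat = 1 from rfl, pow_one,
    Units.smul_def, map_zsmul, LieAlgebra.ad_apply,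
    lie_vector_vector_eq_zero hx ((hx.add_iff hy).mpr hp'), smul_zero]
  rw [map_add, hx.pairing_self, hp']
  decide

end

variable {ι : Type*} [DecidableEq ι] {S : SimplyLaced ι}

open SimplyLaced

lemma lie_coroot_coroot (x y : ι → ℤ) :
    ⁅coroot R S.toPosForm x, coroot R S.toPosForm y⁆ = 0 :=
  lie_toral_toral _ _

lemma isSerreFamily : IsSerreFamily R S.cartan (fun i => coroot R S.toPosForm (Pi.single i 1))
    (fun i => vector R S.toPosForm (Pi.single i 1))
    (fun i => -vector R S.toPosForm (-Pi.single i 1)) where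
  lie_H_H i j := lie_coroot_coroot _ _
  lie_E_F_self i := by rw [lie_neg, lie_vector_neg (S.isRoot_single i), neg_neg]
  lie_E_F_of_ne {i j} h := by
    rw [lie_neg, lie_vector_vector_eq_zero (S.isRoot_single i) (S.isRoot_single j).neg, neg_zero]
    rw [map_neg]
    exact neg_nonneg.mpr (S.pairing_single_nonpos h)
  lie_H_E i j := by rw [lie_coroot_vector, Int.cast_smul_eq_zsmul]; rfl
  lie_H_F i j := by
    rw [lie_neg, lie_coroot_vector, map_neg, Int.cast_smul_eq_zsmul, neg_smul, smul_neg]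
    rfl
  ad_E_pow i j := ad_vector_pow_lie_vector (S.isRoot_single i) (S.isRoot_single j)
    (single_add_single_ne_zero i j)
  ad_F_pow i j := by
    have h := ad_vector_pow_lie_vector (R := R) (S.isRoot_single i).neg (S.isRoot_single j).neg
      (by rw [← neg_add, neg_ne_zero]; exact single_add_single_ne_zero i j)
    rw [map_neg, map_neg, AddMonoidHom.neg_apply, neg_neg] at h
    rw [neg_lie, lie_neg, neg_neg, map_neg, neg_pow, Module.End.mul_apply]
    exact (congrArg _ h).trans (map_zero _)

section Field

variable {K : Type*} [Field K] [Fintype ι]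

lemma addMonoidHom_ext_single {M : Type*} [AddCommGroup M] {s t : (ι → ℤ) →+ M}
    (h : ∀ i, s (Pi.single i 1) = t (Pi.single i 1)) : s = t :=
  AddMonoidHom.functions_ext _ _ _ fun i k => by
    rw [map_single s, map_single t, h]

lemma exists_toral_eq_sum [CharZero K] (t : (ι → ℤ) →+ K) :
    ∃ c : ι → K, toral S.toPosForm t = ∑ i, c i • coroot K S.toPosForm (Pi.single i 1) := by
  let M : Matrix ι ι K := (Int.castRingHom K).mapMatrix S.cartan
  have hdet : IsUnit M.det := by
    rw [← RingHom.map_det, isUnit_iff_ne_zero]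
    exact Int.cast_ne_zero.mpr S.det_cartan_ne_zero
  refine ⟨Matrix.vecMul (fun j => t (Pi.single j 1)) M⁻¹, ?_⟩
  simp only [coroot, ← map_smul, ← map_sum]
  congr 1
  refine addMonoidHom_ext_single fun j => ?_
  have h : Matrix.vecMul (Matrix.vecMul (fun j => t (Pi.single j 1)) M⁻¹) M =
      fun j => t (Pi.single j 1) := by
    rw [Matrix.vecMul_vecMul, Matrix.nonsing_inv_mul _ hdet, Matrix.vecMul_one]
  rw [AddMonoidHom.finsetSum_apply]
  exact (congrFun h j).symm

lemma vector_mem_of_forall_single {N : LieSubalgebra K (FrenkelKac K S.toPosForm)}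
    (h : ∀ i, vector K S.toPosForm (Pi.single i 1) ∈ N ∧ vector K S.toPosForm (-Pi.single i 1) ∈ N)
    {x : ι → ℤ} (hx : S.IsRoot x) : vector K S.toPosForm x ∈ N := by
  have key {x : ι → ℤ} (hx : S.IsRoot x) (hpos : 0 ≤ x) :
      vector K S.toPosForm x ∈ N ∧ vector K S.toPosForm (-x) ∈ N := by
    refine root_induction (p := fun x => vector K S.toPosForm x ∈ N ∧ vector K S.toPosForm (-x) ∈ N)
      h (fun x i hx _ hp ih => ?_) hx hpos
    have add_mem {y z : ι → ℤ} (hy : S.IsRoot y) (hz : S.IsRoot z) (hyz : S.pairing y z = -1)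
        (hy' : vector K S.toPosForm y ∈ N) (hz' : vector K S.toPosForm z ∈ N) :
        vector K S.toPosForm (y + z) ∈ N := by
      have := N.lie_mem hy' hz'
      rw [lie_vector_vector hy hz ((hy.add_iff hz).mpr hyz).ne_zero] at this
      rcases Int.units_eq_one_or (S.sign y z) with h | h <;> simpa [h] using this
    refine ⟨add_mem hx (S.isRoot_single i) hp ih.1 (h i).1, ?_⟩
    rw [neg_add]
    exact add_mem hx.neg (S.isRoot_single i).neg (by simpa using hp) ih.2 (h i).2
  rcases nonneg_or_nonpos hx with hpos | hneg
  · exact (key hx hpos).1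
  · rw [← neg_neg x]
    exact (key hx.neg (neg_nonneg.mpr hneg)).2

lemma eq_top_of_forall_single [CharZero K] {N : LieSubalgebra K (FrenkelKac K S.toPosForm)}
    (h : ∀ i, vector K S.toPosForm (Pi.single i 1) ∈ N ∧
      vector K S.toPosForm (-Pi.single i 1) ∈ N) : N = ⊤ := by
  refine eq_top_iff.mpr fun u _ => ?_
  induction u using induction_on with
  | toral t =>
    obtain ⟨c, hc⟩ := exists_toral_eq_sum t
    rw [hc]
    refine sum_mem fun i _ => N.smul_mem _ ?_
    rw [← neg_neg (coroot K S.toPosForm _), ← lie_vector_neg (S.isRoot_single i)]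
    exact N.neg_mem (N.lie_mem (h i).1 (h i).2)
  | vector x hx => exact vector_mem_of_forall_single h hx
  | add u v hu hv => exact N.add_mem (hu trivial) (hv trivial)
  | smul c u hu => exact N.smul_mem c (hu trivial)

/-- Serre's theorem for a simple algebra: the map from the Serre presentation is onto, and its
kernel is a proper ideal. -/
lemma exists_lieEquiv [CharZero K] {L : Type*} [LieRing L] [LieAlgebra K L]
    [LieAlgebra.IsSimple K L] [Nonempty ι] (ψ : L ≃ₗ⁅K⁆ S.cartan.ToLieAlgebra K) :
    Nonempty (L ≃ₗ⁅K⁆ FrenkelKac K S.toPosForm) := by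
  obtain ⟨g, hg⟩ := (isSerreFamily (R := K) (S := S)).exists_lieHom
  have hsurj : Function.Surjective (g.comp ψ.toLieHom) := by
    have : g.range = ⊤ := eq_top_of_forall_single fun i =>
      ⟨(hg i).1, by simpa using g.range.neg_mem (hg i).2⟩
    exact ((LieHom.range_eq_top g).mp this).comp ψ.surjective
  refine ⟨LieEquiv.ofBijective (g.comp ψ.toLieHom) ⟨(LieHom.ker_eq_bot _).mp ?_, hsurj⟩⟩
  refine (LieAlgebra.IsSimple.eq_bot_or_eq_top _).resolve_right fun h => ?_
  obtain ⟨i⟩ := ‹Nonempty ι›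
  obtain ⟨u, hu⟩ := hsurj (vector K S.toPosForm (Pi.single i 1))
  refine vector_ne_zero (S.isRoot_single i) (hu.symm.trans (LieHom.mem_ker.mp ?_))
  rw [h]
  trivial

end Field

end FrenkelKac

namespace FrenkelKac

open PosForm SimplyLaced

section Basis

variable {R : Type*} [CommRing R] {ι : Type*} [Fintype ι]

/-- The additive map on the root lattice with given values at the simple roots. -/
noncomputable def ofLabels : (ι → R) ≃ₗ[R] ((ι → ℤ) →+ R) :=
  ((Pi.basisFun ℤ ι).constr R).trans (addMonoidHomLequivInt R).symm

lemma ofLabels_single [DecidableEq ι] (c : ι → R) (i : ι) : ofLabels c (Pi.single i 1) = c i := by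
  rw [← Pi.basisFun_apply ℤ]
  exact (Pi.basisFun ℤ ι).constr_basis R c i

lemma ofLabels_apply (c : ι → R) (x : ι → ℤ) : ofLabels c x = ∑ i, x i • c i :=
  (Pi.basisFun ℤ ι).constr_apply_fintype R c x

variable [DecidableEq ι] {S : SimplyLaced ι}

lemma apply_eq_sum (t : (ι → ℤ) →+ R) (x : ι → ℤ) : t x = ∑ i, x i • t (Pi.single i 1) := by
  obtain ⟨c, rfl⟩ := ofLabels.surjective t
  simp only [ofLabels_apply c x, ofLabels_single]

variable (R S) in
/-- The basis of fundamental coweights and root vectors. -/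
noncomputable def basis :
    Module.Basis (ι ⊕ {x // S.IsRoot x}) R (FrenkelKac R S.toPosForm) :=
  ((Module.Basis.ofEquivFun ofLabels.symm).prod Finsupp.basisSingleOne :
    Module.Basis _ R (((ι → ℤ) →+ R) × ({x // S.IsRoot x} →₀ R)))

lemma basis_inl (i : ι) : basis R S (.inl i) = toral S.toPosForm (ofLabels (Pi.single i 1)) := by
  refine (Module.Basis.prod_apply ..).trans ?_
  simp
  rfl

lemma basis_inr (x : {x // S.IsRoot x}) : basis R S (.inr x) = vector R S.toPosForm x := by
  refine (Module.Basis.prod_apply ..).trans ?_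
  rw [vector, dif_pos x.2]
  simp
  rfl

lemma lie_toral_basis (t : (ι → ℤ) →+ R) (k : ι ⊕ {x // S.IsRoot x}) :
    ⁅toral S.toPosForm t, basis R S k⁆ =
      (Sum.elim (0 : ι → R) (fun x : {x // S.IsRoot x} => t x) k : R) • basis R S k := by
  rcases k with i | x
  · rw [basis_inl, lie_toral_toral, Sum.elim_inl, Pi.zero_apply, zero_smul]
  · rw [basis_inr, lie_toral_vector, Sum.elim_inr]

end Basis

section Field

variable {K : Type*} [Field K] {ι : Type*} [DecidableEq ι] [Fintype ι] {S : SimplyLaced ι}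

variable (K S) in
lemma finite_roots [FiniteDimensional K (FrenkelKac K S.toPosForm)] :
    Finite {x // S.IsRoot x} :=
  have := Module.Finite.finite_basis (basis K S)
  Finite.of_injective _ (Sum.inr_injective (α := ι))

lemma isSemisimple_ad_toral [FiniteDimensional K (FrenkelKac K S.toPosForm)] (t : (ι → ℤ) →+ K) :
    (LieAlgebra.ad K (FrenkelKac K S.toPosForm) (toral S.toPosForm t)).IsSemisimple :=
  have := finite_roots K S
  isSemisimple_of_eigenbasis (b := basis K S) (lie_toral_basis t)

variable {n : (ι → ℤ) →+ ℤ} {e : FrenkelKac K S.toPosForm}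

variable (K S n) in
/-- The element `s` of the torus with `α(s) = n(α)` for every root `α`. -/
noncomputable def grading : FrenkelKac K S.toPosForm :=
  toral S.toPosForm ((Int.castAddHom K).comp n)

lemma lie_grading_basis (k : ι ⊕ {x // S.IsRoot x}) :
    ⁅grading K S n, basis K S k⁆ =
      ((Sum.elim (0 : ι → ℤ) (fun x : {x // S.IsRoot x} => n x) k : ℤ) : K) • basis K S k := by
  rw [grading, lie_toral_basis]
  rcases k with i | x <;> simp

lemma finrank_ker_ad_eq_card_add_ncard [CharZero K]
    [FiniteDimensional K (FrenkelKac K S.toPosForm)]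
    [LieAlgebra.IsKilling K (FrenkelKac K S.toPosForm)] (he : ⁅grading K S n, e⁆ = (2 : K) • e)
    (hker : LinearMap.ker (LieAlgebra.ad K _ e) ≤
      weightsFrom (basis K S) (Sum.elim 0 fun x => n x) 0) :
    Module.finrank K (LinearMap.ker (LieAlgebra.ad K _ e)) =
      Fintype.card ι + {x | S.IsRoot x ∧ (n x = 0 ∨ n x = 1)}.ncard := by
  classical
  have := finite_roots K S
  have := Fintype.ofFinite {x // S.IsRoot x}
  have himage : {x | S.IsRoot x ∧ (n x = 0 ∨ n x = 1)} =
      Subtype.val '' {x : {x // S.IsRoot x} | n x = 0 ∨ n x = 1} := by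
    ext x; simp [and_comm]
  rw [finrank_ker_ad_eq_card (b := basis K S) lie_grading_basis he hker, himage,
    Set.ncard_image_of_injective _ Subtype.val_injective, Set.ncard_eq_toFinset_card',
    Set.toFinset_ofPred, Finset.card_filter, Fintype.sum_sum_type]
  simp only [Sum.elim_inl, Sum.elim_inr, Pi.zero_apply, true_or, if_true, Finset.card_filter,
    Finset.sum_const, Finset.card_univ, smul_eq_mul, mul_one]
  congr!

end Field

end FrenkelKac

/-! ### Labels of nilpotent elements -/

lemma exists_lieEquiv_reflection {L : Type*} [LieRing L] [LieAlgebra ℂ L] [FiniteDimensional ℂ L]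
    {s E F K : L} {c : ℂ} (hE : ⁅s, E⁆ = c • E) (hF : ⁅s, F⁆ = -c • F) (hEF : ⁅E, F⁆ = K)
    (hKE : ⁅K, E⁆ = (2 : ℂ) • E) (hKF : ⁅K, F⁆ = (-2 : ℂ) • F) :
    ∃ σ : L ≃ₗ⁅ℂ⁆ L, σ s = s - c • K := by
  obtain ⟨σ, -, hσ⟩ := exists_lieEquiv_exp E
  obtain ⟨τ, -, hτ⟩ := exists_lieEquiv_exp (-F)
  have hEs : ⁅E, s⁆ = -c • E := by rw [← lie_skew, hE, neg_smul]
  have hFs : ⁅F, s⁆ = c • F := by rw [← lie_skew, hF, neg_smul, neg_neg]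
  have hFE : ⁅F, E⁆ = -K := by rw [← lie_skew, hEF]
  have hEK : ⁅E, K⁆ = (-2 : ℂ) • E := by rw [← lie_skew, hKE, neg_smul]
  have hFK : ⁅F, K⁆ = (2 : ℂ) • F := by rw [← lie_skew, hKF, neg_smul, neg_neg]
  have h₁ : σ s = s - c • E := by
    rw [hσ s (by simp [hEs]), hEs]
    simp [sub_eq_add_neg]
  have h₂ : σ E = E := by
    rw [hσ E (by simp)]
    simp
  have h₃ : σ K = K - (2 : ℂ) • E := by
    rw [hσ K (by simp [hEK]), hEK]
    simp [sub_eq_add_neg]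
  have h₄ : τ s = s - c • F := by
    rw [hτ s (by simp [hFs])]
    simp [hFs, sub_eq_add_neg]
  have h₅ : τ E = E + K - F := by
    rw [hτ E (by simp [hFE, hFK])]
    simp only [neg_lie, hFE, hFK, neg_neg]
    module
  refine ⟨(σ.trans τ).trans σ, ?_⟩
  have h₆ : τ (s - c • E) = s - c • E - c • K := by
    rw [map_sub, map_smul, h₄, h₅]
    module
  change σ (τ (σ s)) = _
  rw [h₁, h₆, map_sub, map_sub, map_smul, map_smul, h₁, h₂, h₃]
  module

namespace FrenkelKac

open PosForm SimplyLaced LieAlgebra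

lemma range_toral_sup_range_ad {K Q : Type*} [Field K] [AddCommGroup Q] {A : PosForm Q}
    {t : Q →+ K} (ht : ∀ x, A.IsRoot x → t x ≠ 0) :
    LinearMap.range (toral A) ⊔ (ad K (FrenkelKac K A) (toral A t)).range = ⊤ := by
  refine Submodule.eq_top_iff'.mpr fun u => ?_
  induction u using induction_on with
  | toral t => exact Submodule.mem_sup_left ⟨t, rfl⟩
  | vector x hx =>
    refine Submodule.mem_sup_right ⟨(t x)⁻¹ • vector K A x, ?_⟩
    rw [map_smul, ad_apply, lie_toral_vector, smul_smul, inv_mul_cancel₀ (ht x hx), one_smul]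
  | add u v hu hv => exact add_mem hu hv
  | smul c u hu => exact Submodule.smul_mem _ c hu

variable {ι : Type*} [DecidableEq ι] [Fintype ι] {S : SimplyLaced ι}

lemma ofLabels_one_ne_zero {x : ι → ℤ} (hx : S.IsRoot x) : ofLabels (1 : ι → ℂ) x ≠ 0 := by
  have hsum : ∑ i, x i ≠ 0 := fun h => hx.ne_zero <| funext fun i => by
    rcases nonneg_or_nonpos hx with h' | h'
    · exact (Finset.sum_eq_zero_iff_of_nonneg fun i _ => h' i).mp h i (Finset.mem_univ i)
    · exact (Finset.sum_eq_zero_iff_of_nonpos fun i _ => h' i).mp h i (Finset.mem_univ i)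
  simpa [ofLabels_apply] using (mod_cast hsum : ((∑ i, x i : ℤ) : ℂ) ≠ 0)

lemma ncard_negative_reflection_lt {n : (ι → ℤ) →+ ℤ} (h : {x | S.IsRoot x}.Finite)
    {i : ι} (hi : n (Pi.single i 1) < 0) :
    {x | S.IsRoot x ∧ 0 ≤ x ∧ n (S.reflection i x) < 0}.ncard <
      {x | S.IsRoot x ∧ 0 ≤ x ∧ n x < 0}.ncard := by
  have hrefl : S.reflection i (Pi.single i 1) = -Pi.single i 1 := by
    rw [reflection_apply, (S.isRoot_single i).pairing_self, ← one_add_one_eq_two, Pi.single_add,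
      sub_add_cancel_left]
  have hmem : Pi.single i 1 ∈ {x | S.IsRoot x ∧ 0 ≤ x ∧ n x < 0} :=
    ⟨S.isRoot_single i, Pi.single_nonneg.mpr zero_le_one, hi⟩
  refine lt_of_le_of_lt ?_ (Set.ncard_lt_ncard (s := _ \ {_}) (Set.sdiff_singleton_ssubset.mpr hmem)
    (h.subset fun x hx => hx.1))
  refine Set.ncard_le_ncard_of_injOn (S.reflection i) ?_
    (Function.LeftInverse.injective (reflection_reflection i)).injOn
    (h.subset fun x hx => hx.1.1)
  rintro x ⟨hx, hpos, hneg⟩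
  have hne : x ≠ Pi.single i 1 := by
    rintro rfl
    rw [hrefl, map_neg] at hneg
    omega
  refine ⟨⟨isRoot_reflection hx i, reflection_nonneg hx hpos hne, hneg⟩, fun h' => ?_⟩
  rw [Set.mem_singleton_iff] at h'
  have : x = -Pi.single i 1 := by rw [← hrefl, ← h', reflection_reflection]
  simpa [this] using hpos i

variable [FiniteDimensional ℂ (FrenkelKac ℂ S.toPosForm)]

lemma exists_lieEquiv_eq_toral {s : FrenkelKac ℂ S.toPosForm} (hs : (ad ℂ _ s).IsSemisimple) :
    ∃ (σ : FrenkelKac ℂ S.toPosForm ≃ₗ⁅ℂ⁆ FrenkelKac ℂ S.toPosForm) (t : (ι → ℤ) →+ ℂ),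
      σ s = toral S.toPosForm t := by
  obtain ⟨σ, t, h⟩ := exists_lieEquiv_mem hs (H := LinearMap.range (toral S.toPosForm))
    (by rintro - ⟨t, rfl⟩ - ⟨t', rfl⟩; exact lie_toral_toral t t')
    ⟨ofLabels 1, rfl⟩ (range_toral_sup_range_ad fun _ => ofLabels_one_ne_zero)
  exact ⟨σ, t, h.symm⟩

lemma exists_lieEquiv_toral_reflection (t : (ι → ℤ) →+ ℂ) (i : ι) :
    ∃ σ : FrenkelKac ℂ S.toPosForm ≃ₗ⁅ℂ⁆ FrenkelKac ℂ S.toPosForm,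
      σ (toral S.toPosForm t) = toral S.toPosForm (t.comp (S.reflection i)) := by
  have hi := S.isRoot_single i
  obtain ⟨σ, hσ⟩ := exists_lieEquiv_reflection (s := toral S.toPosForm t)
    (E := vector ℂ S.toPosForm (Pi.single i 1)) (F := -vector ℂ S.toPosForm (-Pi.single i 1))
    (K := coroot ℂ S.toPosForm (Pi.single i 1)) (c := t (Pi.single i 1))
    (lie_toral_vector ..) (by simp [lie_toral_vector]) (by rw [lie_neg, lie_vector_neg hi, neg_neg])
    (by rw [lie_coroot_vector, hi.pairing_self]; simp)
    (by rw [lie_neg, lie_coroot_vector, map_neg, hi.pairing_self]; simp)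
  refine ⟨σ, ?_⟩
  rw [hσ, coroot, ← map_smul, ← map_sub]
  congr 1
  refine addMonoidHom_ext_single fun j => ?_
  rw [AddMonoidHom.comp_apply, reflection_apply, map_sub, map_single t i (S.pairing _ _)]
  simp [mul_comm]

lemma exists_lieEquiv_grading_dominant (n : (ι → ℤ) →+ ℤ) :
    ∃ (σ : FrenkelKac ℂ S.toPosForm ≃ₗ⁅ℂ⁆ FrenkelKac ℂ S.toPosForm) (m : (ι → ℤ) →+ ℤ),
      σ (grading ℂ S n) = grading ℂ S m ∧ ∀ i, 0 ≤ m (Pi.single i 1) := by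
  have hfin : {x | S.IsRoot x}.Finite :=
    Set.finite_coe_iff.mp (finite_roots ℂ S)
  induction h : {x | S.IsRoot x ∧ 0 ≤ x ∧ n x < 0}.ncard using Nat.strong_induction_on
    generalizing n with
  | _ k ih =>
    by_cases hn : ∀ i, 0 ≤ n (Pi.single i 1)
    · exact ⟨LieEquiv.refl, n, rfl, hn⟩
    · push Not at hn
      obtain ⟨i, hi⟩ := hn
      obtain ⟨σ, hσ⟩ := exists_lieEquiv_toral_reflection (S := S) ((Int.castAddHom ℂ).comp n) i
      obtain ⟨τ, m, hτ, hm⟩ := ih _ (h ▸ ncard_negative_reflection_lt hfin hi)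
        (n.comp (S.reflection i)) rfl
      exact ⟨σ.trans τ, m, (congrArg τ hσ).trans hτ, hm⟩

lemma exists_lieEquiv_eq_grading {s : FrenkelKac ℂ S.toPosForm} (hs : (ad ℂ _ s).IsSemisimple)
    (hint : ∀ (x : FrenkelKac ℂ S.toPosForm) (μ : ℂ), x ≠ 0 → ⁅s, x⁆ = μ • x → ∃ k : ℤ, μ = k) :
    ∃ (σ : FrenkelKac ℂ S.toPosForm ≃ₗ⁅ℂ⁆ FrenkelKac ℂ S.toPosForm) (n : (ι → ℤ) →+ ℤ),
      σ s = grading ℂ S n ∧ ∀ i, 0 ≤ n (Pi.single i 1) := by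
  obtain ⟨σ, t, hσ⟩ := exists_lieEquiv_eq_toral hs
  have hlabel (i : ι) : ∃ k : ℤ, t (Pi.single i 1) = k := by
    refine hint (σ.symm (vector ℂ S.toPosForm (Pi.single i 1))) _ ?_ ?_
    · simpa using vector_ne_zero (S.isRoot_single i)
    · apply σ.injective
      change σ _ = σ _
      rw [σ.map_lie, hσ, map_smul, σ.apply_symm_apply, lie_toral_vector]
  choose a ha using hlabel
  have ht : toral S.toPosForm t = grading ℂ S (ofLabels a) := by
    refine congrArg _ (addMonoidHom_ext_single fun i => ?_)
    simp [ha, ofLabels_single]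
  obtain ⟨τ, n, hτ, hn⟩ := exists_lieEquiv_grading_dominant (S := S) (ofLabels a)
  exact ⟨σ.trans τ, n, (congrArg τ (hσ.trans ht)).trans hτ, hn⟩

end FrenkelKac

namespace SimplyLaced

open PosForm FrenkelKac

variable {ι : Type*} [DecidableEq ι] [Fintype ι] {S : SimplyLaced ι} {n : (ι → ℤ) →+ ℤ}
  {x : ι → ℤ} {i j k : ι}

lemma nonneg_of_label_pos (hn : ∀ j, 0 ≤ n (Pi.single j 1)) (hx : S.IsRoot x) (h : 0 < n x) :
    0 ≤ x := by
  refine (nonneg_or_nonpos hx).resolve_right fun hneg => h.not_ge ?_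
  rw [apply_eq_sum n]
  exact Finset.sum_nonpos fun j _ => mul_nonpos_of_nonpos_of_nonneg (hneg j) (hn j)

lemma label_mul_le (hn : ∀ j, 0 ≤ n (Pi.single j 1)) (hx : 0 ≤ x) (i : ι) :
    x i * n (Pi.single i 1) ≤ n x := by
  rw [apply_eq_sum n x]
  exact Finset.single_le_sum (f := fun j => x j • n (Pi.single j 1))
    (fun j _ => mul_nonneg (hx j) (hn j)) (Finset.mem_univ i)

lemma label_le_two (hn : ∀ j, 0 ≤ n (Pi.single j 1))
    (hdist : ∀ m : (ι → ℤ) →+ ℤ, (∀ x, S.IsRoot x → n x = 2 → m x = 0) → m = 0) (i : ι) :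
    n (Pi.single i 1) ≤ 2 := by
  by_contra! hi
  have h := hdist (Pi.evalAddMonoidHom _ i) fun x hx hnx => by
    have hpos := nonneg_of_label_pos hn hx (by omega)
    have hle := label_mul_le hn hpos i
    have : 0 ≤ x i := hpos i
    change x i = 0
    nlinarith
  simpa using DFunLike.congr_fun h (Pi.single i 1)

lemma sum_eq_of_labels (hij : i ≠ j) (hi : n (Pi.single i 1) = 1) (hj : n (Pi.single j 1) = 1)
    (h : ∀ k, k ≠ i → k ≠ j → n (Pi.single k 1) = 2) (x : ι → ℤ) :
    n x = x i + x j + 2 * ∑ k ∈ (Finset.univ.erase i).erase j, x k := by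
  rw [apply_eq_sum n x, ← Finset.add_sum_erase _ _ (Finset.mem_univ i),
    ← Finset.add_sum_erase _ _ (Finset.mem_erase.mpr ⟨hij.symm, Finset.mem_univ j⟩), hi, hj,
    Finset.mul_sum, smul_eq_mul, smul_eq_mul, mul_one, mul_one, add_assoc]
  congr 2
  refine Finset.sum_congr rfl fun k hk => ?_
  simp only [Finset.mem_erase] at hk
  rw [h k hk.2.1 hk.1, smul_eq_mul, mul_comm]

lemma apply_eq_apply_of_labels (hij : i ≠ j) (hi : n (Pi.single i 1) = 1)
    (hj : n (Pi.single j 1) = 1) (h : ∀ k, k ≠ i → k ≠ j → n (Pi.single k 1) = 2)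
    (hx : S.IsRoot x) (hpos : 0 ≤ x) (hnx : n x = 2) : x i = x j := by
  rw [sum_eq_of_labels hij hi hj h] at hnx
  have hrest : 0 ≤ ∑ k ∈ (Finset.univ.erase i).erase j, x k := Finset.sum_nonneg fun k _ => hpos k
  have hi₀ : 0 ≤ x i := hpos i
  have hj₀ : 0 ≤ x j := hpos j
  have not_two {k l : ι} (hk : x k = 2) (hl : x l = 0)
      (hz : ∀ m, m ≠ k → m ≠ l → x m = 0) : False := by
    have : x = Pi.single k 2 := by
      ext m
      rcases eq_or_ne m k with rfl | hm
      · simpa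
      · rcases eq_or_ne m l with rfl | hm' <;> simp [*]
    rw [this, PosForm.IsRoot, form_single_single] at hx
    norm_num at hx
  have hzero (hsum : ∑ k ∈ (Finset.univ.erase i).erase j, x k = 0) (k : ι) (hki : k ≠ i)
      (hkj : k ≠ j) : x k = 0 :=
    (Finset.sum_eq_zero_iff_of_nonneg fun k _ => hpos k).mp hsum k (by simp [hki, hkj])
  by_contra! hne
  rcases (by omega : x i = 2 ∧ x j = 0 ∨ x j = 2 ∧ x i = 0) with ⟨h₁, h₂⟩ | ⟨h₁, h₂⟩
  · exact not_two h₁ h₂ (hzero (by omega))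
  · exact not_two h₁ h₂ fun k hkj hki => hzero (by omega) k hki hkj

lemma exists_eq_single_of_label_le_one (hn : ∀ j, 1 ≤ n (Pi.single j 1)) (hx : S.IsRoot x)
    (h₀ : 0 ≤ n x) (h₁ : n x ≤ 1) : ∃ i, x = Pi.single i 1 ∧ n (Pi.single i 1) = 1 := by
  have hn₀ (j : ι) : 0 ≤ n (Pi.single j 1) := zero_le_one.trans (hn j)
  have hpos : 0 ≤ x := (nonneg_or_nonpos hx).resolve_right fun hneg => hx.ne_zero <| by
    ext j
    have hle := label_mul_le hn₀ (neg_nonneg.mpr hneg) j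
    have hxj : x j ≤ 0 := hneg j
    rw [map_neg, Pi.neg_apply] at hle
    change x j = 0
    nlinarith [hn j]
  obtain ⟨i, hi⟩ := Function.ne_iff.mp hx.ne_zero
  have hi₁ : 1 ≤ x i := Int.add_one_le_of_lt ((hpos i).lt_of_ne' hi)
  have hle := label_mul_le hn₀ hpos i
  have hxi : x i = 1 := by nlinarith [hn i]
  have hni : n (Pi.single i 1) = 1 := by
    rw [hxi, one_mul] at hle
    exact (hle.trans h₁).antisymm (hn i)
  refine ⟨i, funext fun j => ?_, hni⟩
  have hsub : 0 ≤ x - Pi.single i 1 := fun k => by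
    rcases eq_or_ne k i with rfl | hk
    · simp [hxi]
    · simpa [hk] using hpos k
  have hle' := label_mul_le hn₀ hsub j
  have hj₀ : 0 ≤ (x - Pi.single i 1 : ι → ℤ) j := hsub j
  rw [map_sub, hni, Pi.sub_apply] at hle'
  rw [Pi.sub_apply] at hj₀
  nlinarith [hn j]

lemma exists_label_eq_zero (hn : ∀ j, 0 ≤ n (Pi.single j 1))
    (hdist : ∀ m : (ι → ℤ) →+ ℤ, (∀ x, S.IsRoot x → n x = 2 → m x = 0) → m = 0)
    (hcard : {x | S.IsRoot x ∧ (n x = 0 ∨ n x = 1)}.ncard = 2) : ∃ i, n (Pi.single i 1) = 0 := by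
  by_contra! hne
  have hpos (j : ι) : 1 ≤ n (Pi.single j 1) := Int.add_one_le_of_lt ((hn j).lt_of_ne' (hne j))
  obtain ⟨x, y, hxy, hset⟩ := Set.ncard_eq_two.mp hcard
  have hsimple {z : ι → ℤ} (hz : z ∈ ({x, y} : Set (ι → ℤ))) :
      ∃ i, z = Pi.single i 1 ∧ n (Pi.single i 1) = 1 := by
    rw [← hset] at hz
    exact exists_eq_single_of_label_le_one hpos hz.1 (by rcases hz.2 with h | h <;> simp [h])
      (by rcases hz.2 with h | h <;> simp [h])
  obtain ⟨i, rfl, hi⟩ := hsimple (Set.mem_insert x {y})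
  obtain ⟨j, rfl, hj⟩ := hsimple (Set.mem_insert_of_mem _ rfl)
  have hij : i ≠ j := fun h => hxy (by rw [h])
  have hrest (k : ι) (hki : k ≠ i) (hkj : k ≠ j) : n (Pi.single k 1) = 2 := by
    refine (label_le_two hn hdist k).antisymm
      (Int.add_one_le_of_lt ((hpos k).lt_of_ne' fun h => ?_))
    have : Pi.single k 1 ∈ ({Pi.single i 1, Pi.single j 1} : Set (ι → ℤ)) := by
      rw [← hset]
      exact ⟨S.isRoot_single k, .inr h⟩
    rcases this with h | h
    · exact single_ne_single hki h
    · exact single_ne_single hkj h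
  have h := hdist (Pi.evalAddMonoidHom (fun _ => ℤ) i - Pi.evalAddMonoidHom _ j) fun x hx hnx =>
    sub_eq_zero.mpr (apply_eq_apply_of_labels hij hi hj hrest hx
      (nonneg_of_label_pos hn hx (by omega)) hnx)
  simpa [hij] using DFunLike.congr_fun h (Pi.single i 1)

lemma label_eq_two (hn : ∀ j, 0 ≤ n (Pi.single j 1))
    (hdist : ∀ m : (ι → ℤ) →+ ℤ, (∀ x, S.IsRoot x → n x = 2 → m x = 0) → m = 0)
    (hcard : {x | S.IsRoot x ∧ (n x = 0 ∨ n x = 1)}.ncard = 2) (hi : n (Pi.single i 1) = 0)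
    (hj : j ≠ i) : n (Pi.single j 1) = 2 := by
  refine (label_le_two hn hdist j).antisymm ?_
  by_contra! hlt
  have hpair : ({Pi.single i 1, -Pi.single i 1} : Set (ι → ℤ)) =
      {x | S.IsRoot x ∧ (n x = 0 ∨ n x = 1)} := by
    refine Set.eq_of_subset_of_ncard_le ?_ ?_ (Set.finite_of_ncard_ne_zero (by simp [hcard]))
    · rintro - (rfl | rfl)
      · exact ⟨S.isRoot_single i, .inl hi⟩
      · exact ⟨(S.isRoot_single i).neg, .inl (by rw [map_neg, hi, neg_zero])⟩
    · rw [hcard, Set.ncard_pair (neg_ne_self.mpr (S.isRoot_single i).ne_zero).symm]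
  have hmem : Pi.single j 1 ∈ ({Pi.single i 1, -Pi.single i 1} : Set (ι → ℤ)) := by
    rw [hpair]
    exact ⟨S.isRoot_single j, by have := hn j; omega⟩
  rcases hmem with h | h
  · exact single_ne_single hj h
  · exact single_add_single_ne_zero j i (by rw [h, neg_add_cancel])

end SimplyLaced

/-! ### Normal forms -/

namespace SimplyLaced

open PosForm FrenkelKac LieAlgebra

variable {ι : Type*} [DecidableEq ι] [Fintype ι] {S : SimplyLaced ι} {i j : ι}

section Combination

variable {R : Type*} [CommRing R]

variable (S) in
/-- The elements of `𝔤(2)` when the label of the simple root `αᵢ` is `0` and all other labels are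
`2`, up to the signs hidden in the bracket with the vector of `αᵢ`. -/
noncomputable def combination (i : ι) (c d : ι → R) : FrenkelKac R S.toPosForm :=
  ∑ j ∈ Finset.univ.erase i, (c j • vector R S.toPosForm (Pi.single j 1) +
    d j • ⁅vector R S.toPosForm (Pi.single i 1), vector R S.toPosForm (Pi.single j 1)⁆)

variable {c d c' d' : ι → R}

lemma combination_congr (hc : ∀ j, j ≠ i → c j = c' j)
    (hd : ∀ j, j ≠ i → S.cartan i j ≠ 0 → d j = d' j) :
    combination S i c d = combination S i c' d' := by
  refine Finset.sum_congr rfl fun j hj => ?_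
  have hji := (Finset.mem_erase.mp hj).1
  rw [hc j hji]
  by_cases h : S.cartan i j = 0
  · rw [lie_vector_vector_eq_zero (S.isRoot_single i) (S.isRoot_single j) h.ge, smul_zero,
      smul_zero]
  · rw [hd j hji h]

lemma combination_add : combination S i c d + combination S i c' d' =
    combination S i (c + c') (d + d') := by
  rw [combination, combination, ← Finset.sum_add_distrib]
  refine Finset.sum_congr rfl fun j _ => ?_
  simp only [Pi.add_apply, add_smul]
  abel

lemma combination_smul (a : R) :
    a • combination S i c d = combination S i (a • c) (a • d) := by
  simp only [combination, Finset.smul_sum, smul_add, smul_smul, Pi.smul_apply, smul_eq_mul]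

lemma combination_zero : combination S i (0 : ι → R) 0 = 0 := by
  simp [combination]

lemma vector_single_eq_combination (h : j ≠ i) :
    vector R S.toPosForm (Pi.single j 1) = combination S i (Pi.single j 1) 0 := by
  rw [combination, Finset.sum_eq_single_of_mem j (by simpa)]
  · simp
  · intro k _ hk
    simp [hk]

lemma lie_vector_single_eq_combination (h : j ≠ i) :
    ⁅vector R S.toPosForm (Pi.single i 1), vector R S.toPosForm (Pi.single j 1)⁆ =
      combination S i 0 (Pi.single j 1) := by
  rw [combination, Finset.sum_eq_single_of_mem j (by simpa)]
  · simp
  · intro k _ hk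
    simp [hk]

lemma vector_add_single_eq_combination (h : j ≠ i) : ∃ d : ι → R,
    vector R S.toPosForm (Pi.single i 1 + Pi.single j 1) = combination S i 0 d := by
  refine ⟨(S.sign (Pi.single i 1) (Pi.single j 1) : ℤ) • Pi.single j 1, ?_⟩
  rw [← Int.cast_smul_eq_zsmul R]
  have := combination_smul (S := S) (i := i) (c := 0) (d := Pi.single j (1 : R))
    ((S.sign (Pi.single i 1) (Pi.single j 1) : ℤ) : R)
  rw [smul_zero] at this
  rw [← this, ← lie_vector_single_eq_combination h,
    lie_vector_vector (S.isRoot_single i) (S.isRoot_single j) (single_add_single_ne_zero i j),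
    Int.cast_smul_eq_zsmul, ← Units.smul_def, smul_smul, Int.units_mul_self, one_smul]

lemma lie_toral_combination (t : (ι → ℤ) →+ R) :
    ⁅toral S.toPosForm t, combination S i c d⁆ =
      combination S i (fun j => t (Pi.single j 1) * c j)
        (fun j => t (Pi.single i 1 + Pi.single j 1) * d j) := by
  rw [combination, lie_sum]
  refine Finset.sum_congr rfl fun j _ => ?_
  simp only [lie_add, lie_smul, leibniz_lie (toral S.toPosForm t) (vector R _ _) (vector R _ _),
    lie_toral_vector, smul_lie, map_add, ← add_smul, smul_smul, mul_comm]

lemma lie_vector_combination :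
    ⁅vector R S.toPosForm (Pi.single i 1), combination S i c d⁆ = combination S i 0 c := by
  rw [combination, lie_sum]
  refine Finset.sum_congr rfl fun j _ => ?_
  have hi := S.isRoot_single i
  have hj' := S.isRoot_single j
  have hzero : ⁅vector R S.toPosForm (Pi.single i 1), ⁅vector R S.toPosForm (Pi.single i 1),
      vector R S.toPosForm (Pi.single j 1)⁆⁆ = 0 := by
    rw [lie_vector_vector hi hj' (single_add_single_ne_zero i j)]
    by_cases h : S.IsRoot (Pi.single i 1 + Pi.single j 1)
    · rw [Units.smul_def, lie_zsmul, lie_vector_vector_eq_zero hi h, smul_zero]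
      rw [map_add, hi.pairing_self, (hi.add_iff hj').mp h]
      decide
    · rw [vector_of_not_isRoot h, smul_zero, lie_zero]
  rw [lie_add, lie_smul, lie_smul, hzero]
  simp

lemma lie_vector_neg_combination :
    ⁅vector R S.toPosForm (-Pi.single i 1), combination S i c d⁆ =
      combination S i (fun j => S.cartan i j * d j) 0 := by
  rw [combination, lie_sum]
  refine Finset.sum_congr rfl fun j hj => ?_
  have hi := S.isRoot_single i
  have hzero : ⁅vector R S.toPosForm (-Pi.single i 1), vector R S.toPosForm (Pi.single j 1)⁆ = 0 :=
    lie_vector_vector_eq_zero hi.neg (S.isRoot_single j) (by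
      rw [map_neg, AddMonoidHom.neg_apply]
      exact neg_nonneg.mpr (S.pairing_single_nonpos (Finset.mem_erase.mp hj).1.symm))
  have hcoroot : ⁅vector R S.toPosForm (-Pi.single i 1), vector R S.toPosForm (Pi.single i 1)⁆ =
      coroot R S.toPosForm (Pi.single i 1) := by
    rw [← lie_skew, lie_vector_neg hi, neg_neg]
  rw [lie_add, lie_smul, lie_smul, leibniz_lie, hzero, hcoroot, lie_coroot_vector, lie_zero,
    smul_zero, zero_add, add_zero, smul_smul, Pi.zero_apply, zero_smul, add_zero, mul_comm]
  rfl

end Combination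

lemma eq_single_or_eq_add_of_label_eq_two {n : (ι → ℤ) →+ ℤ} {x : ι → ℤ}
    (hi : n (Pi.single i 1) = 0) (hn : ∀ j, j ≠ i → n (Pi.single j 1) = 2) (hx : S.IsRoot x)
    (hnx : n x = 2) :
    ∃ j, j ≠ i ∧ (x = Pi.single j 1 ∨ x = Pi.single i 1 + Pi.single j 1) := by
  have hn₀ (j : ι) : 0 ≤ n (Pi.single j 1) := by
    rcases eq_or_ne j i with rfl | h <;> simp [*]
  have hpos : 0 ≤ x := nonneg_of_label_pos hn₀ hx (by omega)
  rw [apply_eq_sum n, ← Finset.add_sum_erase _ _ (Finset.mem_univ i), hi, smul_zero, zero_add,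
    Finset.sum_congr rfl fun j hj => by rw [hn j (Finset.mem_erase.mp hj).1], ← Finset.sum_smul,
    smul_eq_mul] at hnx
  have hsum : ∑ j ∈ Finset.univ.erase i, x j = 1 := by omega
  obtain ⟨j, hj, hxj⟩ := Finset.exists_ne_zero_of_sum_ne_zero (hsum.trans_ne one_ne_zero)
  have hji := (Finset.mem_erase.mp hj).1
  rw [← Finset.add_sum_erase _ _ hj] at hsum
  have hrest : 0 ≤ ∑ k ∈ (Finset.univ.erase i).erase j, x k := Finset.sum_nonneg fun k _ => hpos k
  have hxj₁ : 1 ≤ x j := Int.add_one_le_of_lt ((hpos j).lt_of_ne' hxj)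
  have hzero := (Finset.sum_eq_zero_iff_of_nonneg fun k _ => hpos k).mp
    (show ∑ k ∈ (Finset.univ.erase i).erase j, x k = 0 by omega)
  have hx' : x = Pi.single i (x i) + Pi.single j 1 := by
    ext k
    rcases eq_or_ne k i with rfl | hki
    · simp [hji.symm]
    · rcases eq_or_ne k j with rfl | hkj
      · simp [hki]
        omega
      · simpa [hki, hkj] using hzero k (by simp [hki, hkj])
  refine ⟨j, hji, ?_⟩
  rw [hx', PosForm.IsRoot, form_add_self, form_single_single, form_single_single,
    pairing_single] at hx
  rcases cartan_eq_zero_or (S := S) hji.symm with h | h <;>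
    rw [cartan, Matrix.of_apply] at h <;> rw [h] at hx
  · left
    have : x i = 0 := by nlinarith
    rwa [this, Pi.single_zero, zero_add] at hx'
  · have : x i * (x i - 1) = 0 := by linarith
    rcases mul_eq_zero.mp this with h | h
    · left
      rwa [h, Pi.single_zero, zero_add] at hx'
    · right
      rwa [sub_eq_zero.mp h] at hx'

section Field

variable {K : Type*} [Field K] {n : (ι → ℤ) →+ ℤ} {e : FrenkelKac K S.toPosForm}

lemma mem_span_vector_of_lie_grading_eq [CharZero K] {k : ℤ} (hk : k ≠ 0)
    (he : ⁅grading K S n, e⁆ = (k : K) • e) :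
    e ∈ Submodule.span K (vector K S.toPosForm '' {x | S.IsRoot x ∧ n x = k}) := by
  have h : e ∈ Submodule.span K
      (basis K S '' {l | Sum.elim (0 : ι → ℤ) (fun x : {x // S.IsRoot x} => n x) l = k}) := by
    refine (basis K S).mem_span_image.mpr fun l hl => ?_
    exact_mod_cast eigenvalue_eq_of_repr_ne_zero (T := ad K _ (grading K S n)) lie_grading_basis he
      (Finsupp.mem_support_iff.mp hl)
  refine Submodule.span_le.mpr ?_ h
  rintro - ⟨l | x, hl, rfl⟩
  · exact (hk hl.symm).elim
  · rw [basis_inr]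
    exact Submodule.subset_span ⟨x, ⟨x.2, hl⟩, rfl⟩

lemma exists_eq_combination [CharZero K] (hi : n (Pi.single i 1) = 0)
    (hn : ∀ j, j ≠ i → n (Pi.single j 1) = 2) (he : ⁅grading K S n, e⁆ = (2 : K) • e) :
    ∃ c d : ι → K, e = combination S i c d := by
  have h := mem_span_vector_of_lie_grading_eq (k := 2) two_ne_zero (by exact_mod_cast he)
  clear he
  induction h using Submodule.span_induction with
  | mem e he =>
    obtain ⟨x, ⟨hx, hnx⟩, rfl⟩ := he
    obtain ⟨j, hj, rfl | rfl⟩ := eq_single_or_eq_add_of_label_eq_two hi hn hx hnx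
    · exact ⟨_, _, vector_single_eq_combination hj⟩
    · exact ⟨_, vector_add_single_eq_combination hj⟩
  | zero => exact ⟨0, 0, combination_zero.symm⟩
  | add e₁ e₂ _ _ h₁ h₂ =>
    obtain ⟨c₁, d₁, rfl⟩ := h₁
    obtain ⟨c₂, d₂, rfl⟩ := h₂
    exact ⟨_, _, combination_add⟩
  | smul a e _ h =>
    obtain ⟨c, d, rfl⟩ := h
    exact ⟨_, _, combination_smul a⟩

end Field

section Complex

variable [FiniteDimensional ℂ (FrenkelKac ℂ S.toPosForm)] {n : (ι → ℤ) →+ ℤ} {c d : ι → ℂ}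

lemma eq_zero_of_isDistinguished {e : FrenkelKac ℂ S.toPosForm} (he : IsDistinguished _ e)
    {m : (ι → ℤ) →+ ℤ} (hm : ⁅grading ℂ S m, e⁆ = 0) : m = 0 := by
  have h := congrArg toralPart (he (grading ℂ S m) hm (isSemisimple_ad_toral _))
  refine DFunLike.ext _ _ fun x => ?_
  simpa [grading] using DFunLike.congr_fun h x

lemma eq_zero_of_label_eq_two {e : FrenkelKac ℂ S.toPosForm} (hdist : IsDistinguished _ e)
    (he : ⁅grading ℂ S n, e⁆ = (2 : ℂ) • e) {m : (ι → ℤ) →+ ℤ}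
    (hm : ∀ x, S.IsRoot x → n x = 2 → m x = 0) : m = 0 := by
  refine eq_zero_of_isDistinguished hdist ?_
  have h := mem_span_vector_of_lie_grading_eq (k := 2) two_ne_zero (by exact_mod_cast he)
  suffices Submodule.span ℂ (vector ℂ S.toPosForm '' {x | S.IsRoot x ∧ n x = 2}) ≤
      LinearMap.ker (ad ℂ _ (grading ℂ S m)) from this h
  refine Submodule.span_le.mpr ?_
  rintro - ⟨x, ⟨hx, hnx⟩, rfl⟩
  change ⁅grading ℂ S m, _⁆ = 0
  rw [grading, lie_toral_vector, AddMonoidHom.comp_apply, hm x hx hnx, map_zero, zero_smul]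

lemma eq_zero_of_isDistinguished_combination (h : IsDistinguished _ (combination S i c d))
    {m : (ι → ℤ) →+ ℤ} (hc : ∀ j, j ≠ i → c j = 0 ∨ m (Pi.single j 1) = 0)
    (hd : ∀ j, j ≠ i → S.cartan i j ≠ 0 → d j = 0 ∨ m (Pi.single i 1 + Pi.single j 1) = 0) :
    m = 0 := by
  refine eq_zero_of_isDistinguished h ?_
  rw [grading, lie_toral_combination, ← combination_zero (S := S) (i := i)]
  refine combination_congr (fun j hj => ?_) fun j hj hij => ?_
  · rcases hc j hj with h | h <;> simp [h]
  · rcases hd j hj hij with h | h <;> simp [AddMonoidHom.comp_apply, h]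

lemma exists_coefficients_ne_zero (h : IsDistinguished _ (combination S i c d)) :
    ∃ j, j ≠ i ∧ S.cartan i j ≠ 0 ∧ c j ≠ 0 ∧ d j ≠ 0 := by
  classical
  by_contra! hne
  have hm := eq_zero_of_isDistinguished_combination h
    (m := ofLabels fun j => if j = i then 1 else if c j = 0 then -1 else 0)
    (fun j hj => ?_) fun j hj hij => ?_
  · simpa [ofLabels_single] using DFunLike.congr_fun hm (Pi.single i 1)
  · by_cases hc : c j = 0 <;> simp [ofLabels_single, hj, hc]
  · by_cases hc : c j = 0
    · simp [ofLabels_single, hj, hc]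
    · exact .inl (hne j hj hij hc)

lemma coefficient_ne_zero (h : IsDistinguished _ (combination S i c d)) (hj : j ≠ i)
    (hc : c j = 0) : S.cartan i j ≠ 0 ∧ d j ≠ 0 := by
  by_contra! hd
  have hm := eq_zero_of_isDistinguished_combination h
    (m := Pi.evalAddMonoidHom (fun _ => ℤ) j) (fun k _ => ?_) fun k _ hik => ?_
  · simpa using DFunLike.congr_fun hm (Pi.single j 1)
  · rcases eq_or_ne k j with rfl | h <;> simp [*]
  · rcases eq_or_ne k j with rfl | h
    · exact .inl (hd hik)
    · simp [*]

end Complex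

end SimplyLaced

namespace SimplyLaced

open PosForm FrenkelKac LieAlgebra

variable {ι : Type*} [DecidableEq ι] {S : SimplyLaced ι} {n : (ι → ℤ) →+ ℤ}

/-- Conjugacy under the automorphisms that fix the grading element of `n`. -/
def GradedConj (n : (ι → ℤ) →+ ℤ) (u v : FrenkelKac ℂ S.toPosForm) : Prop :=
  ∃ σ : FrenkelKac ℂ S.toPosForm ≃ₗ⁅ℂ⁆ FrenkelKac ℂ S.toPosForm,
    σ (grading ℂ S n) = grading ℂ S n ∧ σ u = v

lemma GradedConj.refl (u : FrenkelKac ℂ S.toPosForm) : GradedConj n u u :=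
  ⟨LieEquiv.refl, rfl, rfl⟩

lemma GradedConj.trans {u v w : FrenkelKac ℂ S.toPosForm} (h₁ : GradedConj n u v)
    (h₂ : GradedConj n v w) : GradedConj n u w := by
  obtain ⟨σ, hσ, rfl⟩ := h₁
  obtain ⟨τ, hτ, rfl⟩ := h₂
  exact ⟨σ.trans τ, (congrArg τ hσ).trans hτ, rfl⟩

lemma GradedConj.isDistinguished {u v : FrenkelKac ℂ S.toPosForm} (h : GradedConj n u v)
    (hu : IsDistinguished _ u) : IsDistinguished _ v := by
  obtain ⟨σ, -, rfl⟩ := h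
  exact isDistinguished_lieEquiv σ hu

variable [Fintype ι] [FiniteDimensional ℂ (FrenkelKac ℂ S.toPosForm)] {i : ι}

lemma gradedConj_combination_raise (c d : ι → ℂ) (hi : n (Pi.single i 1) = 0) (t : ℂ) :
    GradedConj n (combination S i c d) (combination S i c (d + t • c)) := by
  obtain ⟨σ, hs, hy⟩ := exists_lieEquiv_add_lie
    (g := t • vector ℂ S.toPosForm (Pi.single i 1)) (s := grading ℂ S n)
    (y := combination S i c d) (by simp [grading, lie_vector_toral, hi])
    (by simp only [smul_lie, lie_vector_combination, lie_smul, combination_zero, smul_zero])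
  refine ⟨σ, hs, ?_⟩
  rw [hy, smul_lie, lie_vector_combination, combination_smul, combination_add, smul_zero, add_zero]

lemma gradedConj_combination_lower (c d : ι → ℂ) (hi : n (Pi.single i 1) = 0) (t : ℂ) :
    GradedConj n (combination S i c d)
      (combination S i (c + t • fun j => (S.cartan i j : ℂ) * d j) d) := by
  obtain ⟨σ, hs, hy⟩ := exists_lieEquiv_add_lie
    (g := t • vector ℂ S.toPosForm (-Pi.single i 1)) (s := grading ℂ S n)
    (y := combination S i c d) (by simp [grading, lie_vector_toral, hi]) (by
      simp only [smul_lie, lie_vector_neg_combination, lie_smul, Pi.zero_apply, mul_zero]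
      rw [← Pi.zero_def, combination_zero, smul_zero, smul_zero])
  refine ⟨σ, hs, ?_⟩
  rw [hy, smul_lie, lie_vector_neg_combination, combination_smul, combination_add, smul_zero,
    add_zero]

lemma gradedConj_combination_scale (c d : ι → ℂ) (n : (ι → ℤ) →+ ℤ) {z : ι → ℂ}
    (hz : ∀ j, z j ≠ 0) :
    GradedConj n (combination S i c d)
      (combination S i (fun j => z j * c j) fun j => z i * z j * d j) := by
  let t : (ι → ℤ) →+ ℂ := ofLabels fun j => Complex.log (z j)
  have ht (j : ι) : Complex.exp (t (Pi.single j 1)) = z j := by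
    rw [ofLabels_single, Complex.exp_log (hz j)]
  obtain ⟨σ, hσ, -⟩ := exists_lieEquiv_exp (toral S.toPosForm t)
  refine ⟨σ, by simpa using hσ (grading ℂ S n) 0 (by simp [grading, lie_toral_toral]), ?_⟩
  rw [combination, map_sum]
  refine Finset.sum_congr rfl fun j _ => ?_
  rw [map_add, map_smul, map_smul, hσ _ _ (lie_toral_vector t (Pi.single j 1)),
    hσ ⁅_, _⁆ (t (Pi.single i 1 + Pi.single j 1)), map_add, Complex.exp_add, ht, ht, smul_smul,
    smul_smul, mul_comm (c j), mul_comm (d j)]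
  rw [leibniz_lie, lie_toral_vector, lie_toral_vector, smul_lie, lie_smul, map_add, add_smul]

lemma exists_gradedConj_diagonal (c d : ι → ℂ) (hi : n (Pi.single i 1) = 0) {a b : ι}
    (ha : S.cartan i a ≠ 0) (hb : S.cartan i b ≠ 0) : ∃ c' d' : ι → ℂ,
      GradedConj n (combination S i c d) (combination S i c' d') ∧
        d' a = 0 ∧ (c' b = 0 ∨ d' b = 0) := by
  obtain ⟨c₁, d₁, h₁, hda⟩ : ∃ c' d' : ι → ℂ,
      GradedConj n (combination S i c d) (combination S i c' d') ∧ (c' a ≠ 0 ∨ d' a = 0) := by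
    by_cases hd : d a = 0
    · exact ⟨c, d, .refl _, .inr hd⟩
    by_cases hc : c a = 0
    · exact ⟨_, _, gradedConj_combination_lower c d hi 1, .inl (by simp [*])⟩
    · exact ⟨c, d, .refl _, .inl hc⟩
  obtain ⟨c₂, d₂, h₂, hda⟩ : ∃ c' d' : ι → ℂ,
      GradedConj n (combination S i c d) (combination S i c' d') ∧ d' a = 0 := by
    rcases hda with hc | hd
    · exact ⟨_, _, h₁.trans (gradedConj_combination_raise c₁ d₁ hi (-d₁ a / c₁ a)), by simp [hc]⟩
    · exact ⟨c₁, d₁, h₁, hd⟩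
  by_cases hdb : d₂ b = 0
  · exact ⟨c₂, d₂, h₂, hda, .inr hdb⟩
  · refine ⟨_, _, h₂.trans
      (gradedConj_combination_lower c₂ d₂ hi (-c₂ b / (S.cartan i b * d₂ b))), hda, .inl ?_⟩
    have : (S.cartan i b : ℂ) ≠ 0 := by exact_mod_cast hb
    simp only [Pi.add_apply, Pi.smul_apply, smul_eq_mul]
    field_simp
    ring

variable {c d : ι → ℂ}

lemma exists_neighbour_ne (h : IsDistinguished _ (combination S i c d))
    (hi : n (Pi.single i 1) = 0) {a b : ι} (ha : S.cartan i a ≠ 0) (hb : S.cartan i b ≠ 0) :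
    ∃ j, j ≠ i ∧ S.cartan i j ≠ 0 ∧ j ≠ a ∧ j ≠ b := by
  obtain ⟨c', d', hconj, hda, hb⟩ := exists_gradedConj_diagonal (S := S) c d hi ha hb
  obtain ⟨j, hj, hij, hcj, hdj⟩ := exists_coefficients_ne_zero (hconj.isDistinguished h)
  refine ⟨j, hj, hij, ?_, ?_⟩
  · rintro rfl
    exact hdj hda
  · rintro rfl
    exact hb.elim hcj hdj

lemma exists_gradedConj_of_neighbours (h : IsDistinguished _ (combination S i c d))
    (hi : n (Pi.single i 1) = 0) {a b k : ι} (ha : S.cartan i a ≠ 0) (hb : S.cartan i b ≠ 0)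
    (hk : S.cartan i k ≠ 0)
    (hnb : ∀ j, j ≠ i → S.cartan i j ≠ 0 → j = a ∨ j = b ∨ j = k) : ∃ c' d' : ι → ℂ,
      GradedConj n (combination S i c d) (combination S i c' d') ∧ d' a = 0 ∧ c' b = 0 := by
  obtain ⟨c', d', hconj, hda, hcb | hdb⟩ := exists_gradedConj_diagonal (S := S) c d hi ha hb
  · exact ⟨c', d', hconj, hda, hcb⟩
  have hdk : d' k ≠ 0 := by
    obtain ⟨j, hj, hij, -, hdj⟩ := exists_coefficients_ne_zero (hconj.isDistinguished h)
    rcases hnb j hj hij with rfl | rfl | rfl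
    exacts [(hdj hda).elim, (hdj hdb).elim, hdj]
  have hlower := gradedConj_combination_lower (S := S) c' d' hi (-c' k / (S.cartan i k * d' k))
  obtain ⟨j, hj, hij, hcj, hdj⟩ :=
    exists_coefficients_ne_zero ((hconj.trans hlower).isDistinguished h)
  rcases hnb j hj hij with rfl | rfl | rfl
  · exact (hdj hda).elim
  · exact (hdj hdb).elim
  · have : (S.cartan i j : ℂ) ≠ 0 := by exact_mod_cast hk
    refine (hcj ?_).elim
    simp only [Pi.add_apply, Pi.smul_apply, smul_eq_mul]
    field_simp
    ring

end SimplyLaced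

namespace SimplyLaced

open PosForm FrenkelKac LieAlgebra

variable {ι : Type*} [DecidableEq ι] [Fintype ι] {S : SimplyLaced ι}
  [FiniteDimensional ℂ (FrenkelKac ℂ S.toPosForm)]

lemma exists_lieEquiv_grading {L : Type*} [LieRing L] [LieAlgebra ℂ L] {h e f s : L}
    (φ : L ≃ₗ⁅ℂ⁆ FrenkelKac ℂ S.toPosForm) (t : IsSl2Triple h e f)
    (he : IsNilpotent (ad ℂ L e)) (hss : (ad ℂ L s).IsSemisimple)
    (hs : ∀ (x : L) (μ : ℂ), x ∈ (ad ℂ L h).maxGenEigenspace μ → ⁅s, x⁆ = μ • x) :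
    ∃ (ψ : L ≃ₗ⁅ℂ⁆ FrenkelKac ℂ S.toPosForm) (n : (ι → ℤ) →+ ℤ), ψ s = grading ℂ S n ∧
      (∀ i, 0 ≤ n (Pi.single i 1)) ∧ ⁅grading ℂ S n, ψ e⁆ = (2 : ℂ) • ψ e ∧
      LinearMap.ker (ad ℂ _ (ψ e)) ≤ weightsFrom (basis ℂ S) (Sum.elim 0 fun x => n x) 0 := by
  have := Module.Finite.equiv φ.symm.toLinearEquiv
  obtain ⟨σ, n, hσ, hn⟩ := exists_lieEquiv_eq_grading (isSemisimple_ad_lieEquiv φ hss)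
    fun x μ hx hμ => intCast_of_eigenvector t he hs (x := φ.symm x) (by simpa using hx)
      (φ.injective (by simpa using hμ))
  replace hσ : (φ.trans σ) s = grading ℂ S n := hσ
  generalize φ.trans σ = ψ at hσ
  have hse : ⁅grading ℂ S n, ψ e⁆ = (2 : ℂ) • ψ e := by
    rw [← hσ, ← LieEquiv.map_lie, ← map_smul, lie_eq_smul_of_lie_eq_smul hs]
    rw [t.lie_h_e_nsmul, two_smul, two_smul]
  refine ⟨ψ, n, hσ, hn, hse, ker_ad_le_weightsFrom lie_grading_basis hse ?_⟩
  intro x μ hx hex hμ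
  obtain ⟨y, rfl⟩ := ψ.surjective x
  refine natCast_of_highest t hs (x := y) (by rintro rfl; exact hx (map_zero _))
    ((lie_lieEquiv_eq_zero_iff _).mp hex) (ψ.injective ?_)
  change ψ _ = ψ _
  rwa [LieEquiv.map_lie, hσ, map_smul]

lemma exists_label_and_eq_combination [IsKilling ℂ (FrenkelKac ℂ S.toPosForm)]
    {e : FrenkelKac ℂ S.toPosForm} {n : (ι → ℤ) →+ ℤ} (hn : ∀ i, 0 ≤ n (Pi.single i 1))
    (he : ⁅grading ℂ S n, e⁆ = (2 : ℂ) • e)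
    (hker : LinearMap.ker (ad ℂ _ e) ≤ weightsFrom (basis ℂ S) (Sum.elim 0 fun x => n x) 0)
    (hdist : IsDistinguished _ e)
    (hdim : Module.finrank ℂ (centralizer _ e) = Fintype.card ι + 2) :
    ∃ (i : ι) (c d : ι → ℂ), n (Pi.single i 1) = 0 ∧ (∀ j, j ≠ i → n (Pi.single j 1) = 2) ∧
      e = combination S i c d := by
  have hcard := finrank_ker_ad_eq_card_add_ncard he hker
  rw [ker_ad_eq_centralizer] at hcard
  replace hcard := Nat.add_left_cancel (hcard.symm.trans hdim)
  have hlabel (m : (ι → ℤ) →+ ℤ) (hm : ∀ x, S.IsRoot x → n x = 2 → m x = 0) : m = 0 :=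
    eq_zero_of_label_eq_two hdist he hm
  obtain ⟨i, hi⟩ := exists_label_eq_zero hn hlabel hcard
  have hj (j : ι) : j ≠ i → n (Pi.single j 1) = 2 := label_eq_two hn hlabel hcard hi
  obtain ⟨c, d, hcd⟩ := exists_eq_combination hi hj he
  exact ⟨i, c, d, hi, hj, hcd⟩

theorem exists_lieEquiv_combination {L : Type*} [LieRing L] [LieAlgebra ℂ L] [IsKilling ℂ L]
    {h e f s : L}
    (φ : L ≃ₗ⁅ℂ⁆ FrenkelKac ℂ S.toPosForm) (t : IsSl2Triple h e f)
    (he : IsNilpotent (ad ℂ L e)) (hdist : IsDistinguished L e)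
    (hdim : Module.finrank ℂ (centralizer L e) = Fintype.card ι + 2)
    (hss : (ad ℂ L s).IsSemisimple)
    (hs : ∀ (x : L) (μ : ℂ), x ∈ (ad ℂ L h).maxGenEigenspace μ → ⁅s, x⁆ = μ • x) :
    ∃ (ψ : L ≃ₗ⁅ℂ⁆ FrenkelKac ℂ S.toPosForm) (n : (ι → ℤ) →+ ℤ) (i : ι) (c d : ι → ℂ),
      n (Pi.single i 1) = 0 ∧ (∀ j, j ≠ i → n (Pi.single j 1) = 2) ∧
      ψ s = grading ℂ S n ∧ ψ e = combination S i c d := by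
  have := isKilling_of_equiv φ
  obtain ⟨ψ, n, hψs, hn, hse, hker⟩ := exists_lieEquiv_grading φ t he hss hs
  obtain ⟨i, c, d, hi, hj, hcd⟩ := exists_label_and_eq_combination hn hse hker
    (isDistinguished_lieEquiv ψ hdist) ((finrank_centralizer_map ψ e).trans hdim)
  exact ⟨ψ, n, i, c, d, hi, hj, hψs, hcd⟩

end SimplyLaced

/-! ### The subregular orbit of `E₇` -/

namespace PosForm

instance {Q : Type*} [AddCommGroup Q] (A : PosForm Q) : DecidablePred A.IsRoot := fun x =>
  inferInstanceAs (Decidable (A.form x x = 1))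

end PosForm

namespace FrenkelKac

open PosForm

section RootSums

variable {Q : Type*} [AddCommGroup Q] {A : PosForm Q} {n : Q →+ ℤ} {l l' : List (Q × ℤ)} {v v' : ℤ}

variable (A) in
/-- The linear combination of root vectors described by a list of roots and coefficients. -/
noncomputable def rootSum (l : List (Q × ℤ)) : FrenkelKac ℂ A :=
  (l.map fun t => (t.2 : ℂ) • vector ℂ A t.1).sum

/-- The total coefficient of `x` in the linear combination described by `l`. -/
def coefficient [DecidableEq Q] (l : List (Q × ℤ)) (x : Q) : ℤ :=
  (l.map fun t => if t.1 = x then t.2 else 0).sum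

variable (A) in
/-- A description of the bracket of the linear combinations described by `l` and `l'`. -/
def bracketList (l l' : List (Q × ℤ)) : List (Q × ℤ) :=
  l.flatMap fun s => l'.map fun t => (s.1 + t.1, A.sign s.1 t.1 * (s.2 * t.2))

/-- A description of `a` times the linear combination described by `l`. -/
def scaleList (a : ℤ) (l : List (Q × ℤ)) : List (Q × ℤ) := l.map fun t => (t.1, a * t.2)

variable (A) in
/-- All entries of `l` are roots of degree `v` for `n`. -/
def IsHomogeneous (n : Q →+ ℤ) (v : ℤ) (l : List (Q × ℤ)) : Prop :=
  ∀ t ∈ l, A.IsRoot t.1 ∧ n t.1 = v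

variable (A) in
/-- The lists `l` and `l'` assign the same coefficient to each root. Entries that are not roots are
ignored, because their vectors vanish. -/
def Agree [DecidableEq Q] (l l' : List (Q × ℤ)) : Prop :=
  ∀ t ∈ l ++ l', A.IsRoot t.1 → coefficient l t.1 = coefficient l' t.1

instance (n : Q →+ ℤ) (v : ℤ) (l : List (Q × ℤ)) : Decidable (IsHomogeneous A n v l) :=
  inferInstanceAs (Decidable (∀ t ∈ l, A.IsRoot t.1 ∧ n t.1 = v))

instance [DecidableEq Q] (l l' : List (Q × ℤ)) : Decidable (Agree A l l') :=
  inferInstanceAs (Decidable (∀ t ∈ l ++ l', A.IsRoot t.1 → coefficient l t.1 = coefficient l' t.1))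

lemma toralPart_rootSum (l : List (Q × ℤ)) : toralPart (rootSum A l) = 0 := by
  induction l with
  | nil => exact map_zero _
  | cons t l ih => simpa [rootSum, toralPart_vector] using ih

lemma rootPart_rootSum [DecidableEq Q] (l : List (Q × ℤ)) (x : {x // A.IsRoot x}) :
    rootPart (rootSum A l) x = (coefficient l x : ℂ) := by
  have hvector (y : Q) : rootPart (vector ℂ A y) x = if y = x then 1 else 0 := by
    by_cases hy : A.IsRoot y
    · simp [rootPart_vector hy, Finsupp.single_apply, Subtype.ext_iff]
    · rw [vector_of_not_isRoot hy, if_neg fun h : y = x => hy (h ▸ x.2), map_zero,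
        Finsupp.zero_apply]
  induction l with
  | nil => simp [rootSum, coefficient]
  | cons t l ih =>
    simp only [rootSum, coefficient, List.map_cons, List.sum_cons, map_add, map_smul,
      Finsupp.add_apply, Finsupp.smul_apply, hvector] at ih ⊢
    rw [ih]
    split_ifs <;> simp

omit [AddCommGroup Q] in
lemma coefficient_eq_zero [DecidableEq Q] {x : Q} (h : ∀ t ∈ l, t.1 ≠ x) :
    coefficient l x = 0 :=
  List.sum_eq_zero fun a ha => by
    obtain ⟨t, ht, rfl⟩ := List.mem_map.mp ha
    exact if_neg (h t ht)

lemma Agree.rootSum_eq [DecidableEq Q] (h : Agree A l l') : rootSum A l = rootSum A l' := by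
  refine Prod.ext ((toralPart_rootSum l).trans (toralPart_rootSum l').symm)
    (Finsupp.ext fun x => ?_)
  refine (rootPart_rootSum l x).trans (Eq.trans ?_ (rootPart_rootSum l' x).symm)
  by_cases hx : ∃ t ∈ l ++ l', t.1 = x
  · obtain ⟨t, ht, htx⟩ := hx
    rw [← htx, h t ht (htx ▸ x.2)]
  · push Not at hx
    rw [coefficient_eq_zero fun t ht => hx t (List.mem_append_left _ ht),
      coefficient_eq_zero fun t ht => hx t (List.mem_append_right _ ht)]

lemma rootSum_scaleList (a : ℤ) (l : List (Q × ℤ)) :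
    rootSum A (scaleList a l) = (a : ℂ) • rootSum A l := by
  simp [rootSum, scaleList, List.smul_sum, Function.comp_def, mul_smul]

lemma rootSum_cons (t : Q × ℤ) (l : List (Q × ℤ)) :
    rootSum A (t :: l) = (t.2 : ℂ) • vector ℂ A t.1 + rootSum A l := by
  simp [rootSum]

lemma rootSum_append (l l' : List (Q × ℤ)) :
    rootSum A (l ++ l') = rootSum A l + rootSum A l' := by
  simp [rootSum]

lemma lie_vector_rootSum {x : Q} (hx : A.IsRoot x) (hl : ∀ t ∈ l, A.IsRoot t.1 ∧ x + t.1 ≠ 0) :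
    ⁅vector ℂ A x, rootSum A l⁆ = rootSum A (l.map fun t => (x + t.1, A.sign x t.1 * t.2)) := by
  induction l with
  | nil => simp [rootSum]
  | cons t l ih =>
    obtain ⟨ht, hl⟩ := List.forall_mem_cons.mp hl
    rw [rootSum_cons, lie_add, ih hl, lie_smul, lie_vector_vector hx ht.1 ht.2, List.map_cons,
      rootSum_cons, Int.cast_mul, mul_comm, mul_smul]
    simp only [Int.cast_smul_eq_zsmul, Units.smul_def]

lemma lie_rootSum (hl : IsHomogeneous A n v l) (hl' : IsHomogeneous A n v' l') (h : v + v' ≠ 0) :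
    ⁅rootSum A l, rootSum A l'⁆ = rootSum A (bracketList A l l') := by
  induction l with
  | nil => simp [rootSum, bracketList]
  | cons s l ih =>
    obtain ⟨hs, hl⟩ := List.forall_mem_cons.mp hl
    have hne (t : Q × ℤ) (ht : t ∈ l') : A.IsRoot t.1 ∧ s.1 + t.1 ≠ 0 :=
      ⟨(hl' t ht).1, fun h₀ => h (by rw [← hs.2, ← (hl' t ht).2, ← map_add, h₀, map_zero])⟩
    rw [rootSum_cons, add_lie, ih hl, smul_lie, lie_vector_rootSum hs.1 hne, ← rootSum_scaleList,
      ← rootSum_append]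
    simp [bracketList, scaleList, mul_left_comm, Function.comp_def]

lemma lie_toral_rootSum (hl : IsHomogeneous A n v l) :
    ⁅toral A ((Int.castAddHom ℂ).comp n), rootSum A l⁆ = (v : ℂ) • rootSum A l := by
  induction l with
  | nil => simp [rootSum]
  | cons t l ih =>
    obtain ⟨ht, hl⟩ := List.forall_mem_cons.mp hl
    rw [rootSum_cons, lie_add, ih hl, lie_smul, lie_toral_vector, smul_add, smul_comm]
    simp [ht.2]

lemma linearIndependent_rootSum [DecidableEq Q] {κ : Type*} [Finite κ] [LinearOrder κ]
    {T : κ → List (Q × ℤ)} {x : κ → Q} (hx : ∀ i, A.IsRoot (x i))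
    (hlt : ∀ i j, i < j → coefficient (T i) (x j) = 0) (hne : ∀ i, coefficient (T i) (x i) ≠ 0) :
    LinearIndependent ℂ fun i => rootSum A (T i) := by
  have := Fintype.ofFinite κ
  let M : Matrix κ κ ℂ := fun i j => coefficient (T i) (x j)
  have hM : M.det ≠ 0 := by
    rw [Matrix.det_of_isLowerTriangular M fun i j hij => by simp [M, hlt i j hij]]
    exact Finset.prod_ne_zero_iff.mpr fun i _ => Int.cast_ne_zero.mpr (hne i)
  let p : FrenkelKac ℂ A →ₗ[ℂ] κ → ℂ :=
    LinearMap.pi fun j => (Finsupp.lapply ⟨x j, hx j⟩).comp rootPart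
  have hp : (p ∘ fun i => rootSum A (T i)) = M.row :=
    funext₂ fun i j => rootPart_rootSum (T i) ⟨x j, hx j⟩
  refine LinearIndependent.of_comp p ?_
  rw [hp]
  exact Matrix.linearIndependent_rows_of_det_ne_zero hM

end RootSums

end FrenkelKac

namespace E7

open PosForm FrenkelKac

/-- A non-symmetric form whose symmetrization is given by the Cartan matrix. -/
def form : (Fin 7 → ℤ) →+ (Fin 7 → ℤ) →+ ℤ :=
  .mk' (fun x => .mk' (fun y => x 0 * y 0 + x 1 * y 1 + x 2 * y 2 + x 3 * y 3 + x 4 * y 4 +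
      x 5 * y 5 + x 6 * y 6 - (x 0 * y 2 + x 1 * y 3 + x 2 * y 3 + x 3 * y 4 + x 4 * y 5 +
      x 5 * y 6)) fun y z => by simp only [Pi.add_apply]; ring) fun x y => by
    refine AddMonoidHom.ext fun z => ?_
    simp only [AddMonoidHom.mk'_apply, AddMonoidHom.add_apply, Pi.add_apply]
    ring

lemma form_self (x : Fin 7 → ℤ) : 24 * form x x = 6 * (2 * x 0 - x 2) ^ 2 +
    2 * (3 * x 2 - 2 * x 3) ^ 2 + 6 * (2 * x 1 - x 3) ^ 2 + 6 * (2 * x 6 - x 5) ^ 2 +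
    2 * (3 * x 5 - 2 * x 4) ^ 2 + (4 * x 4 - 3 * x 3) ^ 2 + x 3 ^ 2 := by
  simp only [form, AddMonoidHom.mk'_apply]
  ring

lemma form_self_pos (x : Fin 7 → ℤ) (hx : x ≠ 0) : 0 < form x x := by
  by_contra! h
  have hform := form_self x
  generalize form x x = q at h hform
  have h₃ : x 3 = 0 := by nlinarith
  have h₂ : x 2 = 0 := by nlinarith
  have h₄ : x 4 = 0 := by nlinarith
  have h₁ : x 1 = 0 := by nlinarith
  have h₀ : x 0 = 0 := by nlinarith
  have h₅ : x 5 = 0 := by nlinarith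
  have h₆ : x 6 = 0 := by nlinarith
  exact hx (funext fun i => by fin_cases i <;> assumption)

/-- The root system of type `E₇`, with its simple roots in the order of Bourbaki. -/
def roots : SimplyLaced (Fin 7) where
  form := form
  form_self_pos := form_self_pos
  isRoot_single := by decide +kernel
  pairing_single_nonpos := by decide +kernel

lemma cartan_roots : roots.cartan = CartanMatrix.E₇ := by decide +kernel

/-- The element of the root lattice whose coordinates are the decimal digits of `k`. -/
def root (k : ℕ) : Fin 7 → ℤ := fun i => (k / 10 ^ (6 - i : ℕ) % 10 : ℕ)

/-- The degrees for which only the branch node has degree zero. -/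
def degree : (Fin 7 → ℤ) →+ ℤ :=
  .mk' (fun x => ∑ i, if i = 3 then 0 else 2 * x i) fun x y => by
    simp only [← Finset.sum_add_distrib, Pi.add_apply, mul_add]
    exact Finset.sum_congr rfl fun i _ => by split_ifs <;> simp

lemma degree_single (i : Fin 7) : degree (Pi.single i 1) = if i = 3 then 0 else 2 := by
  decide +revert +kernel

/-- A basis of the centralizer of its first member. -/
def centralizerTable : Fin 9 → List ((Fin 7 → ℤ) × ℤ) := ![
  [(root 1000000, 1), (root 0100000, 1), (root 0000100, 1), (root 0000010, 1), (root 0000001, 1),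
    (root 0011000, 1), (root 0001100, 1)],
  [(root 0000111, 1), (root 0001111, -2), (root 0011110, 1), (root 0101110, -2),
    (root 0111100, 1), (root 0112100, -2), (root 1011100, 1), (root 1111000, 2)],
  [(root 0111111, -2), (root 0112111, 1), (root 0112210, 1), (root 1011111, 2), (root 1112110, 1)],
  [(root 0111111, -3), (root 0112111, 2), (root 0112210, 1), (root 1011111, 2), (root 1112110, 2),
    (root 1111110, -1), (root 1122100, 1)],
  [(root 0112221, 1), (root 1112211, 1), (root 1122111, -1), (root 1122210, 1)],
  [(root 1112221, -1), (root 1123211, -1), (root 1223210, 1)],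
  [(root 1122221, 1), (root 1123221, -1), (root 1223211, 1)],
  [(root 1224321, 1)],
  [(root 2234321, 1)]]

/-- The degrees of the entries of `centralizerTable`. -/
def weight : Fin 9 → ℤ := ![2, 6, 10, 10, 14, 16, 18, 22, 26]

/-- The positions in `centralizerTable` of a basis of the centre of the centralizer. -/
def centralIndex : Fin 6 → Fin 9 := ![0, 3, 4, 6, 7, 8]

/-- The `k`-th entry lies in degree `26 - weight (centralIndex k)`. Its bracket with the first
member of `centralizerTable` lies in the centralizer, and its bracket with the `k`-th basis element
of the centre is a multiple of the highest root vector. -/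
def partnerTable : Fin 5 → List ((Fin 7 → ℤ) × ℤ) := ![
  [(root 1234321, 1)],
  [(root 1112221, 2), (root 1122211, 1), (root 1123211, 1)],
  [(root 0112211, 1), (root 1111111, -2), (root 1112111, 5), (root 1112210, -1),
    (root 1122110, 1)],
  [(root 0101111, 2), (root 0111110, -2), (root 0112110, 3), (root 1011110, 2),
    (root 1112100, 4)],
  [(root 0000011, 3), (root 0000110, 5), (root 0001110, -1), (root 0011100, 7),
    (root 0101100, -5), (root 0111000, 9), (root 1010000, 22), (root 1011000, -13)]]

lemma isHomogeneous_centralizerTable (i : Fin 9) :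
    IsHomogeneous roots.toPosForm degree (weight i) (centralizerTable i) := by
  decide +revert +kernel

lemma isHomogeneous_partnerTable (k : Fin 5) : IsHomogeneous roots.toPosForm degree
    (weight (centralIndex 5) - weight (centralIndex k.castSucc)) (partnerTable k) := by
  decide +revert +kernel

lemma agree_bracketList_zero_partner (k : Fin 5) :
    Agree roots.toPosForm (bracketList roots.toPosForm (centralizerTable 0) (partnerTable k))
      (scaleList (![1, 1, 1, 1, 2] k) (centralizerTable (![8, 6, 4, 2, 1] k))) := by
  decide +revert +kernel

lemma coefficient_bracketList_partner_ne_zero (k : Fin 5) :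
    coefficient (bracketList roots.toPosForm (partnerTable k)
      (centralizerTable (centralIndex k.castSucc))) (root 2234321) ≠ 0 := by
  decide +revert +kernel

lemma agree_bracketList_central (k : Fin 6) (j : Fin 9) :
    Agree roots.toPosForm (bracketList roots.toPosForm (centralizerTable (centralIndex k))
      (centralizerTable j)) [] := by
  decide +revert +kernel

lemma weight_pos (i : Fin 9) : 0 < weight i := by decide +revert

/-- The elements of the Lie algebra described by `centralizerTable`. -/
noncomputable def element (i : Fin 9) : FrenkelKac ℂ roots.toPosForm :=
  rootSum roots.toPosForm (centralizerTable i)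

lemma lie_grading_element (i : Fin 9) :
    ⁅grading ℂ roots degree, element i⁆ = (weight i : ℂ) • element i :=
  lie_toral_rootSum (isHomogeneous_centralizerTable i)

lemma lie_element_eq {i j : Fin 9} {l : List ((Fin 7 → ℤ) × ℤ)}
    (h : Agree roots.toPosForm
      (bracketList roots.toPosForm (centralizerTable i) (centralizerTable j)) l) :
    ⁅element i, element j⁆ = rootSum roots.toPosForm l :=
  (lie_rootSum (isHomogeneous_centralizerTable i) (isHomogeneous_centralizerTable j)
    (add_pos (weight_pos i) (weight_pos j)).ne').trans h.rootSum_eq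

lemma lie_element_centralIndex (k : Fin 6) (j : Fin 9) :
    ⁅element (centralIndex k), element j⁆ = 0 :=
  lie_element_eq (agree_bracketList_central k j)

lemma lie_element_zero (j : Fin 9) : ⁅element 0, element j⁆ = 0 :=
  lie_element_centralIndex 0 j

lemma lie_element_two_one : ⁅element 2, element 1⁆ = (3 : ℂ) • element 5 := by
  rw [lie_element_eq (l := scaleList 3 (centralizerTable 5)) (by decide +kernel),
    rootSum_scaleList, Int.cast_ofNat, element]

lemma lie_element_five_one : ⁅element 5, element 1⁆ = (-6 : ℂ) • element 7 := by
  rw [lie_element_eq (l := scaleList (-6) (centralizerTable 7)) (by decide +kernel),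
    rootSum_scaleList, Int.cast_neg, Int.cast_ofNat, element]

lemma linearIndependent_element : LinearIndependent ℂ element :=
  linearIndependent_rootSum (x := ![root 1000000, root 0000111, root 0111111, root 1111110,
    root 0112221, root 1112221, root 1122221, root 1224321, root 2234321])
    (by decide +kernel) (by decide +kernel) (by decide +kernel)

lemma isCentralizerBasis (h : Module.finrank ℂ (centralizer _ (element 0)) = 9) :
    IsCentralizerBasis (element 0) (grading ℂ roots degree) weight element where
  linearIndependent := linearIndependent_element
  span_eq := by
    have : FiniteDimensional ℂ (centralizer _ (element 0)).toSubmodule :=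
      Module.finite_of_finrank_pos (h.trans_gt (Nat.succ_pos 8))
    refine Submodule.eq_of_le_of_finrank_eq (Submodule.span_le.mpr ?_)
      ((finrank_span_eq_card linearIndependent_element).trans h.symm)
    rintro _ ⟨i, rfl⟩
    change ⁅element i, element 0⁆ = 0
    rw [← lie_skew, neg_eq_zero]
    exact lie_element_zero i
  lie_eq := lie_grading_element

lemma zCenter_element_zero
    (h : IsCentralizerBasis (element 0) (grading ℂ roots degree) weight element) :
    zCenter _ (element 0) = Submodule.span ℂ (Set.range (element ∘ centralIndex)) := by
  refine h.zCenter_eq_span lie_element_centralIndex fun a ha => ?_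
  have hcompl (i : Fin 9) : i ∈ Set.range centralIndex ∨ i = 1 ∨ i = 2 ∨ i = 5 := by
    decide +revert
  have hsum (j : Fin 9) : a 1 • ⁅element 1, element j⁆ + a 2 • ⁅element 2, element j⁆ +
      a 5 • ⁅element 5, element j⁆ = 0 := by
    rw [← ha j, ← Finset.sum_subset (Finset.subset_univ {1, 2, 5}) fun i _ hi => ?_]
    · simp [add_assoc]
    · obtain ⟨k, rfl⟩ := (hcompl i).resolve_right (by simpa using hi)
      rw [lie_element_centralIndex, smul_zero]
  have h₅₇ : LinearIndependent ℂ ![element 5, element 7] := by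
    convert linearIndependent_element.comp ![5, 7] (by decide) using 1
    ext i : 1
    fin_cases i <;> rfl
  obtain ⟨ha₂, ha₅⟩ : a 2 = 0 ∧ a 5 = 0 := by
    simpa using h₅₇.eq_zero_of_pair (s := a 2 * 3) (t := a 5 * -6) (by
      simpa [lie_element_two_one, lie_element_five_one, smul_smul] using hsum 1)
  have ha₁ : a 1 = 0 := by
    have h₂ := hsum 2
    rw [← lie_skew, lie_element_two_one] at h₂
    simpa [ha₂, ha₅, linearIndependent_element.ne_zero] using h₂
  intro i hi
  obtain rfl | rfl | rfl := (hcompl i).resolve_left hi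
  exacts [ha₁, ha₂, ha₅]

/-- Each basis element of the centre is moved onto the highest root vector by some `u` such that
`⁅e, u⁆` lies in the centralizer of `e`. -/
lemma exists_partner (k : Fin 6) : ∃ u : FrenkelKac ℂ roots.toPosForm,
    ⁅⁅element 0, u⁆, element 0⁆ = 0 ∧ ⁅grading ℂ roots degree, u⁆ =
      ((weight (centralIndex 5) - weight (centralIndex k) : ℤ) : ℂ) • u ∧
    ⁅u, element (centralIndex k)⁆ ≠ 0 := by
  induction k using Fin.lastCases with
  | last =>
    refine ⟨grading ℂ roots degree, ?_, ?_, ?_⟩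
    · rw [← lie_skew (element 0), lie_grading_element, neg_lie, smul_lie, lie_self, smul_zero,
        neg_zero]
    · simp
    · rw [lie_grading_element]
      exact smul_ne_zero (by exact_mod_cast (weight_pos _).ne')
        (linearIndependent_element.ne_zero _)
  | cast k =>
    have hk := isHomogeneous_partnerTable k
    refine ⟨rootSum roots.toPosForm (partnerTable k), ?_, lie_toral_rootSum hk, fun h => ?_⟩
    · rw [element, lie_rootSum (isHomogeneous_centralizerTable 0) hk (by decide +revert),
        (agree_bracketList_zero_partner k).rootSum_eq, rootSum_scaleList, smul_lie, ← element,
        ← lie_skew, ← element, lie_element_zero, neg_zero, smul_zero]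
    · rw [element, lie_rootSum hk (isHomogeneous_centralizerTable _)
        (by rw [sub_add_cancel]; exact (weight_pos _).ne')] at h
      have htop : roots.IsRoot (root 2234321) := by decide +kernel
      refine coefficient_bracketList_partner_ne_zero k (Int.cast_injective (α := ℂ) ?_)
      rw [← rootPart_rootSum _ ⟨root 2234321, htop⟩, h]
      simp

open SimplyLaced LieAlgebra

lemma combination_eq_element_zero :
    combination roots 3 ![1, 1, 0, 0, 1, 1, 1] ![0, 0, 1, 0, -1, 0, 0] = element 0 := by
  have hlie (j : Fin 7) (x : Fin 7 → ℤ) (hx : Pi.single 3 1 + Pi.single j 1 = x)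
      (hroot : roots.IsRoot x) : ⁅vector ℂ roots.toPosForm (Pi.single 3 1),
        vector ℂ roots.toPosForm (Pi.single j 1)⁆ =
          (roots.sign (Pi.single 3 1) (Pi.single j 1) : ℂ) • vector ℂ roots.toPosForm x := by
    subst hx
    rw [Int.cast_smul_eq_zsmul]
    exact lie_vector_vector (roots.isRoot_single 3) (roots.isRoot_single j) hroot.ne_zero
  have hsign : roots.sign (Pi.single 3 1) (Pi.single 2 1) = 1 ∧
      roots.sign (Pi.single 3 1) (Pi.single 4 1) = -1 := by decide +kernel
  have hroot : root 1000000 = Pi.single 0 1 ∧ root 0100000 = Pi.single 1 1 ∧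
      root 0000100 = Pi.single 4 1 ∧ root 0000010 = Pi.single 5 1 ∧
      root 0000001 = Pi.single 6 1 := by decide +kernel
  rw [combination, show Finset.univ.erase 3 = ({0, 1, 2, 4, 5, 6} : Finset (Fin 7)) by decide]
  simp [element, rootSum, centralizerTable, hsign, hroot,
    hlie 2 (root 0011000) (by decide +kernel) (by decide +kernel),
    hlie 4 (root 0001100) (by decide +kernel) (by decide +kernel), add_comm,
    add_left_comm]

lemma exists_two_neighbours (i : Fin 7) (hi : i ≠ 3) : ∃ a b, roots.cartan i a ≠ 0 ∧
    roots.cartan i b ≠ 0 ∧ ∀ j, j ≠ i → roots.cartan i j ≠ 0 → j = a ∨ j = b := by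
  rw [cartan_roots]
  fin_cases i <;> first | exact absurd rfl hi | decide

section NormalForm

variable [FiniteDimensional ℂ (FrenkelKac ℂ roots.toPosForm)] {n : (Fin 7 → ℤ) →+ ℤ} {i : Fin 7}
  {c d : Fin 7 → ℂ}

lemma eq_three_of_isDistinguished (h : IsDistinguished _ (combination roots i c d))
    (hi : n (Pi.single i 1) = 0) : i = 3 := by
  by_contra h₃
  obtain ⟨a, b, ha, hb, hab⟩ := exists_two_neighbours i h₃
  obtain ⟨j, hji, hj, hja, hjb⟩ := exists_neighbour_ne h hi ha hb
  exact (hab j hji hj).elim hja hjb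

lemma exists_gradedConj_element_zero (h : IsDistinguished _ (combination roots 3 c d))
    (hi : n (Pi.single 3 1) = 0) : GradedConj n (combination roots 3 c d) (element 0) := by
  have hcartan (j : Fin 7) : roots.cartan 3 j ≠ 0 ↔ j = 1 ∨ j = 2 ∨ j = 3 ∨ j = 4 := by
    rw [cartan_roots]
    decide +revert
  obtain ⟨c, d, hconj, hd₁, hc₂⟩ := exists_gradedConj_of_neighbours h hi (a := 1) (b := 2) (k := 4)
    (by simp [hcartan]) (by simp [hcartan]) (by simp [hcartan])
    fun j hj hj' => by simpa [hj] using (hcartan j).mp hj'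
  have h' := hconj.isDistinguished h
  obtain ⟨hc₄, hd₄⟩ : c 4 ≠ 0 ∧ d 4 ≠ 0 := by
    obtain ⟨j, hj, hj', hc, hd⟩ := exists_coefficients_ne_zero h'
    obtain rfl | rfl | rfl | rfl := (hcartan j).mp hj'
    exacts [(hd hd₁).elim, (hc hc₂).elim, (hj rfl).elim, ⟨hc, hd⟩]
  have hd₂ : d 2 ≠ 0 := (coefficient_ne_zero h' (by decide) hc₂).2
  have hc₁ : c 1 ≠ 0 := fun h₀ => (coefficient_ne_zero h' (by decide) h₀).2 hd₁
  have hleaf (j : Fin 7) (hj : j = 0 ∨ j = 5 ∨ j = 6) : c j ≠ 0 := fun h₀ => by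
    have := (hcartan j).mp (coefficient_ne_zero h' (by rintro rfl; simp at hj) h₀).1
    omega
  refine hconj.trans ?_
  have hscale := gradedConj_combination_scale (S := roots) (i := 3) c d n
    (z := ![(c 0)⁻¹, (c 1)⁻¹, -d 4 / (c 4 * d 2), -c 4 / d 4, (c 4)⁻¹, (c 5)⁻¹, (c 6)⁻¹])
    (by intro j; fin_cases j <;> simp [*])
  convert hscale using 1
  rw [← combination_eq_element_zero]
  refine combination_congr (fun j hj => ?_) fun j hj hij => ?_
  · fin_cases j <;> simp_all
  · obtain rfl | rfl | rfl | rfl := (hcartan j).mp hij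
    · simp [hd₁]
    · simp [field]
    · exact (hj rfl).elim
    · simp [field]

end NormalForm

lemma exists_partner_map {L : Type*} [LieRing L] [LieAlgebra ℂ L]
    (ψ : FrenkelKac ℂ roots.toPosForm ≃ₗ⁅ℂ⁆ L) (k : Fin 6) :
    ∃ u : L, ⁅⁅ψ (element 0), u⁆, ψ (element 0)⁆ = 0 ∧
      ⁅ψ (grading ℂ roots degree), u⁆ =
        ((weight (centralIndex 5) - weight (centralIndex k) : ℤ) : ℂ) • u ∧
      ⁅u, ψ (element (centralIndex k))⁆ ≠ 0 := by
  obtain ⟨u, h₁, h₂, h₃⟩ := exists_partner k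
  refine ⟨ψ u, ?_, ?_, ?_⟩
  · rw [← LieEquiv.map_lie, ← LieEquiv.map_lie, h₁, map_zero]
  · rw [← LieEquiv.map_lie, h₂, map_smul]
  · rwa [Ne, lie_lieEquiv_eq_zero_iff]

variable {L : Type*} [LieRing L] [LieAlgebra ℂ L] [FiniteDimensional ℂ L] [IsSimple ℂ L]
  {e h f : L}

lemma exists_lieEquiv_of_isSl2Triple (htype : Nonempty (L ≃ₗ⁅ℂ⁆ e₇ ℂ))
    (ht : IsSl2Triple h e f) (he : IsNilpotent (ad ℂ L e)) (hdist : IsDistinguished L e)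
    (hdim : Module.finrank ℂ (centralizer L e) = 9) :
    ∃ ψ : FrenkelKac ℂ roots.toPosForm ≃ₗ⁅ℂ⁆ L,
      ψ (element 0) = e ∧ ψ (grading ℂ roots degree) = h := by
  obtain ⟨φ⟩ := exists_lieEquiv (S := roots) (by rw [cartan_roots]; exact htype.some)
  have := Module.Finite.equiv φ.toLinearEquiv
  obtain ⟨s, hss, hs⟩ := exists_semisimple_part h
  obtain ⟨φ, n, i, c, d, hi, hj, hφs, hφe⟩ :=
    exists_lieEquiv_combination φ ht he hdist hdim hss hs
  have hdist' := isDistinguished_lieEquiv φ hdist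
  rw [hφe] at hdist'
  obtain rfl := eq_three_of_isDistinguished hdist' hi
  obtain rfl : n = degree := addMonoidHom_ext_single fun j => by
    rw [degree_single]
    split_ifs with h
    exacts [h ▸ hi, hj j h]
  obtain ⟨σ, hσs, hσe⟩ := exists_gradedConj_element_zero hdist' hi
  have hψe : (φ.trans σ).symm (element 0) = e := by
    rw [← hσe, ← hφe]
    exact (φ.trans σ).symm_apply_apply e
  have hψs : (φ.trans σ).symm (grading ℂ roots degree) = s := by
    rw [← hσs, ← hφs]
    exact (φ.trans σ).symm_apply_apply s
  generalize (φ.trans σ).symm = ψ at hψe hψs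
  have hX := (isCentralizerBasis (by rw [← finrank_centralizer_map ψ, hψe, hdim])).map ψ
  rw [hψe, hψs] at hX
  refine ⟨ψ, hψe, hψs.trans (hX.eq_of_lie_eq (fun i => (weight_pos i).ne') ?_ ?_).symm⟩
  · rw [lie_eq_smul_of_lie_eq_smul hs (μ := 0) (by rw [lie_self, zero_smul]), zero_smul]
  · rw [lie_eq_smul_of_lie_eq_smul hs (μ := 2), ht.lie_h_e_nsmul, two_smul, two_smul]
    rw [ht.lie_h_e_nsmul, two_smul, two_smul]

end E7

/-- For the subregular distinguished nilpotent orbit of `E₇`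
(`dim 𝔤^e = 9`): `dim 𝔷(𝔤^e) = 6`, the eigenvalues of `ad h` on `𝔷(𝔤^e)` are
`2, 10, 14, 18, 22, 26`, and `e` satisfies property (P). -/
theorem e7_subregular_propertyP
    (L : Type*) [LieRing L] [LieAlgebra ℂ L] [FiniteDimensional ℂ L]
    [LieAlgebra.IsSimple ℂ L] (htype : Nonempty (L ≃ₗ⁅ℂ⁆ LieAlgebra.e₇ ℂ))
    (e h f : L) (ht : IsSl2Triple h e f) (he : IsNilpotent (LieAlgebra.ad ℂ L e))
    (hdist : IsDistinguished L e)
    (hdim : Module.finrank ℂ ↥(centralizer L e) = 9) :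
    Module.finrank ℂ ↥(zCenter L e) = 6 ∧
    (∀ m : ℂ, (∃ z : L, z ≠ 0 ∧ InCenterOfCentralizer L e z ∧ ⁅h, z⁆ = m • z) ↔
      m ∈ ({2, 10, 14, 18, 22, 26} : Set ℂ)) ∧
    PropertyP L e h f := by
  obtain ⟨ψ, rfl, rfl⟩ := E7.exists_lieEquiv_of_isSl2Triple htype ht he hdist hdim
  rw [finrank_centralizer_map] at hdim
  have hX := E7.isCentralizerBasis hdim
  have hc := zCenter_map_eq_span ψ (E7.zCenter_element_zero hX)
  have hmono : StrictMono (E7.weight ∘ E7.centralIndex) := by decide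
  refine ⟨(hX.map ψ).finrank_zCenter hc hmono.injective.of_comp, fun m => ?_,
    (hX.map ψ).propertyP (top := 5) ht hc hmono (by decide) (E7.exists_partner_map ψ)⟩
  rw [(hX.map ψ).exists_eigenvector_iff hc hmono.injective.of_comp]
  simp [Fin.exists_fin_succ, E7.weight, E7.centralIndex, eq_comm]
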